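/- arXiv:math/0602508 — 2 statements merged into one kernel-verified Lean document; each statement's English description precedes it below -/
import Mathlib

section
/- There is a constant C such that for every n and every perfect central extension E of the alternating group A_n (that is, every perfect group E admitting a surjective homomorphism onto A_n whose kernel is contained in the center of E), the group E has a presentation with at most C generators and at most C relators whose length is at most C·(1 + log₂ n). -/
/-!
By Carmichael, the three-cycles `(ω ∞ ∞')` present the alternating group of degree `n`: the
relations `Y ω ^ 3 = 1` and `(Y ω * Y ω') ^ 2 = 1` imply all others. There are about `n²` of
these relations, but conjugation by a group that permutes the family with boundedly many orbits
on pairs of points deduces them all from boundedly many. On the `p + 1` points of a projective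
line over a prime field such a group is generated by `z ↦ z + 1`, `z ↦ -1 / z` and the dilation
by the square of a primitive root; thanks to `z ↦ 4 z`, Horner's rule in base `4` writes the
large powers that occur as words of length `O(log p)`. A second copy of these generators, linked
to the first by a three-cycle word in the `Y ω`, makes all of them trivial as soon as the `Y ω`
are, so that the `Y ω` generate the whole group. Every degree `n ≥ 12` is reached by gluing two
projective lines along an initial segment, for a prime `p` of the order of `n` given by
Bertrand's postulate, and adding at most one point.

Let `E` be a perfect central extension of the alternating group, with kernel `K`. Lifts of the
generators generate `E`, and the values of the relators at them generate `K`, which is therefore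
abelian with boundedly many generators. For `n ≥ 6` it has exponent dividing `6`: lifts of the
three-cycles of order dividing three form a Carmichael family modulo the central elements of
order dividing `6`, so that `E` modulo these elements is a quotient of the alternating group.
Hence `|K|` is bounded. Adjoining to the presentation of the alternating group the elements of
`K`, with their multiplication table, their commutation with the generators and the values of the
relators, gives a presentation of `E`.
-/

/-- `G` has a presentation with at most `g` generators, at most `r` relators, and
length (number of generators plus the total length of the reduced relator words) at
most `L`. -/
def HasBoundedPresentation (G : Type) [Group G] (g r : ℕ) (L : ℝ) : Prop :=
  ∃ (m : ℕ) (π : FreeGroup (Fin m) →* G) (R : Finset (FreeGroup (Fin m))),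
    m ≤ g ∧ Function.Surjective π ∧ R.card ≤ r ∧
    π.ker = Subgroup.normalClosure (R : Set (FreeGroup (Fin m))) ∧
    ((m + ∑ w ∈ R, FreeGroup.norm w : ℕ) : ℝ) ≤ L

open Equiv
open scoped commutatorElement

/-! ### Carmichael families -/

section Carmichael

/-- Carmichael's relations: elements of order dividing three whose pairwise products are
involutions.  The `n - 2` three-cycles `(ω ∞ ∞')` of the alternating group of degree `n` form the
universal family of this kind. -/
structure IsCarmichael {G Ω : Type*} [Group G] (Y : Ω → G) : Prop where
  pow_three : ∀ i, Y i ^ 3 = 1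
  mul_sq : ∀ i j, i ≠ j → (Y i * Y j) ^ 2 = 1

namespace IsCarmichael

open scoped Pointwise

variable {G H Ω : Type*} [Group G] [Group H] {Y : Ω → G}

theorem mul_self (h : IsCarmichael Y) (i : Ω) : Y i * Y i = (Y i)⁻¹ := by
  rw [eq_inv_iff_mul_eq_one, ← h.pow_three i, pow_succ, pow_two]

theorem inv_mul_inv (h : IsCarmichael Y) (i : Ω) : (Y i)⁻¹ * (Y i)⁻¹ = Y i := by
  rw [← mul_inv_rev, h.mul_self, inv_inv]

theorem mul_eq_inv_mul_inv (h : IsCarmichael Y) {i j : Ω} (hij : i ≠ j) :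
    Y i * Y j = (Y j)⁻¹ * (Y i)⁻¹ := by
  rw [← mul_inv_rev, eq_inv_iff_mul_eq_one, ← h.mul_sq i j hij, pow_two]

theorem inv_mul_eq_mul_inv_mul_inv (h : IsCarmichael Y) {i j : Ω} (hij : i ≠ j) :
    (Y i)⁻¹ * Y j = Y i * (Y j)⁻¹ * (Y i)⁻¹ := by
  rw [eq_mul_inv_iff_mul_eq, mul_assoc, h.mul_eq_inv_mul_inv hij.symm, ← mul_assoc, h.inv_mul_inv]

theorem prodMk {Z : Ω → H} (hY : IsCarmichael Y) (hZ : IsCarmichael Z) :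
    IsCarmichael fun ω => (Y ω, Z ω) :=
  ⟨fun i => Prod.ext (hY.pow_three i) (hZ.pow_three i),
    fun i j hij => Prod.ext (hY.mul_sq i j hij) (hZ.mul_sq i j hij)⟩

variable (Y) in
/-- Representatives of the left cosets of the subgroup generated by `Y i`, `i ∈ S`, in the
subgroup generated by these elements and `Y m`. -/
def cosetReps (S : Set Ω) (m : Ω) : Set G :=
  {1, Y m, (Y m)⁻¹} ∪ (fun i => Y i * (Y m)⁻¹) '' S

theorem finite_cosetReps (S : Finset Ω) (m : Ω) : (cosetReps Y S m).Finite :=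
  (Set.toFinite _).union (S.finite_toSet.image _)

theorem card_cosetReps_le (S : Finset Ω) (m : Ω) : Nat.card (cosetReps Y S m) ≤ S.card + 3 := by
  have h_image : ((fun i => Y i * (Y m)⁻¹) '' (S : Set Ω)).ncard ≤ S.card := by
    simpa only [Set.ncard_coe_finset] using Set.ncard_image_le S.finite_toSet
  have h_triple : ({1, Y m, (Y m)⁻¹} : Set G).ncard ≤ 3 := by
    classical
    rw [← Finset.coe_singleton, ← Finset.coe_insert, ← Finset.coe_insert, Set.ncard_coe_finset]
    exact Finset.card_le_three
  have h_union := Set.ncard_union_le ({1, Y m, (Y m)⁻¹} : Set G)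
    ((fun i => Y i * (Y m)⁻¹) '' (S : Set Ω))
  change (cosetReps Y S m).ncard ≤ _
  rw [cosetReps]
  lia

theorem inv_mul_mul_mem {a b : G} {K : Subgroup G} {U : Set G} {r r' : G} (hr' : r' ∈ U)
    (hab : r'⁻¹ * (a * r) ∈ K) (hb : b ∈ K) : a * (r * b) ∈ U * (K : Set G) :=
  ⟨r', hr', r'⁻¹ * (a * r) * b, K.mul_mem hab hb, by simp [mul_assoc]⟩

theorem mul_mem_cosetReps_mul_of_eq (h : IsCarmichael Y) {S : Set Ω} {m : Ω} (hm : m ∉ S) {r : G}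
    (hr : r ∈ cosetReps Y S m) :
    ∃ r' ∈ cosetReps Y S m, r'⁻¹ * (Y m * r) ∈ Subgroup.closure (Y '' S) := by
  have mem_closure {i} (hi : i ∈ S) : Y i ∈ Subgroup.closure (Y '' S) :=
    Subgroup.subset_closure ⟨i, hi, rfl⟩
  rcases hr with (rfl | rfl | rfl) | ⟨i, hi, rfl⟩
  · exact ⟨Y m, by simp [cosetReps], by simp⟩
  · exact ⟨(Y m)⁻¹, by simp [cosetReps], by simp [h.mul_self]⟩
  · exact ⟨1, by simp [cosetReps], by simp⟩
  · have him : i ≠ m := ne_of_mem_of_not_mem hi hm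
    refine ⟨Y i * (Y m)⁻¹, Or.inr ⟨i, hi, rfl⟩, ?_⟩
    have : Y m * (Y i * (Y m)⁻¹) = Y i * (Y m)⁻¹ * (Y i)⁻¹ := by
      rw [← mul_assoc, h.mul_eq_inv_mul_inv him.symm, mul_assoc, h.inv_mul_inv,
        h.inv_mul_eq_mul_inv_mul_inv him]
    rw [this, inv_mul_cancel_left]
    exact inv_mem (mem_closure hi)

theorem mul_mem_cosetReps_mul_of_mem (h : IsCarmichael Y) {S : Set Ω} {k m : Ω} (hm : m ∉ S)
    (hk : k ∈ S) {r : G} (hr : r ∈ cosetReps Y S m) :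
    ∃ r' ∈ cosetReps Y S m, r'⁻¹ * (Y k * r) ∈ Subgroup.closure (Y '' S) := by
  have mem_closure {i} (hi : i ∈ S) : Y i ∈ Subgroup.closure (Y '' S) :=
    Subgroup.subset_closure ⟨i, hi, rfl⟩
  have hkm : k ≠ m := ne_of_mem_of_not_mem hk hm
  rcases hr with (rfl | rfl | rfl) | ⟨i, hi, rfl⟩
  · exact ⟨1, by simp [cosetReps], by simpa using mem_closure hk⟩
  · refine ⟨(Y m)⁻¹, by simp [cosetReps], ?_⟩
    simpa [h.mul_eq_inv_mul_inv hkm] using mem_closure hk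
  · exact ⟨Y k * (Y m)⁻¹, Or.inr ⟨k, hk, rfl⟩, by simp⟩
  · rcases eq_or_ne i k with rfl | hik
    · refine ⟨Y m, by simp [cosetReps], ?_⟩
      rw [← mul_assoc (Y i), h.mul_self, ← h.mul_eq_inv_mul_inv hkm.symm, inv_mul_cancel_left]
      exact mem_closure hi
    · have him : i ≠ m := ne_of_mem_of_not_mem hi hm
      refine ⟨Y i * (Y m)⁻¹, Or.inr ⟨i, hi, rfl⟩, ?_⟩
      have : Y k * (Y i * (Y m)⁻¹) = Y i * (Y m)⁻¹ * ((Y i)⁻¹ * Y k) := by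
        rw [← mul_assoc (Y k), h.mul_eq_inv_mul_inv hik.symm, mul_assoc,
          ← h.mul_eq_inv_mul_inv hkm.symm, ← mul_assoc, h.inv_mul_eq_mul_inv_mul_inv him,
          mul_assoc]
      rw [this, inv_mul_cancel_left]
      exact mul_mem (inv_mem (mem_closure hi)) (mem_closure hk)

theorem closure_insert_subset (h : IsCarmichael Y) {S : Set Ω} {m : Ω} (hm : m ∉ S) :
    (Subgroup.closure (Y '' insert m S) : Set G) ⊆
      cosetReps Y S m * (Subgroup.closure (Y '' S) : Set G) := by
  set U := cosetReps Y S m * (Subgroup.closure (Y '' S) : Set G)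
  have mul_mem_U : ∀ k ∈ insert m S, ∀ g ∈ U, Y k * g ∈ U := by
    rintro k hk _ ⟨r, hr, b, hb, rfl⟩
    obtain ⟨r', hr', hmem⟩ : ∃ r' ∈ cosetReps Y S m,
        r'⁻¹ * (Y k * r) ∈ Subgroup.closure (Y '' S) := by
      rcases hk with rfl | hk
      · exact h.mul_mem_cosetReps_mul_of_eq hm hr
      · exact h.mul_mem_cosetReps_mul_of_mem hm hk hr
    exact inv_mul_mul_mem hr' hmem hb
  intro g hg
  induction hg using Subgroup.closure_induction_left with
  | one => exact ⟨1, by simp [cosetReps], 1, one_mem _, by simp⟩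
  | mul_left _ hx g _ ih =>
    obtain ⟨k, hk, rfl⟩ := hx
    exact mul_mem_U k hk g ih
  | inv_mul_cancel _ hx g _ ih =>
    obtain ⟨k, hk, rfl⟩ := hx
    rw [← h.mul_self, mul_assoc]
    exact mul_mem_U k hk _ (mul_mem_U k hk g ih)

theorem finite_and_card_closure_le (h : IsCarmichael Y) (S : Finset Ω) :
    Finite (Subgroup.closure (Y '' S)) ∧
      2 * Nat.card (Subgroup.closure (Y '' S)) ≤ (S.card + 2).factorial := by
  classical
  induction S using Finset.induction_on with
  | empty => simp only [Finset.coe_empty, Set.image_empty, Subgroup.closure_empty]; simpa using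
      (inferInstance : Finite (⊥ : Subgroup G))
  | insert m S hm ih =>
    obtain ⟨h_fin, h_card⟩ := ih
    set K := Subgroup.closure (Y '' (S : Set Ω))
    have h_subset := h.closure_insert_subset (S := S) (m := m) (by simpa using hm)
    have h_fin_mul : (cosetReps Y S m * (K : Set G)).Finite :=
      (finite_cosetReps S m).mul (Set.toFinite _)
    rw [Finset.coe_insert]
    refine ⟨(h_fin_mul.subset h_subset).to_subtype, ?_⟩
    calc 2 * Nat.card (Subgroup.closure (Y '' insert m (S : Set Ω)))
        ≤ 2 * (Nat.card (cosetReps Y S m) * Nat.card K) := by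
          gcongr
          exact (Nat.card_mono h_fin_mul h_subset).trans Set.natCard_mul_le
      _ = Nat.card (cosetReps Y S m) * (2 * Nat.card K) := by ring
      _ ≤ (S.card + 3) * (S.card + 2).factorial :=
          Nat.mul_le_mul (card_cosetReps_le S m) h_card
      _ = ((insert m S).card + 2).factorial := by
          rw [Finset.card_insert_of_notMem hm, ← Nat.factorial_succ, add_right_comm]

end IsCarmichael

theorem commute_swap_swap {α : Type*} [DecidableEq α] {a b c d : α} (hac : a ≠ c) (had : a ≠ d)
    (hbc : b ≠ c) (hbd : b ≠ d) : Commute (swap a b) (swap c d) := by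
  rw [commute_iff_eq, mul_swap_eq_swap_mul, swap_apply_of_ne_of_ne hac.symm hbc.symm,
    swap_apply_of_ne_of_ne had.symm hbd.symm]

/-- Permutations of `α` as permutations of `Option α` fixing `none`. -/
def optionCongrHom {α : Type*} : Perm α →* Perm (Option α) where
  toFun := optionCongr
  map_one' := optionCongr_one
  map_mul' σ τ := optionCongr_trans τ σ

@[simp]
theorem optionCongrHom_some {α : Type*} (σ : Perm α) (i : α) :
    optionCongrHom σ (some i) = some (σ i) := rfl

@[simp]
theorem optionCongrHom_swap {α : Type*} [DecidableEq α] (i j : α) :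
    optionCongrHom (swap i j) = swap (some i) (some j) := optionCongr_swap i j

/-- In a Carmichael family, the word in three members which represents a three-cycle fixing both
base points. -/
def threeCycleWord {G : Type*} [Group G] (a b c : G) : G := b⁻¹ * a * c⁻¹ * b

theorem map_threeCycleWord {G H : Type*} [Group G] [Group H] (f : G →* H) (a b c : G) :
    f (threeCycleWord a b c) = threeCycleWord (f a) (f b) (f c) := by simp [threeCycleWord]

section Standard

variable {Ω : Type*}

/-- Permutations of `Ω` as permutations fixing two added points. -/
def fixTwoHom : Perm Ω →* Perm (Option (Option Ω)) := optionCongrHom.comp optionCongrHom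

@[simp]
theorem fixTwoHom_some_some (σ : Perm Ω) (ω : Ω) :
    fixTwoHom σ (some (some ω)) = some (some (σ ω)) := rfl

@[simp]
theorem fixTwoHom_some_none (σ : Perm Ω) : fixTwoHom σ (some none) = some none := rfl

@[simp]
theorem fixTwoHom_none (σ : Perm Ω) : fixTwoHom σ none = none := rfl

variable [DecidableEq Ω]

theorem fixTwoHom_swap (i j : Ω) :
    fixTwoHom (swap i j) = swap (some (some i)) (some (some j)) := by simp [fixTwoHom]

/-- The three-cycle `ω ↦ ∞ ↦ ∞' ↦ ω`, where `∞` is `none` and `∞'` is `some none`. -/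
def carmichaelCycle (ω : Ω) : Perm (Option (Option Ω)) :=
  swap none (some (some ω)) * swap none (some none)

theorem fixTwoHom_conj (σ : Perm Ω) (ω : Ω) :
    fixTwoHom σ * carmichaelCycle ω * (fixTwoHom σ)⁻¹ = carmichaelCycle (σ ω) := by
  rw [mul_inv_eq_iff_eq_mul, carmichaelCycle, carmichaelCycle, ← mul_assoc (fixTwoHom σ),
    mul_swap_eq_swap_mul (fixTwoHom σ), mul_assoc _ (fixTwoHom σ),
    mul_swap_eq_swap_mul (fixTwoHom σ), fixTwoHom_none, fixTwoHom_some_none,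
    fixTwoHom_some_some, mul_assoc]

theorem swap_conj_carmichaelCycle (ω : Ω) :
    swap none (some none) * carmichaelCycle ω * (swap none (some none))⁻¹ =
      (carmichaelCycle ω)⁻¹ := by
  simp only [carmichaelCycle, swap_inv, mul_inv_rev, mul_assoc, swap_mul_self, mul_one]

theorem swap_none_conj_swap_none {α : Type*} [DecidableEq α] {i j : α} (hij : i ≠ j) :
    swap none (some i) * swap none (some j) * swap none (some i) = swap (some i) (some j) := by
  rw [swap_comm none (some j), swap_mul_swap_mul_swap (by simp) (by simp [hij.symm])]

theorem carmichaelCycle_mul (i j : Ω) :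
    carmichaelCycle i * carmichaelCycle j =
      swap none (some (some i)) * swap (some none) (some (some j)) := by
  rw [← swap_none_conj_swap_none (by simp), carmichaelCycle, carmichaelCycle]
  simp only [mul_assoc]

theorem swap_none_mul_swap_none_pow_three {α : Type*} [DecidableEq α] {i j : α} (hij : i ≠ j) :
    (swap none (some i) * swap none (some j)) ^ 3 = 1 :=
  calc (swap none (some i) * swap none (some j)) ^ 3
      = (swap none (some i) * swap none (some j) * swap none (some i)) *
          (swap none (some j) * swap none (some i) * swap none (some j)) := by
        simp only [pow_succ, pow_zero, one_mul, mul_assoc]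
    _ = 1 := by
        rw [swap_none_conj_swap_none hij, swap_none_conj_swap_none hij.symm, swap_comm,
          swap_mul_self]

theorem isCarmichael_carmichaelCycle :
    IsCarmichael (carmichaelCycle : Ω → Perm (Option (Option Ω))) where
  pow_three i := swap_none_mul_swap_none_pow_three (by simp)
  mul_sq i j hij := by
    have h_comm : Commute (swap none (some (some i))) (swap (some none) (some (some j))) :=
      commute_swap_swap (by simp) (by simp) (by simp) (by simpa using hij)
    rw [carmichaelCycle_mul, h_comm.mul_pow, pow_two, swap_mul_self, pow_two,
      swap_mul_self, one_mul]

theorem threeCycleWord_carmichaelCycle {a b c : Ω} (hab : a ≠ b) (hbc : b ≠ c) :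
    threeCycleWord (carmichaelCycle a) (carmichaelCycle b) (carmichaelCycle c) =
      fixTwoHom (swap a b * swap b c) := by
  have h_comm : Commute (swap none (some none))
      (swap (some (some a)) (some (some b)) * swap (some (some b)) (some (some c))) :=
    (commute_swap_swap (by simp) (by simp) (by simp) (by simp)).mul_right
      (commute_swap_swap (by simp) (by simp) (by simp) (by simp))
  calc threeCycleWord (carmichaelCycle a) (carmichaelCycle b) (carmichaelCycle c)
      = swap none (some none) *
          ((swap none (some (some b)) * swap none (some (some a)) * swap none (some (some b))) *
          (swap none (some (some b)) * swap none (some (some c)) * swap none (some (some b)))) *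
          swap none (some none) := by
        simp [threeCycleWord, carmichaelCycle, mul_assoc]
    _ = fixTwoHom (swap a b * swap b c) := by
        rw [swap_none_conj_swap_none (by simpa using hab.symm),
          swap_none_conj_swap_none (by simpa using hbc), swap_comm (some (some b)) (some (some a)),
          h_comm.eq, mul_assoc, swap_mul_self, mul_one, map_mul, fixTwoHom_swap, fixTwoHom_swap]

theorem closure_carmichaelCycle_sup_zpowers [Finite Ω] :
    Subgroup.closure (Set.range (carmichaelCycle (Ω := Ω))) ⊔
      Subgroup.zpowers (swap none (some none)) = ⊤ := by
  set J := Subgroup.closure (Set.range (carmichaelCycle (Ω := Ω))) ⊔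
    Subgroup.zpowers (swap none (some none))
  have swap_mem : swap none (some none) ∈ J :=
    Subgroup.mem_sup_right (Subgroup.mem_zpowers _)
  have star_mem : ∀ x : Option (Option Ω), swap none x ∈ J
    | none => by simp [one_mem, ← Perm.one_def]
    | some none => swap_mem
    | some (some ω) => by
      have cycle_mem : carmichaelCycle ω ∈ J :=
        Subgroup.mem_sup_left (Subgroup.subset_closure ⟨ω, rfl⟩)
      simpa [carmichaelCycle, mul_assoc] using J.mul_mem cycle_mem swap_mem
  rw [eq_top_iff, ← Perm.closure_isSwap, Subgroup.closure_le]
  rintro _ ⟨x, y, -, rfl⟩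
  exact SubmonoidClass.swap_mem_trans J (swap_comm none x ▸ star_mem x) (star_mem y)

theorem closure_carmichaelCycle_normal [Finite Ω] :
    (Subgroup.closure (Set.range (carmichaelCycle (Ω := Ω)))).Normal := by
  set K := Subgroup.closure (Set.range (carmichaelCycle (Ω := Ω)))
  have swap_mem : swap none (some none) ∈
      Subgroup.normalizer (K : Set (Perm (Option (Option Ω)))) := by
    have conj_le : K ≤ K.comap (MulAut.conj (swap none (some none))).toMonoidHom := by
      rw [Subgroup.closure_le]
      rintro _ ⟨ω, rfl⟩
      change _ * _ * _ ∈ K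
      exact swap_conj_carmichaelCycle ω ▸ inv_mem (Subgroup.subset_closure ⟨ω, rfl⟩)
    refine Subgroup.mem_normalizer_iff.2 fun σ => ⟨fun h => conj_le h, fun h => ?_⟩
    simpa [mul_assoc] using conj_le h
  rw [← Subgroup.normalizer_eq_top_iff, eq_top_iff, ← closure_carmichaelCycle_sup_zpowers,
    sup_le_iff]
  exact ⟨Subgroup.le_normalizer, Subgroup.zpowers_le.2 swap_mem⟩

variable [Fintype Ω]

theorem closure_carmichaelCycle :
    Subgroup.closure (Set.range carmichaelCycle) = alternatingGroup (Option (Option Ω)) := by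
  have := closure_carmichaelCycle_normal (Ω := Ω)
  have le_alternating : Subgroup.closure (Set.range carmichaelCycle) ≤
      alternatingGroup (Option (Option Ω)) := by
    rw [Subgroup.closure_le]
    rintro _ ⟨ω, rfl⟩
    simp [carmichaelCycle]
  refine le_antisymm le_alternating fun σ hσ => ?_
  obtain ⟨κ, hκ, _, ⟨n, rfl⟩, rfl⟩ := Subgroup.mem_sup_of_normal_left.1
    (closure_carmichaelCycle_sup_zpowers (Ω := Ω) ▸ Subgroup.mem_top σ)
  have h_mem : swap none (some none) ^ n ∈ alternatingGroup (Option (Option Ω)) :=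
    ((alternatingGroup _).mul_mem_cancel_left (le_alternating hκ)).1 hσ
  obtain ⟨k, rfl | rfl⟩ := n.even_or_odd'
  · change κ * _ ^ _ ∈ _
    rwa [zpow_mul, zpow_ofNat, pow_two, swap_mul_self, one_zpow, mul_one]
  · simp [zpow_add, zpow_mul] at h_mem

theorem carmichaelCycle_mem_alternatingGroup (ω : Ω) :
    carmichaelCycle ω ∈ alternatingGroup (Option (Option Ω)) :=
  closure_carmichaelCycle (Ω := Ω) ▸ Subgroup.subset_closure ⟨ω, rfl⟩

/-- The cycles `carmichaelCycle ω` as elements of the alternating group. -/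
def alternatingCycle (ω : Ω) : alternatingGroup (Option (Option Ω)) :=
  ⟨carmichaelCycle ω, carmichaelCycle_mem_alternatingGroup ω⟩

theorem closure_alternatingCycle :
    Subgroup.closure (Set.range (alternatingCycle (Ω := Ω))) = ⊤ := by
  apply Subgroup.map_injective (alternatingGroup (Option (Option Ω))).subtype_injective
  rw [MonoidHom.map_closure, ← Set.range_comp, ← MonoidHom.range_eq_map, Subgroup.range_subtype]
  exact closure_carmichaelCycle

theorem isCarmichael_alternatingCycle : IsCarmichael (alternatingCycle (Ω := Ω)) :=
  ⟨fun i => Subtype.ext (isCarmichael_carmichaelCycle.pow_three i),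
    fun i j hij => Subtype.ext (isCarmichael_carmichaelCycle.mul_sq i j hij)⟩

variable (Ω) in
theorem two_mul_card_alternatingGroup_option_option :
    2 * Nat.card (alternatingGroup (Option (Option Ω))) = (Fintype.card Ω + 2).factorial := by
  rw [two_mul_nat_card_alternatingGroup, Nat.card_eq_fintype_card, Fintype.card_perm,
    Fintype.card_option, Fintype.card_option]

variable {G : Type*} [Group G] {Y : Ω → G}

/- The subgroup of the product generated by the pairs `(Y ω, alternatingCycle ω)` is generated by a
Carmichael family, so it is too small for its projection to the alternating group to have a
kernel. -/
theorem IsCarmichael.exists_hom (hY : IsCarmichael Y) :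
    ∃ Φ : alternatingGroup (Option (Option Ω)) →* G, ∀ ω, Φ (alternatingCycle ω) = Y ω := by
  let pair : Ω → G × alternatingGroup (Option (Option Ω)) := fun ω => (Y ω, alternatingCycle ω)
  obtain ⟨h_fin, h_card⟩ :=
    (hY.prodMk isCarmichael_alternatingCycle).finite_and_card_closure_le Finset.univ
  rw [Finset.coe_univ, Set.image_univ] at h_fin h_card
  set D := Subgroup.closure (Set.range pair)
  have pair_mem (ω) : pair ω ∈ D := Subgroup.subset_closure ⟨ω, rfl⟩
  let proj : D →* alternatingGroup (Option (Option Ω)) := (MonoidHom.snd _ _).comp D.subtype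
  have proj_surjective : Function.Surjective proj := by
    rw [← MonoidHom.range_eq_top, eq_top_iff, ← closure_alternatingCycle, Subgroup.closure_le]
    rintro _ ⟨ω, rfl⟩
    exact ⟨⟨pair ω, pair_mem ω⟩, rfl⟩
  have proj_bijective : Function.Bijective proj := by
    refine (Nat.bijective_iff_surjective_and_card proj).2 ⟨proj_surjective,
      le_antisymm ?_ (Nat.card_le_card_of_surjective proj proj_surjective)⟩
    have := two_mul_card_alternatingGroup_option_option Ω
    rw [Finset.card_univ] at h_card
    lia
  let e := MulEquiv.ofBijective proj proj_bijective
  refine ⟨((MonoidHom.fst _ _).comp D.subtype).comp e.symm.toMonoidHom, fun ω => ?_⟩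
  have : e.symm (alternatingCycle ω) = ⟨pair ω, pair_mem ω⟩ := by
    rw [MulEquiv.symm_apply_eq]; rfl
  simp [this, pair]

end Standard

theorem IsCarmichael.threeCycleWord_conj {Ω G : Type*} [Group G] [DecidableEq Ω] [Finite Ω]
    {Y : Ω → G} (hY : IsCarmichael Y) {a b c : Ω} (hab : a ≠ b) (hbc : b ≠ c) (ω : Ω) :
    SemiconjBy (threeCycleWord (Y a) (Y b) (Y c)) (Y ω) (Y ((swap a b * swap b c) ω)) := by
  have := Fintype.ofFinite Ω
  obtain ⟨Φ, hΦ⟩ := hY.exists_hom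
  have conj_eq : SemiconjBy
      (threeCycleWord (alternatingCycle a) (alternatingCycle b) (alternatingCycle c))
      (alternatingCycle ω) (alternatingCycle ((swap a b * swap b c) ω)) := by
    have conj_eq' := mul_inv_eq_iff_eq_mul.1 (fixTwoHom_conj (swap a b * swap b c) ω)
    rw [← threeCycleWord_carmichaelCycle hab hbc] at conj_eq'
    exact Subtype.ext conj_eq'
  simpa only [map_threeCycleWord, hΦ] using conj_eq.map Φ

end Carmichael

/-! ### The projective line over a prime field -/

section ConjActs

variable {G Ω : Type*} [Group G] {X : Ω → G} {g h : G} {σ τ : Perm Ω}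

/-- Conjugation by `g` permutes the family `X` as `σ` permutes the indices. -/
def ConjActs (g : G) (X : Ω → G) (σ : Perm Ω) : Prop := ∀ ω, SemiconjBy g (X ω) (X (σ ω))

namespace ConjActs

theorem one : ConjActs (1 : G) X 1 := fun _ => SemiconjBy.one_left _

theorem mul (hg : ConjActs g X σ) (hh : ConjActs h X τ) : ConjActs (g * h) X (σ * τ) :=
  fun ω => (hg (τ ω)).mul_left (hh ω)

theorem inv (hg : ConjActs g X σ) : ConjActs g⁻¹ X σ⁻¹ := fun ω => by
  simpa using (hg (σ⁻¹ ω)).inv_symm_left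

theorem pow (hg : ConjActs g X σ) : ∀ n : ℕ, ConjActs (g ^ n) X (σ ^ n)
  | 0 => by simpa using one
  | n + 1 => by simpa only [pow_succ] using (hg.pow n).mul hg

theorem mem_normalizer_range (hg : ConjActs g X σ) :
    g ∈ Subgroup.normalizer (Set.range X) := by
  rw [Subgroup.mem_normalizer_iff_conj_image_eq, ← Set.range_comp, ← σ.surjective.range_comp X]
  congr 1
  ext ω
  exact mul_inv_eq_iff_eq_mul.2 (hg ω).eq

end ConjActs

theorem sq_mul_eq_one_of_semiconjBy {y z y' z' : G} (hy : SemiconjBy g y y')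
    (hz : SemiconjBy g z z') (h : (y * z) ^ 2 = 1) : (y' * z') ^ 2 = 1 := by
  simpa [SemiconjBy, h] using (hy.mul_right hz).pow_right 2

end ConjActs

section ProjectiveLine

variable {F : Type*} [Field F]

/-- The map `z ↦ z + c` of the projective line `Option F`, in which `none` is the point `∞`. -/
def lineTranslation (c : F) : Perm (Option F) := optionCongrHom (Equiv.addRight c)

/-- The map `z ↦ u z` of the projective line. -/
def lineDilation (u : Fˣ) : Perm (Option F) := optionCongrHom (Units.mulLeft u)

@[simp]
theorem lineTranslation_none (c : F) : lineTranslation c none = none := rfl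

@[simp]
theorem lineTranslation_some (c i : F) : lineTranslation c (some i) = some (i + c) := rfl

@[simp]
theorem lineDilation_none (u : Fˣ) : lineDilation u none = none := rfl

@[simp]
theorem lineDilation_some (u : Fˣ) (i : F) : lineDilation u (some i) = some (u * i) := rfl

theorem lineTranslation_zero : lineTranslation (0 : F) = 1 := by
  ext1 (_ | i) <;> simp

theorem lineTranslation_mul (i j : F) :
    lineTranslation i * lineTranslation j = lineTranslation (i + j) := by
  ext1 (_ | k)
  · rfl
  · simp [add_right_comm, add_assoc]

theorem lineTranslation_inv (i : F) : (lineTranslation i)⁻¹ = lineTranslation (-i) := by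
  rw [inv_eq_iff_mul_eq_one, lineTranslation_mul, add_neg_cancel, lineTranslation_zero]

variable [DecidableEq F]

theorem negInv_involutive : Function.Involutive fun z : Option F =>
    z.elim (some 0) fun i => if i = 0 then none else some (-i⁻¹) := by
  rintro (_ | i)
  · simp
  · by_cases hi : i = 0 <;> simp [hi]

/-- The map `z ↦ -1 / z` of the projective line. -/
def lineNegInv (F : Type*) [Field F] [DecidableEq F] : Perm (Option F) :=
  negInv_involutive.toPerm

@[simp]
theorem lineNegInv_none : lineNegInv F none = some 0 := rfl

@[simp]
theorem lineNegInv_zero : lineNegInv F (some 0) = none := by simp [lineNegInv]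

theorem lineNegInv_some {i : F} (hi : i ≠ 0) : lineNegInv F (some i) = some (-i⁻¹) := by
  simp [lineNegInv, hi]

end ProjectiveLine

/-- A prime `p ≥ 5`, a generator `g` of the multiplicative group of the prime field and an odd
cut-off `s`; two copies of the projective line will be glued along `∞, 0, …, s - 1`. -/
structure PrimeData where
  (p s : ℕ)
  g : (ZMod p)ˣ
  [prime : Fact p.Prime]
  five_le : 5 ≤ p
  mem_zpowers : ∀ u, u ∈ Subgroup.zpowers g
  s_odd : Odd s
  s_add_two_le : s + 2 ≤ p

namespace PrimeData

attribute [instance] PrimeData.prime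

variable (P : PrimeData)

theorem s_lt : P.s < P.p := by have := P.s_add_two_le; lia

theorem two_ne_zero : (2 : ZMod P.p) ≠ 0 := by
  have := P.five_le
  exact_mod_cast (ZMod.natCast_eq_zero_iff 2 P.p).not.2 (Nat.not_dvd_of_pos_of_lt (by lia) (by lia))

/-- The residue class of `4`. -/
def four : (ZMod P.p)ˣ := Units.mk0 2 P.two_ne_zero ^ 2

theorem val_four : ((P.four : (ZMod P.p)ˣ) : ZMod P.p) = 4 := by norm_num [four]

theorem exists_eq_pow (i : ZMod P.p) (hi : i ≠ 0) : ∃ k : ℕ, i = P.g ^ k := by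
  obtain ⟨n, hn⟩ := (mem_powers_iff_mem_zpowers).2 (P.mem_zpowers (Units.mk0 i hi))
  exact ⟨n, by simpa using (congrArg Units.val hn).symm⟩

theorem orderOf_g : orderOf P.g = P.p - 1 := by
  rw [orderOf_eq_card_of_forall_mem_zpowers P.mem_zpowers, Nat.card_eq_fintype_card,
    ZMod.card_units]

theorem g_sq_ne_one : P.g ^ 2 ≠ 1 := fun h => by
  have := P.five_le
  have := Nat.le_of_dvd (by simp) (orderOf_dvd_of_pow_eq_one h)
  rw [orderOf_g] at this
  lia

end PrimeData

section PowVal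

variable {G : Type*} [Group G] {n : ℕ} {a y : G}

theorem pow_val_natCast (ha : a ^ n = 1) (m : ℕ) : a ^ (m : ZMod n).val = a ^ m := by
  rw [ZMod.val_natCast, ← pow_eq_pow_mod m ha]

theorem pow_val_add [NeZero n] (ha : a ^ n = 1) (i j : ZMod n) :
    a ^ (i + j).val = a ^ i.val * a ^ j.val := by
  rw [ZMod.val_add, ← pow_eq_pow_mod _ ha, pow_add]

theorem semiconjBy_pow_val (ha : a ^ n = 1) {c : ZMod n} (h : SemiconjBy y a (a ^ c.val))
    (i : ZMod n) : SemiconjBy y (a ^ i.val) (a ^ (c * i).val) := by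
  rw [ZMod.val_mul, ← pow_eq_pow_mod _ ha, pow_mul]
  exact h.pow_right i.val

end PowVal

section HornerWord

variable {G H : Type*} [Group G] [Group H]

/-- The word for `a ^ e` of length `O(k)` obtained by expanding `e < 4 ^ k` to base `4` with
Horner's rule, under the relation `h * a * h⁻¹ = a ^ 4`. -/
def hornerWord (a h : G) : ℕ → ℕ → G
  | 0, _ => 1
  | k + 1, e => a ^ (e % 4) * (h * hornerWord a h k (e / 4) * h⁻¹)

theorem hornerWord_eq_pow {a h : G} (ha : h * a * h⁻¹ = a ^ 4) :
    ∀ k e : ℕ, e < 4 ^ k → hornerWord a h k e = a ^ e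
  | 0, e, he => by
    obtain rfl : e = 0 := by simpa using he
    simp [hornerWord]
  | k + 1, e, he => by
    rw [hornerWord, hornerWord_eq_pow ha k (e / 4) (by lia), ← conj_pow, ha, ← pow_mul, ← pow_add,
      Nat.mod_add_div]

theorem map_hornerWord (f : G →* H) (a h : G) :
    ∀ k e : ℕ, f (hornerWord a h k e) = hornerWord (f a) (f h) k e
  | 0, _ => map_one f
  | k + 1, e => by simp [hornerWord, map_hornerWord f a h k]

end HornerWord

/-- The letters of one line: in the intended model, which acts on the projective line over the
prime field, `a` is `z ↦ z + 1`, `t` is `z ↦ -1 / z`, `h` is `z ↦ 4 z`, `b` is `z ↦ g² z`, and `u`,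
`v`, `w`, `r` are the powers of `a` with exponents `g`, `g⁻¹`, `g²`, `s`. -/
inductive LineLetter
  | a | t | h | b | u | v | w | r
  deriving DecidableEq

instance : Fintype LineLetter :=
  ⟨{.a, .t, .h, .b, .u, .v, .w, .r}, by rintro (_ | _) <;> decide⟩

/-- A choice of elements of `G` for the letters of one line. -/
abbrev LineGens (G : Type*) := LineLetter → G

section Line

variable {G : Type*} [Group G]

/-- The relators of one line that do not depend on the prime. -/
def lineShortRelators (T : LineGens G) (x : G) : List G :=
  [T .t * T .t, (T .t * T .a) ^ 3, T .h * T .a * (T .h)⁻¹ * (T .a ^ 4)⁻¹,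
    T .b * T .a * (T .b)⁻¹ * (T .w)⁻¹, T .t * T .h * T .t * T .h, T .t * T .b * T .t * T .b,
    T .h * (T .a ^ 2 * T .t * ((T .h)⁻¹ * T .a ^ 2 * T .h) * T .t * T .a ^ 2 * T .t)⁻¹,
    T .b * (T .u * T .t * T .v * T .t * T .u * T .t)⁻¹,
    x ^ 3, (x * (T .t * x * (T .t)⁻¹)) ^ 2, ⁅x, T .a⁆, ⁅x, T .h⁆, ⁅x, T .b⁆]

/-- The relators of one line that involve powers of `a` with exponents of the order of the prime,
written as words of length `O(k)`. -/
def linePowerRelators (P : PrimeData) (k : ℕ) (T : LineGens G) : List G :=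
  [hornerWord (T .a) (T .h) k P.p, T .u * (hornerWord (T .a) (T .h) k (P.g : ZMod P.p).val)⁻¹,
    T .v * (hornerWord (T .a) (T .h) k ((P.g⁻¹ : (ZMod P.p)ˣ) : ZMod P.p).val)⁻¹,
    T .w * (hornerWord (T .a) (T .h) k ((P.g ^ 2 : (ZMod P.p)ˣ) : ZMod P.p).val)⁻¹,
    T .r * (hornerWord (T .a) (T .h) k P.s)⁻¹]

/-- The relations of one line. Here `x` stands for the element of a Carmichael family that belongs
to the point `∞`; the other elements of the family are its conjugates. -/
structure LineRelations (P : PrimeData) (T : LineGens G) (x : G) : Prop where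
  t_mul_t : T .t * T .t = 1
  t_mul_a : (T .t * T .a) ^ 3 = 1
  h_conj_a : T .h * T .a * (T .h)⁻¹ = T .a ^ 4
  b_conj_a : T .b * T .a * (T .b)⁻¹ = T .w
  t_mul_h : T .t * T .h * T .t * T .h = 1
  t_mul_b : T .t * T .b * T .t * T .b = 1
  h_eq : T .h = T .a ^ 2 * T .t * ((T .h)⁻¹ * T .a ^ 2 * T .h) * T .t * T .a ^ 2 * T .t
  b_eq : T .b = T .u * T .t * T .v * T .t * T .u * T .t
  x_pow_three : x ^ 3 = 1
  mul_conj_sq : (x * (T .t * x * (T .t)⁻¹)) ^ 2 = 1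
  commute_a : Commute x (T .a)
  commute_h : Commute x (T .h)
  commute_b : Commute x (T .b)
  a_pow : T .a ^ P.p = 1
  u_eq : T .u = T .a ^ (P.g : ZMod P.p).val
  v_eq : T .v = T .a ^ ((P.g⁻¹ : (ZMod P.p)ˣ) : ZMod P.p).val
  w_eq : T .w = T .a ^ ((P.g ^ 2 : (ZMod P.p)ˣ) : ZMod P.p).val
  r_eq : T .r = T .a ^ P.s

theorem lineRelations_iff {P : PrimeData} {k : ℕ} (hk : P.p < 4 ^ k) (T : LineGens G) (x : G) :
    LineRelations P T x ↔
      (∀ y ∈ lineShortRelators T x, y = 1) ∧ ∀ y ∈ linePowerRelators P k T, y = 1 := by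
  have val_lt (c : ZMod P.p) : c.val < 4 ^ k := (ZMod.val_lt c).trans hk
  simp only [lineShortRelators, linePowerRelators, List.forall_mem_cons, List.not_mem_nil,
    false_imp_iff, implies_true, and_true, mul_inv_eq_one, commutatorElement_eq_one_iff_commute]
  constructor
  · intro R
    simp only [hornerWord_eq_pow R.h_conj_a _ _ hk, hornerWord_eq_pow R.h_conj_a _ _ (val_lt _),
      hornerWord_eq_pow R.h_conj_a _ _ (P.s_lt.trans hk)]
    exact ⟨⟨R.1, R.2, R.3, R.4, R.5, R.6, R.7, R.8, R.9, R.10, R.11, R.12, R.13⟩,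
      R.14, R.15, R.16, R.17, R.18⟩
  · rintro ⟨h_short, h_power⟩
    have ha := h_short.2.2.1
    simp only [hornerWord_eq_pow ha _ _ hk, hornerWord_eq_pow ha _ _ (val_lt _),
      hornerWord_eq_pow ha _ _ (P.s_lt.trans hk)] at h_power
    casesm* _ ∧ _
    constructor <;> assumption

section map

variable {H : Type*} [Group H] (f : G →* H)

theorem map_lineShortRelators (T : LineGens G) (x : G) :
    (lineShortRelators T x).map f = lineShortRelators (f ∘ T) (f x) := by
  simp [lineShortRelators, map_commutatorElement]

theorem map_linePowerRelators (P : PrimeData) (k : ℕ) (T : LineGens G) :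
    (linePowerRelators P k T).map f = linePowerRelators P k (f ∘ T) := by
  simp only [linePowerRelators, List.map_cons, List.map_nil, map_mul, map_inv, map_hornerWord,
    Function.comp_apply]

end map

/-- The family of elements attached to the points of the projective line: `x` sits at `∞`, its
conjugate by `t` at `0`, and the conjugates of the latter by powers of `a` at the other points. -/
def lineFamily (p : ℕ) (T : LineGens G) (x : G) : Option (ZMod p) → G
  | none => x
  | some i => T .a ^ i.val * (T .t * x * (T .t)⁻¹) * (T .a ^ i.val)⁻¹

@[simp]
theorem lineFamily_none (p : ℕ) (T : LineGens G) (x : G) :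
    lineFamily p T x none = x := rfl

theorem lineFamily_zero (p : ℕ) (T : LineGens G) (x : G) :
    lineFamily p T x (some 0) = T .t * x * (T .t)⁻¹ := by simp [lineFamily]

theorem map_lineFamily {H : Type*} [Group H] (f : G →* H) (p : ℕ) (T : LineGens G) (x : G)
    (i : Option (ZMod p)) : f (lineFamily p T x i) = lineFamily p (f ∘ T) (f x) i := by
  cases i <;> simp [lineFamily]

end Line

namespace LineRelations

variable {G : Type*} [Group G] {P : PrimeData} {T : LineGens G} {x y : G}

theorem t_inv (R : LineRelations P T x) : (T .t)⁻¹ = T .t :=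
  inv_eq_of_mul_eq_one_left R.t_mul_t

theorem conjActs_a_pow (R : LineRelations P T x) (c : ZMod P.p) :
    ConjActs (T .a ^ c.val) (lineFamily P.p T x) (lineTranslation c)
  | none => (R.commute_a.pow_right _).symm
  | some i => by
    simp only [lineTranslation_some, lineFamily, add_comm i c, pow_val_add R.a_pow, SemiconjBy]
    group

theorem conjActs_a (R : LineRelations P T x) :
    ConjActs (T .a) (lineFamily P.p T x) (lineTranslation (1 : ZMod P.p)) := by
  have := P.five_le
  simpa [ZMod.val_one'' (show P.p ≠ 1 by lia)] using R.conjActs_a_pow 1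

theorem conjActs_of_dilation (R : LineRelations P T x) {c : (ZMod P.p)ˣ}
    (ha : SemiconjBy y (T .a) (T .a ^ (c : ZMod P.p).val)) (ht : T .t * y * T .t * y = 1)
    (hx : Commute x y) : ConjActs y (lineFamily P.p T x) (lineDilation c)
  | none => hx.symm
  | some i => by
    have t_conj_y : T .t * y⁻¹ * (T .t)⁻¹ = y := by
      nth_rw 2 [eq_inv_of_mul_eq_one_right ht]
      simp only [mul_inv_rev, R.t_inv, mul_assoc]
    have commute_conj : Commute y (T .t * x * (T .t)⁻¹) := by
      nth_rw 1 [← t_conj_y]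
      exact Commute.conj_iff (T .t) |>.2 hx.symm.inv_left
    have hi := semiconjBy_pow_val R.a_pow ha i
    exact (hi.mul_right commute_conj).mul_right hi.inv_right

theorem conjActs_h (R : LineRelations P T x) :
    ConjActs (T .h) (lineFamily P.p T x) (lineDilation P.four) := by
  refine R.conjActs_of_dilation ?_ R.t_mul_h R.commute_h
  have : ((4 : ℕ) : ZMod P.p) = P.four := by simp [P.val_four]
  rw [← this, pow_val_natCast R.a_pow]
  exact mul_inv_eq_iff_eq_mul.1 R.h_conj_a

theorem conjActs_b (R : LineRelations P T x) :
    ConjActs (T .b) (lineFamily P.p T x) (lineDilation (P.g ^ 2)) := by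
  refine R.conjActs_of_dilation ?_ R.t_mul_b R.commute_b
  rw [← R.w_eq]
  exact mul_inv_eq_iff_eq_mul.1 R.b_conj_a

theorem semiconjBy_t_infty (R : LineRelations P T x) :
    SemiconjBy (T .t) (lineFamily P.p T x none) (lineFamily P.p T x (some 0)) ∧
      SemiconjBy (T .t) (lineFamily P.p T x (some 0)) (lineFamily P.p T x none) := by
  simpa [lineFamily_zero, SemiconjBy, ← mul_assoc, R.t_mul_t] using R.t_inv

-- `t = a t a t a` maps `-1 ↦ 0 ↦ ∞ ↦ ∞ ↦ 0 ↦ 1`.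
theorem semiconjBy_t_neg_one (R : LineRelations P T x) :
    SemiconjBy (T .t) (lineFamily P.p T x (some (-1))) (lineFamily P.p T x (some 1)) := by
  have t_eq : T .t = T .a * T .t * T .a * T .t * T .a := by
    have := eq_inv_of_mul_eq_one_right (a := T .t) (b := T .a * T .t * T .a * T .t * T .a)
      (by simpa only [pow_succ, pow_zero, one_mul, mul_assoc] using R.t_mul_a)
    rw [this, R.t_inv]
  have ha := R.conjActs_a
  rw [t_eq]
  simpa using ((((ha (some 0)).mul_left R.semiconjBy_t_infty.1).mul_left (ha none)).mul_left
    R.semiconjBy_t_infty.2).mul_left (by simpa using ha (some (-1)))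

-- `b t = u t v t u` maps `-g ↦ 0 ↦ ∞ ↦ ∞ ↦ 0 ↦ g`.
theorem semiconjBy_t_neg_g (R : LineRelations P T x) :
    SemiconjBy (T .t) (lineFamily P.p T x (some (-P.g : ZMod P.p)))
      (lineFamily P.p T x (some (P.g : ZMod P.p)⁻¹)) := by
  have bt_eq : T .b * T .t = T .u * T .t * T .v * T .t * T .u := by
    rw [R.b_eq, mul_assoc, R.t_mul_t, mul_one]
  have hu := R.conjActs_a_pow P.g
  rw [← R.u_eq] at hu
  have hv := R.conjActs_a_pow ((P.g⁻¹ : (ZMod P.p)ˣ) : ZMod P.p) none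
  rw [← R.v_eq] at hv
  have hbt : SemiconjBy (T .b * T .t) (lineFamily P.p T x (some (-P.g : ZMod P.p)))
      (lineFamily P.p T x (some (P.g : ZMod P.p))) := by
    rw [bt_eq]
    simpa using ((((hu (some 0)).mul_left R.semiconjBy_t_infty.1).mul_left hv).mul_left
      R.semiconjBy_t_infty.2).mul_left (by simpa using hu (some (-P.g)))
  have hb := R.conjActs_b (some (P.g : ZMod P.p)⁻¹)
  have : (P.g : ZMod P.p) ≠ 0 := P.g.ne_zero
  rw [lineDilation_some, Units.val_pow_eq_pow_val, pow_two, mul_assoc, mul_inv_cancel₀ this,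
    mul_one] at hb
  simpa only [inv_mul_cancel_left] using hb.inv_symm_left.mul_left hbt

theorem semiconjBy_t_g_sq_mul (R : LineRelations P T x) {j : ZMod P.p}
    (hj : SemiconjBy (T .t) (lineFamily P.p T x (some j)) (lineFamily P.p T x (some (-j⁻¹)))) :
    SemiconjBy (T .t) (lineFamily P.p T x (some ((P.g : ZMod P.p) ^ 2 * j)))
      (lineFamily P.p T x (some (-((P.g : ZMod P.p) ^ 2 * j)⁻¹))) := by
  have t_eq : T .t = (T .b)⁻¹ * T .t * (T .b)⁻¹ := by
    rw [eq_mul_inv_iff_mul_eq, eq_inv_mul_iff_mul_eq, ← mul_assoc, ← R.t_inv, eq_comm,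
      inv_eq_iff_mul_eq_one, R.t_inv]
    simpa only [mul_assoc] using R.t_mul_b
  have hb (i : ZMod P.p) := (R.conjActs_b (some i)).inv_symm_left
  simp only [lineDilation_some, Units.val_pow_eq_pow_val] at hb
  rw [t_eq]
  refine (SemiconjBy.mul_left ?_ hj).mul_left (hb j)
  have : (P.g : ZMod P.p) ^ 2 * -((P.g : ZMod P.p) ^ 2 * j)⁻¹ = -j⁻¹ := by
    rw [mul_inv, mul_neg, mul_inv_cancel_left₀ (pow_ne_zero 2 P.g.ne_zero)]
  exact this ▸ hb (-((P.g : ZMod P.p) ^ 2 * j)⁻¹)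

theorem conjActs_t (R : LineRelations P T x) :
    ConjActs (T .t) (lineFamily P.p T x) (lineNegInv (ZMod P.p))
  | none => R.semiconjBy_t_infty.1
  | some j => by
    obtain rfl | hj := eq_or_ne j 0
    · simpa using R.semiconjBy_t_infty.2
    have semiconjBy_pow (i : ZMod P.p)
        (hi : SemiconjBy (T .t) (lineFamily P.p T x (some i)) (lineFamily P.p T x (some (-i⁻¹))))
        (m : ℕ) : SemiconjBy (T .t) (lineFamily P.p T x (some ((P.g : ZMod P.p) ^ (2 * m) * i)))
          (lineFamily P.p T x (some (-((P.g : ZMod P.p) ^ (2 * m) * i)⁻¹))) := by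
      induction m with
      | zero => simpa using hi
      | succ m ih =>
        have : (P.g : ZMod P.p) ^ (2 * (m + 1)) * i = P.g ^ 2 * (P.g ^ (2 * m) * i) := by ring
        rw [this]
        exact R.semiconjBy_t_g_sq_mul ih
    rw [lineNegInv_some hj]
    obtain ⟨n, hn⟩ := P.exists_eq_pow (-j) (neg_ne_zero.2 hj)
    obtain ⟨m, rfl | rfl⟩ := n.even_or_odd'
    · obtain rfl : j = P.g ^ (2 * m) * -1 := by rw [mul_neg_one, ← hn, neg_neg]
      exact semiconjBy_pow (-1) (by simpa using R.semiconjBy_t_neg_one) m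
    · obtain rfl : j = P.g ^ (2 * m) * -P.g := by rw [mul_neg, ← pow_succ, ← hn, neg_neg]
      exact semiconjBy_pow (-P.g) (by rw [inv_neg, neg_neg]; exact R.semiconjBy_t_neg_g) m

theorem isCarmichael_lineFamily (R : LineRelations P T x) : IsCarmichael (lineFamily P.p T x) := by
  have mul_sq_of_conjActs {g : G} {σ : Perm (Option (ZMod P.p))}
      (hg : ConjActs g (lineFamily P.p T x) σ) {i j : Option (ZMod P.p)}
      (hij : (lineFamily P.p T x i * lineFamily P.p T x j) ^ 2 = 1) :
      (lineFamily P.p T x (σ i) * lineFamily P.p T x (σ j)) ^ 2 = 1 :=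
    sq_mul_eq_one_of_semiconjBy (hg i) (hg j) hij
  have infty_some (j : ZMod P.p) :
      (lineFamily P.p T x none * lineFamily P.p T x (some j)) ^ 2 = 1 := by
    have := mul_sq_of_conjActs (R.conjActs_a_pow j) (i := none) (j := some 0)
      (by rw [lineFamily_zero]; exact R.mul_conj_sq)
    simpa using this
  refine ⟨fun i => ?_, fun i j hij => ?_⟩
  · rcases i with _ | i
    · exact R.x_pow_three
    · simp [lineFamily, conj_pow, R.x_pow_three]
  · rcases i with _ | i <;> rcases j with _ | j
    · exact absurd rfl hij
    · exact infty_some j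
    · have := mul_sq_of_conjActs (R.conjActs_a_pow i)
        (mul_sq_of_conjActs R.conjActs_t (infty_some 0))
      simpa using this
    · have hne : i - j ≠ 0 := sub_ne_zero.2 fun h => hij (h ▸ rfl)
      have := mul_sq_of_conjActs (R.conjActs_a_pow i)
        (mul_sq_of_conjActs R.conjActs_t (infty_some (i - j)⁻¹))
      simpa [lineNegInv_some (inv_ne_zero hne)] using this

theorem mem_normalizer_range (R : LineRelations P T x) (l : LineLetter) :
    T l ∈ Subgroup.normalizer (Set.range (lineFamily P.p T x)) := by
  have ha (n : ℕ) := pow_mem R.conjActs_a.mem_normalizer_range n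
  cases l with
  | a => exact R.conjActs_a.mem_normalizer_range
  | t => exact R.conjActs_t.mem_normalizer_range
  | h => exact R.conjActs_h.mem_normalizer_range
  | b => exact R.conjActs_b.mem_normalizer_range
  | u => exact R.u_eq ▸ ha _
  | v => exact R.v_eq ▸ ha _
  | w => exact R.w_eq ▸ ha _
  | r => exact R.r_eq ▸ ha _

theorem eq_one_of_a_eq_one (R : LineRelations P T x) (ha : T .a = 1) : T = 1 := by
  have ht : T .t = 1 := by simpa [ha, pow_succ, R.t_mul_t] using R.t_mul_a
  have hu : T .u = 1 := by rw [R.u_eq, ha, one_pow]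
  have hv : T .v = 1 := by rw [R.v_eq, ha, one_pow]
  funext l
  cases l with
  | a => exact ha
  | t => exact ht
  | h => simpa [ha, ht] using R.h_eq
  | b => simpa [hu, hv, ht] using R.b_eq
  | u => exact hu
  | v => exact hv
  | w => rw [R.w_eq, ha, one_pow, Pi.one_apply]
  | r => rw [R.r_eq, ha, one_pow, Pi.one_apply]

/-- Conjugation by `b ^ p` raises `a` to the power `g ^ (2 p) = g ^ 2`, which is not `1`
modulo `p`. -/
theorem eq_one_of_b_pow_eq_one (R : LineRelations P T x) (hb : T .b ^ P.p = 1) : T = 1 := by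
  refine R.eq_one_of_a_eq_one (by_contra fun ha => P.g_sq_ne_one ?_)
  have orderOf_a : orderOf (T .a) = P.p := orderOf_eq_prime R.a_pow ha
  have b_conj : SemiconjBy (T .b) (T .a) (T .a ^ ((P.g ^ 2 : (ZMod P.p)ˣ) : ZMod P.p).val) := by
    rw [← R.w_eq]
    exact mul_inv_eq_iff_eq_mul.1 R.b_conj_a
  have b_pow_conj (m : ℕ) : SemiconjBy (T .b ^ m) (T .a)
      (T .a ^ (((P.g ^ 2) ^ m : (ZMod P.p)ˣ) : ZMod P.p).val) := by
    induction m with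
    | zero => simp [ZMod.val_one'' (show P.p ≠ 1 by have := P.five_le; lia)]
    | succ m ih =>
      have := (semiconjBy_pow_val R.a_pow b_conj ((P.g ^ 2) ^ m : (ZMod P.p)ˣ)).mul_left ih
      rwa [← pow_succ', ← Units.val_mul, ← pow_succ'] at this
  have := b_pow_conj P.p
  rw [hb, SemiconjBy, one_mul, mul_one, Units.val_pow_eq_pow_val, ZMod.pow_card,
    ← pow_one (T .a), ← pow_mul, one_mul, pow_inj_mod, orderOf_a,
    ← ZMod.natCast_eq_natCast_iff'] at this
  simpa only [Nat.cast_one, ZMod.natCast_zmod_val, Units.val_eq_one] using this.symm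

/-- If the generator `a'` of a second line with the same `x` and `0`-element acts on the points of
a first line transitively, the two lines have the same elements. -/
theorem range_lineFamily_eq {T' : LineGens G} (R' : LineRelations P T' x)
    (h₀ : T' .t * x * (T' .t)⁻¹ = T .t * x * (T .t)⁻¹) {ρ : Perm (ZMod P.p)}
    (hρ : ConjActs (T' .a) (fun i => lineFamily P.p T x (some i)) ρ)
    (ρ_transitive : ∀ i, ρ.SameCycle 0 i) :
    Set.range (lineFamily P.p T' x) = Set.range (lineFamily P.p T x) := by
  have lineFamily_natCast (k : ℕ) :
      lineFamily P.p T' x (some k) = lineFamily P.p T x (some ((ρ ^ k) 0)) := by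
    have h' := R'.conjActs_a_pow k (some 0)
    have h := hρ.pow k 0
    rw [pow_val_natCast R'.a_pow, lineFamily_zero, h₀, ← lineFamily_zero P.p] at h'
    simpa using mul_right_cancel (h'.eq.symm.trans h.eq)
  ext y
  constructor
  · rintro ⟨_ | i, rfl⟩
    · exact ⟨none, rfl⟩
    · rw [← ZMod.natCast_zmod_val i, lineFamily_natCast]
      exact ⟨_, rfl⟩
  · rintro ⟨_ | i, rfl⟩
    · exact ⟨none, rfl⟩
    · obtain ⟨k, rfl⟩ := (ρ_transitive i).exists_nat_pow_eq
      exact ⟨_, lineFamily_natCast k⟩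

end LineRelations

/-! ### Linked lines and splittings of a line -/

section IntervalShift

/-- The cyclic shift of the interval `[lo, hi)`, fixing all other numbers. -/
def cyclicShift (lo hi n : ℕ) : ℕ :=
  if lo ≤ n ∧ n < hi then if n + 1 = hi then lo else n + 1 else n

theorem cyclicShift_injective (lo hi : ℕ) : Function.Injective (cyclicShift lo hi) := by
  intro m n h
  unfold cyclicShift at h
  grind

theorem cyclicShift_lt {lo hi p n : ℕ} (hhi : hi ≤ p) (hn : n < p) : cyclicShift lo hi n < p := by
  unfold cyclicShift
  grind

theorem cyclicShift_add_one {lo hi n : ℕ} (hn : lo ≤ n) (hn' : n + 1 < hi) :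
    cyclicShift lo hi n = n + 1 := by
  unfold cyclicShift
  grind

theorem cyclicShift_last {lo n : ℕ} (h : lo ≤ n) : cyclicShift lo (n + 1) n = lo := by
  unfold cyclicShift
  grind

theorem cyclicShift_of_lt {lo hi n : ℕ} (hn : n < lo) : cyclicShift lo hi n = n := by
  unfold cyclicShift
  grind

theorem cyclicShift_of_le {lo hi n : ℕ} (hn : hi ≤ n) : cyclicShift lo hi n = n := by
  unfold cyclicShift
  grind

/-- The cyclic shift of the residue classes of the interval `[lo, hi)` modulo `p`. -/
noncomputable def intervalShift {p hi : ℕ} [NeZero p] (lo : ℕ) (hhi : hi ≤ p) : Perm (ZMod p) :=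
  Equiv.ofBijective (fun i => (cyclicShift lo hi i.val : ZMod p)) <| by
    refine Finite.injective_iff_bijective.1 fun i j h => ZMod.val_injective p ?_
    have h_val := congrArg ZMod.val h
    simp only [ZMod.val_natCast_of_lt (cyclicShift_lt hhi (ZMod.val_lt _))] at h_val
    exact cyclicShift_injective lo hi h_val

variable {p lo hi : ℕ} [NeZero p] {hhi : hi ≤ p}

theorem intervalShift_natCast {n : ℕ} (hn : n < p) :
    intervalShift lo hhi n = cyclicShift lo hi n := by
  simp [intervalShift, ZMod.val_natCast_of_lt hn]

theorem sameCycle_intervalShift {n : ℕ} (hlo : lo ≤ n) (hn : n < hi) :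
    (intervalShift lo hhi).SameCycle lo n := by
  induction n, hlo using Nat.le_induction with
  | base => exact .rfl
  | succ n hlo ih =>
    rw [← cyclicShift_add_one hlo hn, ← intervalShift_natCast (hhi := hhi) (by lia),
      Perm.sameCycle_apply_right]
    exact ih (by lia)

end IntervalShift

theorem natCast_zmod_ne {p m n : ℕ} (hm : m < p) (hn : n < p) (h : m ≠ n) :
    (m : ZMod p) ≠ n := fun e => h <| by
  simpa [ZMod.val_natCast_of_lt hm, ZMod.val_natCast_of_lt hn] using congrArg ZMod.val e

theorem swap_natCast {p a b n : ℕ} (ha : a < p) (hb : b < p) (hn : n < p) :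
    swap (a : ZMod p) b n = (swap a b n : ℕ) := by
  have natCast_inj {k l : ℕ} (hk : k < p) (hl : l < p) : (k : ZMod p) = l ↔ k = l := by
    rw [ZMod.natCast_eq_natCast_iff', Nat.mod_eq_of_lt hk, Nat.mod_eq_of_lt hl]
  simp only [swap_apply_def, natCast_inj hn ha, natCast_inj hn hb]
  split_ifs <;> rfl

theorem swap_lt {p a b n : ℕ} (ha : a < p) (hb : b < p) (hn : n < p) : swap a b n < p := by
  rw [swap_apply_def]
  split_ifs <;> assumption

namespace PrimeData

variable (P : PrimeData)

/-- The cyclic shift of the residue classes of `[0, s)`. -/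
noncomputable def lowShift : Perm (ZMod P.p) := intervalShift 0 P.s_lt.le

/-- The cyclic shift of the residue classes of `[s, p - 1)`. -/
noncomputable def highShift : Perm (ZMod P.p) := intervalShift P.s (Nat.sub_le P.p 1)

theorem lowShift_natCast {n : ℕ} (hn : n < P.p) : P.lowShift n = cyclicShift 0 P.s n :=
  intervalShift_natCast hn

theorem highShift_natCast {n : ℕ} (hn : n < P.p) :
    P.highShift n = cyclicShift P.s (P.p - 1) n :=
  intervalShift_natCast hn

variable {P} in
theorem lowShift_of_le {i : ZMod P.p} (hi : P.s ≤ i.val) : P.lowShift i = i := by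
  have := P.lowShift_natCast i.val_lt
  rwa [cyclicShift_of_le hi, ZMod.natCast_zmod_val] at this

theorem lowShift_val_lt {i : ZMod P.p} (hi : i.val < P.s) : (P.lowShift i).val < P.s := by
  by_contra! h
  rw [← P.lowShift.injective (lowShift_of_le h)] at hi
  exact h.not_gt hi

variable {P} in
theorem highShift_of_lt {i : ZMod P.p} (hi : i.val < P.s) : P.highShift i = i := by
  have := P.highShift_natCast i.val_lt
  rwa [cyclicShift_of_lt hi, ZMod.natCast_zmod_val] at this

theorem natCast_sub_one_eq_neg_one : ((P.p - 1 : ℕ) : ZMod P.p) = -1 := by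
  rw [Nat.cast_sub P.prime.out.one_le, ZMod.natCast_self, zero_sub, Nat.cast_one]

theorem natCast_sub_two_eq_neg_two : ((P.p - 2 : ℕ) : ZMod P.p) = -2 := by
  rw [Nat.cast_sub P.prime.out.two_le, ZMod.natCast_self, zero_sub, Nat.cast_ofNat]

theorem natCast_s_sub_one : ((P.s - 1 : ℕ) : ZMod P.p) = P.s - 1 := by
  rw [Nat.cast_sub P.s_odd.pos, Nat.cast_one]

theorem s_le_val_s : P.s ≤ (P.s : ZMod P.p).val := (ZMod.val_natCast_of_lt P.s_lt).ge

theorem s_le_val_neg_one : P.s ≤ (-1 : ZMod P.p).val := by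
  have := P.s_lt
  rw [← natCast_sub_one_eq_neg_one, ZMod.val_natCast_of_lt (by lia)]
  lia

variable {P} in
theorem sameCycle_lowShift {i : ZMod P.p} (hi : i.val < P.s) : P.lowShift.SameCycle 0 i := by
  have : P.lowShift.SameCycle (0 : ℕ) (i.val : ZMod P.p) :=
    sameCycle_intervalShift (Nat.zero_le _) hi
  rwa [Nat.cast_zero, ZMod.natCast_zmod_val] at this

variable {P} in
theorem sameCycle_highShift {i : ZMod P.p} (hi : P.s ≤ i.val) (hi' : i ≠ -1) :
    P.highShift.SameCycle P.s i := by
  have val_ne : i.val ≠ P.p - 1 := fun h => hi' <| by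
    rw [← natCast_sub_one_eq_neg_one, ← h, ZMod.natCast_zmod_val]
  have := i.val_lt
  have : P.highShift.SameCycle P.s (i.val : ZMod P.p) := sameCycle_intervalShift hi (by lia)
  rwa [ZMod.natCast_zmod_val] at this

/-- The three-cycle `s - 1 ↦ -2 ↦ -1 ↦ s - 1`. -/
def splitCycle : Perm (ZMod P.p) := swap (P.s - 1 : ZMod P.p) (-2) * swap (-2) (-1)

theorem s_sub_one_ne_neg_two : (P.s - 1 : ZMod P.p) ≠ -2 := by
  have := P.s_odd.pos
  have := P.s_add_two_le
  rw [← natCast_s_sub_one, ← natCast_sub_two_eq_neg_two]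
  exact natCast_zmod_ne (by lia) (by lia) (by lia)

theorem neg_two_ne_neg_one : (-2 : ZMod P.p) ≠ -1 := by
  have := P.five_le
  rw [← natCast_sub_two_eq_neg_two, ← natCast_sub_one_eq_neg_one]
  exact natCast_zmod_ne (by lia) (by lia) (by lia)

theorem lowShift_mul_highShift_mul_splitCycle :
    P.lowShift * P.highShift * P.splitCycle = Equiv.addRight 1 := by
  have := P.s_odd.pos
  have := P.s_add_two_le
  ext1 i
  obtain ⟨n, hn, rfl⟩ : ∃ n < P.p, (n : ZMod P.p) = i := ⟨_, i.val_lt, ZMod.natCast_zmod_val i⟩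
  set m := swap (P.s - 1) (P.p - 2) (swap (P.p - 2) (P.p - 1) n) with hm
  have splitCycle_n : P.splitCycle n = m := by
    rw [splitCycle, ← natCast_s_sub_one, ← natCast_sub_one_eq_neg_one,
      ← natCast_sub_two_eq_neg_two, Perm.mul_apply, swap_natCast (by lia) (by lia) hn,
      swap_natCast (by lia) (by lia) (swap_lt (by lia) (by lia) hn)]
  have m_lt : m < P.p := swap_lt (by lia) (by lia) (swap_lt (by lia) (by lia) hn)
  have shift_m : cyclicShift 0 P.s (cyclicShift P.s (P.p - 1) m) =
      if n + 1 = P.p then 0 else n + 1 := by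
    simp only [hm, cyclicShift, swap_apply_def]
    grind
  rw [Perm.mul_apply, Perm.mul_apply, splitCycle_n, highShift_natCast P m_lt,
    lowShift_natCast P (cyclicShift_lt (Nat.sub_le _ _) m_lt), shift_m, Equiv.coe_addRight]
  split_ifs with hp
  · simp only [← Nat.cast_add_one, hp, ZMod.natCast_self, Nat.cast_zero]
  · exact Nat.cast_add_one n

theorem sameCycle_lowShift_mul_addRight (i : ZMod P.p) :
    (P.lowShift * Equiv.addRight 1).SameCycle 0 i := by
  -- Since `s` is odd, the single cycle is `0, 2, …, s - 1, s, …, p - 1, 1, 3, …, s - 2`.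
  set ρ : Perm (ZMod P.p) := P.lowShift * Equiv.addRight 1
  have s_lt := P.s_lt
  have sameCycle_iff {n : ℕ} (m : ℕ) (hn : n + 1 < P.p) (hm : cyclicShift 0 P.s (n + 1) = m) :
      ρ.SameCycle 0 (n : ZMod P.p) ↔ ρ.SameCycle 0 (m : ZMod P.p) := by
    have : ρ n = m := by simpa [ρ, hm] using P.lowShift_natCast hn
    rw [← this, Perm.sameCycle_apply_right]
  have even (l : ℕ) (hl : 2 * l < P.s) : ρ.SameCycle 0 ((2 * l : ℕ) : ZMod P.p) := by
    induction l with
    | zero => simpa using Perm.SameCycle.refl ρ 0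
    | succ l ih =>
      exact (sameCycle_iff _ (by lia) (cyclicShift_add_one (by lia) (by lia))).1 (ih (by lia))
  have odd (j : ℕ) (hj : 2 * j + 2 ≤ P.s) :
      ρ.SameCycle 0 ((P.s - 2 - 2 * j : ℕ) : ZMod P.p) := by
    induction j with
    | zero =>
      refine (sameCycle_iff 0 (by lia) ?_).2 (by simpa using Perm.SameCycle.refl ρ 0)
      nth_rw 1 [show P.s = P.s - 2 - 2 * 0 + 1 + 1 by lia]
      exact cyclicShift_last (by lia)
    | succ j ih =>
      exact (sameCycle_iff (P.s - 2 - 2 * j) (by lia) (by grind [cyclicShift])).2 (ih (by lia))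
  obtain ⟨n, hn, rfl⟩ : ∃ n < P.p, (n : ZMod P.p) = i := ⟨_, i.val_lt, ZMod.natCast_zmod_val i⟩
  obtain ⟨l, hl⟩ := P.s_odd
  rcases lt_or_ge n P.s with h | h
  · obtain ⟨m, rfl | rfl⟩ := n.even_or_odd'
    · exact even m h
    · convert odd ((P.s - 2 - (2 * m + 1)) / 2) (by lia) using 2
      lia
  · induction n, h using Nat.le_induction with
    | base =>
      exact (sameCycle_iff P.s (by lia) (by rw [hl, cyclicShift_of_le le_rfl])).1 (even l (by lia))
    | succ n h ih =>
      exact (sameCycle_iff _ (by lia) (cyclicShift_of_le (by lia))).1 (ih (by lia))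

/-- The permutation by which the element `a` of the second line of a block acts on the points
`≠ ∞` of the first: a three-cycle followed by the dilation by `g²`. -/
def linkPerm : Perm (ZMod P.p) := Units.mulLeft (P.g ^ 2) * (swap 0 1 * swap 1 (P.g : ZMod P.p))

theorem g_ne_one : (P.g : ZMod P.p) ≠ 1 := fun h =>
  P.g_sq_ne_one <| by rw [Units.val_eq_one.1 h, one_pow]

theorem linkPerm_zero : P.linkPerm 0 = P.g ^ 2 := by
  simp [linkPerm, swap_apply_of_ne_of_ne zero_ne_one P.g.ne_zero.symm]

theorem linkPerm_one : P.linkPerm 1 = P.g ^ 3 := by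
  simp [linkPerm, swap_apply_of_ne_of_ne, P.g_ne_one, pow_succ]

theorem linkPerm_of_ne {i : ZMod P.p} (h₀ : i ≠ 0) (h₁ : i ≠ 1) (hg : i ≠ P.g) :
    P.linkPerm i = P.g ^ 2 * i := by
  simp [linkPerm, swap_apply_of_ne_of_ne, h₀, h₁, hg]

theorem p_odd : Odd P.p := P.prime.out.odd_of_ne_two (by have := P.five_le; lia)

variable {P} in
theorem g_pow_ne_g_pow {k m : ℕ} (hk : Even k) (hm : Odd m) :
    (P.g : ZMod P.p) ^ k ≠ P.g ^ m := by
  obtain ⟨n, hn⟩ := P.p_odd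
  norm_cast
  rw [pow_eq_pow_iff_modEq, orderOf_g, hn, Nat.add_sub_cancel]
  intro h
  have := h.of_mul_right n
  grind [Nat.ModEq]

theorem sameCycle_linkPerm_of_apply_eq {i j : ZMod P.p} (hi : P.linkPerm.SameCycle 0 i)
    (hij : P.linkPerm i = j) : P.linkPerm.SameCycle 0 j := hij ▸ Perm.sameCycle_apply_right.2 hi

theorem sameCycle_linkPerm_g_pow_even (l : ℕ) : P.linkPerm.SameCycle 0 (P.g ^ (2 * l + 2)) := by
  induction l with
  | zero => exact P.sameCycle_linkPerm_of_apply_eq .rfl P.linkPerm_zero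
  | succ l ih =>
    by_cases h₁ : (P.g : ZMod P.p) ^ (2 * l + 2) = 1
    · rw [show 2 * (l + 1) + 2 = 2 * l + 2 + 2 by ring, pow_add, h₁, one_mul]
      exact P.sameCycle_linkPerm_of_apply_eq .rfl P.linkPerm_zero
    · refine P.sameCycle_linkPerm_of_apply_eq ih ?_
      have hg := g_pow_ne_g_pow (P := P) (k := 2 * l + 2) (by grind) odd_one
      rw [P.linkPerm_of_ne (pow_ne_zero _ P.g.ne_zero) h₁ (by simpa using hg)]
      ring

/-- The orbit of `0` consists of even powers of `g` until it reaches `1 = g ^ (p - 1)`; from there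
it continues through the odd powers. -/
theorem sameCycle_linkPerm (i : ZMod P.p) : P.linkPerm.SameCycle 0 i := by
  have p_sub_one : P.p - 1 = 2 * (P.p / 2 - 1) + 2 := by
    have := P.five_le
    have := P.p_odd
    grind
  have one : P.linkPerm.SameCycle 0 1 := by
    have := P.sameCycle_linkPerm_g_pow_even (P.p / 2 - 1)
    rwa [← p_sub_one, ZMod.pow_card_sub_one_eq_one P.g.ne_zero] at this
  have g_pow_odd (l : ℕ) : P.linkPerm.SameCycle 0 (P.g ^ (2 * l + 3)) := by
    induction l with
    | zero => exact P.sameCycle_linkPerm_of_apply_eq one P.linkPerm_one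
    | succ l ih =>
      by_cases hg : (P.g : ZMod P.p) ^ (2 * l + 3) = P.g
      · rw [show 2 * (l + 1) + 3 = 2 * l + 3 + 2 by ring, pow_add, hg, ← pow_succ']
        exact P.sameCycle_linkPerm_of_apply_eq one P.linkPerm_one
      · refine P.sameCycle_linkPerm_of_apply_eq ih ?_
        have h₁ := (g_pow_ne_g_pow (P := P) (m := 2 * l + 3) .zero (by grind)).symm
        rw [P.linkPerm_of_ne (pow_ne_zero _ P.g.ne_zero) (by simpa using h₁) hg]
        ring
  by_cases hi : i = 0
  · exact hi ▸ .rfl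
  obtain ⟨k, rfl⟩ := P.exists_eq_pow i hi
  have pow_eq : (P.g : ZMod P.p) ^ k = P.g ^ (k + (P.p - 1)) := by
    rw [pow_add, ZMod.pow_card_sub_one_eq_one P.g.ne_zero, mul_one]
  rw [pow_eq, p_sub_one]
  obtain ⟨m, rfl | rfl⟩ := k.even_or_odd'
  · convert P.sameCycle_linkPerm_g_pow_even (m + (P.p / 2 - 1)) using 2; ring
  · convert g_pow_odd (m + (P.p / 2 - 1)) using 2; ring

end PrimeData

namespace ConjActs

variable {G Ω : Type*} [Group G] {X : Ω → G} {y c d : G} {σ α β : Perm Ω} {ω ω' : Ω}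

theorem exists_pow_semiconjBy [Finite Ω] (hc : ConjActs c X σ) (h : σ.SameCycle ω ω') :
    ∃ n : ℕ, SemiconjBy (c ^ n) (X ω) (X ω') := by
  obtain ⟨n, rfl⟩ := h.exists_nat_pow_eq
  exact ⟨n, hc.pow n ω⟩

theorem commute_of_sameCycle [Finite Ω] (hc : ConjActs c X σ) (hy : Commute y c)
    (h : σ.SameCycle ω ω') (hω : Commute y (X ω)) : Commute y (X ω') := by
  obtain ⟨n, hn⟩ := hc.exists_pow_semiconjBy h
  rw [← mul_inv_eq_iff_eq_mul.2 hn.eq]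
  exact ((hy.pow_right n).mul_right hω).mul_right (hy.pow_right n).inv_right

theorem of_mul_left (h : ConjActs (c * d) X (α * β))
    (h_or : ∀ ω, Commute d (X ω) ∧ β ω = ω ∨ Commute c (X ω) ∧ α ω = ω) : ConjActs c X α := by
  intro ω
  rcases h_or ω with ⟨hd, hβ⟩ | ⟨hc, hα⟩
  · have hcd := h ω
    rw [Perm.mul_apply, hβ] at hcd
    simpa using hcd.mul_left hd.inv_left
  · rw [hα]
    exact hc

theorem of_mul_right (hcd : Commute c d) (hαβ : Commute α β) (h : ConjActs (c * d) X (α * β))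
    (h_or : ∀ ω, Commute d (X ω) ∧ β ω = ω ∨ Commute c (X ω) ∧ α ω = ω) : ConjActs d X β := by
  rw [hcd.eq, hαβ.eq] at h
  exact h.of_mul_left fun ω => (h_or ω).symm

end ConjActs

/-- Names for the seven points of the projective line at which the relations involve members of the
family: `0`, `1`, `g`, `s`, `s - 1`, `-1` and `-2`. -/
inductive MarkedPoint
  | zero | one | g | s | sPred | negOne | negTwo

namespace MarkedPoint

variable {G : Type*} [Group G]

/-- The residue class named by a marked point. -/
def val (P : PrimeData) : MarkedPoint → ZMod P.p
  | zero => 0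
  | one => 1
  | g => P.g
  | s => P.s
  | sPred => P.s - 1
  | negOne => -1
  | negTwo => -2

/-- A short word for the power of `a` which moves `0` to the marked point. -/
def shift (T : LineGens G) : MarkedPoint → G
  | zero => 1
  | one => T .a
  | g => T .u
  | s => T .r
  | sPred => (T .a)⁻¹ * T .r
  | negOne => (T .a)⁻¹
  | negTwo => (T .a)⁻¹ * (T .a)⁻¹

end MarkedPoint

/-- A short word for the member of the family of a line which belongs to a marked point. -/
def markedElement {G : Type*} [Group G] (T : LineGens G) (x : G) (q : MarkedPoint) : G :=
  q.shift T * (T .t * x * (T .t)⁻¹) * (q.shift T)⁻¹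

@[simp]
theorem markedElement_one {G : Type*} [Group G] (T : LineGens G) (q : MarkedPoint) :
    markedElement T 1 q = 1 := by simp [markedElement]

theorem map_markedElement {G H : Type*} [Group G] [Group H] (f : G →* H) (T : LineGens G) (x : G)
    (q : MarkedPoint) : f (markedElement T x q) = markedElement (f ∘ T) (f x) q := by
  cases q <;> simp [markedElement, MarkedPoint.shift]

section LineRelations

variable {G : Type*} [Group G] {P : PrimeData} {T : LineGens G} {x : G}

theorem LineRelations.conjActs_shift (R : LineRelations P T x) (q : MarkedPoint) :
    ConjActs (q.shift T) (lineFamily P.p T x) (lineTranslation (q.val P)) := by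
  have ha := R.conjActs_a
  have hr : ConjActs (T .r) (lineFamily P.p T x) (lineTranslation (P.s : ZMod P.p)) := by
    rw [R.r_eq, ← pow_val_natCast R.a_pow]
    exact R.conjActs_a_pow _
  have ha_inv : ConjActs (T .a)⁻¹ (lineFamily P.p T x) (lineTranslation (-1)) := by
    simpa [lineTranslation_inv] using ha.inv
  cases q with
  | zero => simpa [MarkedPoint.val, MarkedPoint.shift, lineTranslation_zero] using ConjActs.one
  | one => exact ha
  | g =>
    rw [MarkedPoint.shift, R.u_eq]
    exact R.conjActs_a_pow _
  | s => exact hr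
  | sPred =>
    have := ha_inv.mul hr
    rwa [lineTranslation_mul, neg_add_eq_sub] at this
  | negOne => exact ha_inv
  | negTwo =>
    have := ha_inv.mul ha_inv
    rwa [lineTranslation_mul, ← neg_add, one_add_one_eq_two] at this

theorem LineRelations.markedElement_eq (R : LineRelations P T x) (q : MarkedPoint) :
    markedElement T x q = lineFamily P.p T x (some (q.val P)) := by
  have := R.conjActs_shift q (some 0)
  rw [lineTranslation_some, zero_add, lineFamily_zero] at this
  exact mul_inv_eq_iff_eq_mul.2 this.eq

end LineRelations

section Block

variable {G : Type*} [Group G] {P : PrimeData} {x : G}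

/-- The letters of a block: a primary line (`false`) and a linked line (`true`). -/
abbrev BlockGens (G : Type*) := Bool → LineGens G

/-- The relations of a block, which consists of two lines with the same family; the element `a` of
the linked line permutes the points `≠ ∞` of the primary one by `PrimeData.linkPerm`. -/
structure BlockRelations (P : PrimeData) (B : BlockGens G) (x : G) : Prop where
  line (linked : Bool) : LineRelations P (B linked) x
  zero_eq : markedElement (B true) x .zero = markedElement (B false) x .zero
  a_eq : B true .a = B false .b * threeCycleWord (markedElement (B false) x .zero)
    (markedElement (B false) x .one) (markedElement (B false) x .g)

/-- The relators of a block that link its two lines. -/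
def blockShortRelators (B : BlockGens G) (x : G) : List G :=
  [markedElement (B true) x .zero * (markedElement (B false) x .zero)⁻¹,
    B true .a * (B false .b * threeCycleWord (markedElement (B false) x .zero)
      (markedElement (B false) x .one) (markedElement (B false) x .g))⁻¹]

theorem blockRelations_iff (B : BlockGens G) (x : G) :
    BlockRelations P B x ↔
      (∀ linked, LineRelations P (B linked) x) ∧ ∀ y ∈ blockShortRelators B x, y = 1 := by
  simp only [blockShortRelators, List.forall_mem_cons, List.not_mem_nil, false_imp_iff,
    implies_true, and_true, mul_inv_eq_one]
  exact ⟨fun R => ⟨R.1, R.2, R.3⟩, fun ⟨h₁, h₂, h₃⟩ => ⟨h₁, h₂, h₃⟩⟩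

theorem map_blockShortRelators {H : Type*} [Group H] (f : G →* H) (B : BlockGens G) (x : G) :
    (blockShortRelators B x).map f = blockShortRelators (fun linked => f ∘ B linked) (f x) := by
  simp [blockShortRelators, map_markedElement, map_threeCycleWord]

namespace BlockRelations

variable {B : BlockGens G}

theorem conjActs_linked_a (R : BlockRelations P B x) :
    ConjActs (B true .a) (fun i => lineFamily P.p (B false) x (some i)) P.linkPerm := by
  intro i
  have hY := (R.line false).isCarmichael_lineFamily
  have word_conj := hY.threeCycleWord_conj (a := some 0) (b := some 1) (c := some (P.g : ZMod P.p))
    (by simp) (by simp [P.g_ne_one.symm]) (some i)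
  rw [← optionCongrHom_swap, ← optionCongrHom_swap, ← map_mul, optionCongrHom_some] at word_conj
  simpa [R.a_eq, (R.line false).markedElement_eq, MarkedPoint.val, PrimeData.linkPerm] using
    ((R.line false).conjActs_b _).mul_left word_conj

theorem range_lineFamily_eq (R : BlockRelations P B x) (linked : Bool) :
    Set.range (lineFamily P.p (B linked) x) = Set.range (lineFamily P.p (B false) x) := by
  cases linked with
  | false => rfl
  | true =>
    refine (R.line true).range_lineFamily_eq ?_ R.conjActs_linked_a
      P.sameCycle_linkPerm
    simpa [markedElement, MarkedPoint.shift] using R.zero_eq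

theorem mem_normalizer_range (R : BlockRelations P B x) (linked : Bool) (l : LineLetter) :
    B linked l ∈ Subgroup.normalizer (Set.range (lineFamily P.p (B false) x)) :=
  R.range_lineFamily_eq linked ▸ (R.line linked).mem_normalizer_range l

theorem eq_one (R : BlockRelations P B 1) : B = 1 := by
  have a_eq_b : B true .a = B false .b := by simpa [threeCycleWord] using R.a_eq
  have primary_eq_one : B false = 1 :=
    (R.line false).eq_one_of_b_pow_eq_one (a_eq_b ▸ (R.line true).a_pow)
  have linked_eq_one : B true = 1 :=
    (R.line true).eq_one_of_a_eq_one (a_eq_b.trans (congrFun primary_eq_one _))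
  funext linked
  cases linked
  exacts [primary_eq_one, linked_eq_one]

end BlockRelations

end Block

section Split

variable {G : Type*} [Group G] {P : PrimeData} {T : LineGens G} {x c d : G}

/-- The relations which express `a` by commuting elements `c` and `d`, in the intended model the
cyclic shifts of `[0, s)` and `[s, p - 1)`. -/
structure SplitRelations (T : LineGens G) (x c d : G) : Prop where
  a_eq : T .a = c * d * threeCycleWord (markedElement T x .sPred) (markedElement T x .negTwo)
    (markedElement T x .negOne)
  commute_c_d : Commute c d
  commute_d_x : Commute d x
  commute_d_zero : Commute d (markedElement T x .zero)
  commute_c_s : Commute c (markedElement T x .s)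
  commute_c_negOne : Commute c (markedElement T x .negOne)

/-- The relators for `SplitRelations`. -/
def splitRelators (T : LineGens G) (x c d : G) : List G :=
  [T .a * (c * d * threeCycleWord (markedElement T x .sPred) (markedElement T x .negTwo)
      (markedElement T x .negOne))⁻¹,
    ⁅c, d⁆, ⁅d, x⁆, ⁅d, markedElement T x .zero⁆, ⁅c, markedElement T x .s⁆,
    ⁅c, markedElement T x .negOne⁆]

theorem splitRelations_iff (T : LineGens G) (x c d : G) :
    SplitRelations T x c d ↔ ∀ y ∈ splitRelators T x c d, y = 1 := by
  simp only [splitRelators, List.forall_mem_cons, List.not_mem_nil, false_imp_iff, implies_true,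
    and_true, mul_inv_eq_one, commutatorElement_eq_one_iff_commute]
  exact ⟨fun S => ⟨S.1, S.2, S.3, S.4, S.5, S.6⟩,
    fun ⟨h₁, h₂, h₃, h₄, h₅, h₆⟩ => ⟨h₁, h₂, h₃, h₄, h₅, h₆⟩⟩

theorem map_splitRelators {H : Type*} [Group H] (f : G →* H) (T : LineGens G) (x c d : G) :
    (splitRelators T x c d).map f = splitRelators (f ∘ T) (f x) (f c) (f d) := by
  simp [splitRelators, map_commutatorElement, map_markedElement, map_threeCycleWord]

namespace PrimeData

theorem disjoint_lowShift_highShift : P.lowShift.Disjoint P.highShift := fun i =>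
  (lt_or_ge i.val P.s).symm.imp lowShift_of_le highShift_of_lt

theorem sameCycle_lowShift_mul_highShift_of_lt {i : ZMod P.p} (hi : i.val < P.s) :
    (P.lowShift * P.highShift).SameCycle 0 i := by
  obtain ⟨n, rfl⟩ := (sameCycle_lowShift hi).exists_nat_pow_eq
  have high_zero : P.highShift 0 = 0 := highShift_of_lt (by simpa using P.s_odd.pos)
  refine ⟨n, ?_⟩
  rw [zpow_natCast, P.disjoint_lowShift_highShift.commute.mul_pow, Perm.mul_apply,
    Perm.pow_apply_eq_self_of_apply_eq_self high_zero]

theorem sameCycle_lowShift_mul_highShift_of_le {i : ZMod P.p} (hi : P.s ≤ i.val) (hi' : i ≠ -1) :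
    (P.lowShift * P.highShift).SameCycle P.s i := by
  obtain ⟨n, rfl⟩ := (sameCycle_highShift hi hi').exists_nat_pow_eq
  have low_s : P.lowShift P.s = P.s :=
    lowShift_of_le (by rw [ZMod.val_natCast_of_lt P.s_lt])
  refine ⟨n, ?_⟩
  rw [zpow_natCast, P.disjoint_lowShift_highShift.commute.eq,
    P.disjoint_lowShift_highShift.symm.commute.mul_pow, Perm.mul_apply,
    Perm.pow_apply_eq_self_of_apply_eq_self low_s]

end PrimeData

theorem optionCongrHom_sameCycle {α : Type*} {σ : Perm α} {i j : α} (h : σ.SameCycle i j) :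
    (optionCongrHom σ).SameCycle (some i) (some j) := by
  obtain ⟨n, rfl⟩ := h
  exact ⟨n, by rw [← map_zpow, optionCongrHom_some]⟩

namespace SplitRelations

theorem conjActs_mul (S : SplitRelations T x c d) (R : LineRelations P T x) :
    ConjActs (c * d) (lineFamily P.p T x) (optionCongrHom (P.lowShift * P.highShift)) := by
  have a_eq := S.a_eq
  simp only [R.markedElement_eq] at a_eq
  have word_conj : ConjActs _ (lineFamily P.p T x) _ :=
    R.isCarmichael_lineFamily.threeCycleWord_conj
      (fun h => P.s_sub_one_ne_neg_two (Option.some_injective _ h))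
      (fun h => P.neg_two_ne_neg_one (Option.some_injective _ h))
  have := R.conjActs_a.mul word_conj.inv
  rw [← optionCongrHom_swap, ← optionCongrHom_swap, lineTranslation, ← map_mul, ← map_inv,
    ← map_mul, a_eq] at this
  rw [eq_mul_inv_of_mul_eq P.lowShift_mul_highShift_mul_splitCycle]
  simpa only [MarkedPoint.val, mul_inv_cancel_right, PrimeData.splitCycle] using this

theorem commute_or_commute (S : SplitRelations T x c d) (R : LineRelations P T x)
    (ω : Option (ZMod P.p)) :
    Commute d (lineFamily P.p T x ω) ∧ optionCongrHom P.highShift ω = ω ∨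
      Commute c (lineFamily P.p T x ω) ∧ optionCongrHom P.lowShift ω = ω := by
  have commute_cd_c : Commute c (c * d) := (Commute.refl c).mul_right S.commute_c_d
  have commute_cd_d : Commute d (c * d) := S.commute_c_d.symm.mul_right (Commute.refl d)
  rcases ω with _ | i
  · exact .inl ⟨S.commute_d_x, rfl⟩
  rcases lt_or_ge i.val P.s with hi | hi
  · left
    refine ⟨?_, congrArg some (PrimeData.highShift_of_lt hi)⟩
    refine (S.conjActs_mul R).commute_of_sameCycle commute_cd_d
      (optionCongrHom_sameCycle (PrimeData.sameCycle_lowShift_mul_highShift_of_lt hi)) ?_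
    exact R.markedElement_eq .zero ▸ S.commute_d_zero
  · right
    refine ⟨?_, congrArg some (PrimeData.lowShift_of_le hi)⟩
    by_cases hi' : i = -1
    · exact hi' ▸ R.markedElement_eq .negOne ▸ S.commute_c_negOne
    refine (S.conjActs_mul R).commute_of_sameCycle commute_cd_c
      (optionCongrHom_sameCycle (PrimeData.sameCycle_lowShift_mul_highShift_of_le hi hi')) ?_
    exact R.markedElement_eq .s ▸ S.commute_c_s

theorem conjActs_c (S : SplitRelations T x c d) (R : LineRelations P T x) :
    ConjActs c (lineFamily P.p T x) (optionCongrHom P.lowShift) :=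
  (map_mul optionCongrHom _ _ ▸ S.conjActs_mul R).of_mul_left (S.commute_or_commute R)

theorem conjActs_d (S : SplitRelations T x c d) (R : LineRelations P T x) :
    ConjActs d (lineFamily P.p T x) (optionCongrHom P.highShift) :=
  (map_mul optionCongrHom _ _ ▸ S.conjActs_mul R).of_mul_right S.commute_c_d
    (P.disjoint_lowShift_highShift.commute.map optionCongrHom) (S.commute_or_commute R)

end SplitRelations

end Split

/-! ### Two lines glued along an initial segment -/

/-- The letters of one side: a main block, an auxiliary block and the element `d` which acts as the
cyclic shift of `[s, p - 1)` on the main line, the primary line of the main block. -/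
inductive SideLetter
  | line (aux linked : Bool) (l : LineLetter)
  | d
  deriving DecidableEq

instance : Fintype SideLetter :=
  Fintype.ofEquiv (Option (Bool × Bool × LineLetter))
    { toFun := fun q => q.elim .d fun q => .line q.1 q.2.1 q.2.2
      invFun := fun | .d => none | .line aux linked l => some (aux, linked, l)
      left_inv := by rintro (_ | _) <;> rfl
      right_inv := by rintro (_ | _) <;> rfl }

/-- The generators of the presentation: two sides, the element `c` which acts as the cyclic shift of
`[0, s)` on both main lines, the member `x` of the Carmichael family at `∞`, and `k` members at
points on neither line. -/
inductive Letter (k : ℕ)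
  | side (i : Bool) (l : SideLetter)
  | c
  | x
  | extra (j : Fin k)
  deriving DecidableEq

instance (k : ℕ) : Fintype (Letter k) :=
  Fintype.ofEquiv ((Bool × SideLetter) ⊕ Option (Option (Fin k)))
    { toFun := Sum.elim (fun q => .side q.1 q.2) fun q => q.elim .c fun q => q.elim .x .extra
      invFun := fun
        | .side i l => .inl (i, l)
        | .c => .inr none
        | .x => .inr (some none)
        | .extra j => .inr (some (some j))
      left_inv := by rintro (_ | _ | _ | _) <;> rfl
      right_inv := by rintro (_ | _ | _ | _) <;> rfl }

section Words

variable {k : ℕ} {G : Type*}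

/-- The elements of one block of one side. -/
def sideBlock (D : Letter k → G) (i aux : Bool) : BlockGens G :=
  fun linked l => D (.side i (.line aux linked l))

/-- The elements of the main line of one side. -/
def mainLine (D : Letter k → G) (i : Bool) : LineGens G := sideBlock D i false false

variable [Group G]

/-- The member of the Carmichael family at a marked point of the main line of one side. -/
def sideMarked (D : Letter k → G) (i : Bool) (q : MarkedPoint) : G :=
  markedElement (mainLine D i) (D .x) q

theorem map_sideMarked {H : Type*} [Group H] (f : G →* H) (D : Letter k → G) (i : Bool)
    (q : MarkedPoint) : f (sideMarked D i q) = sideMarked (f ∘ D) i q :=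
  map_markedElement f _ _ q

end Words

section Relations

variable {k : ℕ} {G : Type*} [Group G]

/-- The relations of one side. The auxiliary block, whose first line satisfies `a = c * a'` with
`a'` from the main line, has the same family as the main block; it makes sure that `c` is trivial
as soon as `x` is. -/
structure SideRelations (P : PrimeData) (D : Letter k → G) (i : Bool) : Prop where
  block (aux : Bool) : BlockRelations P (sideBlock D i aux) (D .x)
  split : SplitRelations (mainLine D i) (D .x) (D .c) (D (.side i .d))
  aux_a : sideBlock D i true false .a = D .c * mainLine D i .a
  aux_zero : markedElement (sideBlock D i true false) (D .x) .zero = sideMarked D i .zero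

/-- The relations between side `i` and the points `s, …, p - 1` of the other main line. -/
structure CrossRelations (D : Letter k → G) (i : Bool) : Prop where
  commute_s (l : SideLetter) : Commute (D (.side i l)) (sideMarked D (!i) .s)
  commute_negOne (l : SideLetter) : Commute (D (.side i l)) (sideMarked D (!i) .negOne)
  commute_d (l : SideLetter) : Commute (D (.side i l)) (D (.side (!i) .d))

/-- The relations which involve the extra points. -/
structure ExtraRelations (D : Letter k → G) : Prop where
  pow_three (j : Fin k) : D (.extra j) ^ 3 = 1
  mul_x_sq (j : Fin k) : (D (.extra j) * D .x) ^ 2 = 1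
  mul_sq (j j' : Fin k) : j ≠ j' → (D (.extra j) * D (.extra j')) ^ 2 = 1
  commute_side (j : Fin k) (i : Bool) (l : SideLetter) : Commute (D (.extra j)) (D (.side i l))
  commute_c (j : Fin k) : Commute (D (.extra j)) (D .c)

/-- The relations of the presentation of the alternating group: two lines which share the points
`∞, 0, …, s - 1`, and `k` extra points. -/
structure Relations (P : PrimeData) (D : Letter k → G) : Prop where
  side (i : Bool) : SideRelations P D i
  zero_eq : sideMarked D true .zero = sideMarked D false .zero
  cross (i : Bool) : CrossRelations D i
  cross_sq : ∀ q ∈ [MarkedPoint.s, .negOne], ∀ q' ∈ [MarkedPoint.s, .negOne],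
    (sideMarked D false q * sideMarked D true q') ^ 2 = 1
  extra : ExtraRelations D

end Relations

section Relators

open Finset

variable {k : ℕ} {G : Type*} [Group G]

/-- The relators of one side that do not depend on the prime. -/
noncomputable def sideShortRelators (D : Letter k → G) (i : Bool) : List G :=
  ((univ : Finset (Bool × Bool)).toList.flatMap fun q =>
    lineShortRelators (sideBlock D i q.1 q.2) (D .x)) ++
  (univ.toList.flatMap fun aux => blockShortRelators (sideBlock D i aux) (D .x)) ++
  splitRelators (mainLine D i) (D .x) (D .c) (D (.side i .d)) ++
  [sideBlock D i true false .a * (D .c * mainLine D i .a)⁻¹,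
    markedElement (sideBlock D i true false) (D .x) .zero * (sideMarked D i .zero)⁻¹]

/-- The relators for `CrossRelations`. -/
noncomputable def crossRelators (D : Letter k → G) (i : Bool) : List G :=
  univ.toList.flatMap fun l =>
    [⁅D (.side i l), sideMarked D (!i) .s⁆, ⁅D (.side i l), sideMarked D (!i) .negOne⁆,
      ⁅D (.side i l), D (.side (!i) .d)⁆]

/-- The relators for `ExtraRelations`. -/
noncomputable def extraRelators (D : Letter k → G) : List G :=
  (univ.toList.flatMap fun j =>
    [D (.extra j) ^ 3, (D (.extra j) * D .x) ^ 2, ⁅D (.extra j), D .c⁆]) ++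
  ((univ : Finset (Fin k)).offDiag.toList.map fun q => (D (.extra q.1) * D (.extra q.2)) ^ 2) ++
  ((univ : Finset (Fin k × Bool × SideLetter)).toList.map fun q =>
    ⁅D (.extra q.1), D (.side q.2.1 q.2.2)⁆)

/-- The relators that do not depend on the prime. -/
noncomputable def shortRelators (D : Letter k → G) : List G :=
  univ.toList.flatMap (sideShortRelators D) ++
  [sideMarked D true .zero * (sideMarked D false .zero)⁻¹] ++
  univ.toList.flatMap (crossRelators D) ++
  ([MarkedPoint.s, .negOne].flatMap fun q => [MarkedPoint.s, .negOne].map fun q' =>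
    (sideMarked D false q * sideMarked D true q') ^ 2) ++
  extraRelators D

/-- The relators that involve powers with exponents of the order of the prime. -/
noncomputable def powerRelators (P : PrimeData) (n : ℕ) (D : Letter k → G) : List G :=
  (univ : Finset (Bool × Bool × Bool)).toList.flatMap fun q =>
    linePowerRelators P n (sideBlock D q.1 q.2.1 q.2.2)

theorem sideRelations_iff {P : PrimeData} {n : ℕ} (hn : P.p < 4 ^ n) (D : Letter k → G) (i : Bool) :
    SideRelations P D i ↔ (∀ y ∈ sideShortRelators D i, y = 1) ∧
      ∀ aux linked, ∀ y ∈ linePowerRelators P n (sideBlock D i aux linked), y = 1 := by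
  simp only [sideShortRelators, List.forall_mem_append, List.forall_mem_flatMap, mem_toList,
    mem_univ, true_imp_iff, List.forall_mem_cons, List.not_mem_nil, false_imp_iff, implies_true,
    and_true, mul_inv_eq_one, ← splitRelations_iff]
  constructor
  · intro R
    have line (aux linked : Bool) := (lineRelations_iff hn _ _).1 ((R.block aux).line linked)
    exact ⟨⟨⟨⟨fun q => (line q.1 q.2).1, fun aux => ((blockRelations_iff _ _).1 (R.block aux)).2⟩,
      R.split⟩, R.aux_a, R.aux_zero⟩, fun aux linked => (line aux linked).2⟩
  · rintro ⟨⟨⟨⟨h_line, h_block⟩, h_split⟩, h_aux⟩, h_power⟩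
    exact ⟨fun aux => (blockRelations_iff _ _).2
      ⟨fun linked => (lineRelations_iff hn _ _).2 ⟨h_line (aux, linked), h_power aux linked⟩,
        h_block aux⟩, h_split, h_aux.1, h_aux.2⟩

theorem crossRelations_iff (D : Letter k → G) (i : Bool) :
    CrossRelations D i ↔ ∀ y ∈ crossRelators D i, y = 1 := by
  simp only [crossRelators, List.forall_mem_flatMap, mem_toList, mem_univ, true_imp_iff,
    List.forall_mem_cons, List.not_mem_nil, false_imp_iff, implies_true, and_true,
    commutatorElement_eq_one_iff_commute]
  exact ⟨fun R l => ⟨R.1 l, R.2 l, R.3 l⟩,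
    fun h => ⟨fun l => (h l).1, fun l => (h l).2.1, fun l => (h l).2.2⟩⟩

theorem extraRelations_iff (D : Letter k → G) :
    ExtraRelations D ↔ ∀ y ∈ extraRelators D, y = 1 := by
  simp only [extraRelators, List.forall_mem_append, List.forall_mem_flatMap, List.forall_mem_map,
    mem_toList, mem_univ, mem_offDiag, true_and, true_imp_iff, List.forall_mem_cons,
    List.not_mem_nil, false_imp_iff, implies_true, and_true, commutatorElement_eq_one_iff_commute,
    Prod.forall]
  exact ⟨fun R => ⟨⟨fun j => ⟨R.1 j, R.2 j, R.5 j⟩, R.3⟩, R.4⟩,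
    fun ⟨⟨h₁, h₂⟩, h₃⟩ => ⟨fun j => (h₁ j).1, fun j => (h₁ j).2.1, h₂, h₃, fun j => (h₁ j).2.2⟩⟩

theorem relations_iff {P : PrimeData} {n : ℕ} (hn : P.p < 4 ^ n) (D : Letter k → G) :
    Relations P D ↔ (∀ y ∈ shortRelators D, y = 1) ∧ ∀ y ∈ powerRelators P n D, y = 1 := by
  simp only [shortRelators, powerRelators, List.forall_mem_append, List.forall_mem_flatMap,
    List.forall_mem_map, mem_toList, mem_univ, true_imp_iff, List.forall_mem_singleton,
    mul_inv_eq_one, ← crossRelations_iff, ← extraRelations_iff, Prod.forall]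
  constructor
  · intro R
    have side (i : Bool) := (sideRelations_iff hn D i).1 (R.side i)
    exact ⟨⟨⟨⟨⟨fun i => (side i).1, R.zero_eq⟩, R.cross⟩, R.cross_sq⟩, R.extra⟩,
      fun i => (side i).2⟩
  · rintro ⟨⟨⟨⟨⟨h_side, h_zero⟩, h_cross⟩, h_cross_sq⟩, h_extra⟩, h_power⟩
    exact ⟨fun i => (sideRelations_iff hn D i).2 ⟨h_side i, h_power i⟩, h_zero, h_cross,
      h_cross_sq, h_extra⟩

section map

variable {H : Type*} [Group H] (f : G →* H)

theorem map_sideShortRelators (D : Letter k → G) (i : Bool) :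
    (sideShortRelators D i).map f = sideShortRelators (f ∘ D) i := by
  simp only [sideShortRelators, List.map_append, List.map_flatMap, map_lineShortRelators,
    map_blockShortRelators, map_splitRelators, List.map_cons, List.map_nil, map_mul, map_inv,
    map_markedElement, map_sideMarked]
  rfl

theorem map_shortRelators (D : Letter k → G) :
    (shortRelators D).map f = shortRelators (f ∘ D) := by
  simp only [shortRelators, crossRelators, extraRelators, List.map_append, List.map_flatMap,
    map_sideShortRelators, List.map_map, List.map_cons, List.map_nil, map_mul, map_inv, map_pow,
    map_sideMarked, map_commutatorElement, Function.comp_def]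
  rfl

theorem map_powerRelators (P : PrimeData) (n : ℕ) (D : Letter k → G) :
    (powerRelators P n D).map f = powerRelators P n (f ∘ D) := by
  simp only [powerRelators, List.map_flatMap, map_linePowerRelators]
  rfl

end map

end Relators

section Points

/-- The points of the Carmichael family: `∞, 0, …, s - 1`, which lie on both lines, the remaining
points `s, …, p - 1` of either line, and the extra points. -/
abbrev Point (P : PrimeData) (k : ℕ) :=
  Option {i : ZMod P.p // i.val < P.s} ⊕ (Bool × {i : ZMod P.p // P.s ≤ i.val}) ⊕ Fin k

variable {P : PrimeData} {k : ℕ}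

instance : DecidableEq (Point P k) := instDecidableEqSum

/-- The two projective lines in the set of points. -/
def linePoint (P : PrimeData) (k : ℕ) (i : Bool) : Option (ZMod P.p) → Point P k
  | none => .inl none
  | some z => if hz : z.val < P.s then .inl (some ⟨z, hz⟩) else .inr (.inl (i, ⟨z, not_lt.1 hz⟩))

theorem linePoint_low (i : Bool) (z : Option {z : ZMod P.p // z.val < P.s}) :
    linePoint P k i (z.map (↑)) = .inl z := by
  rcases z with _ | ⟨z, hz⟩
  · rfl
  · simp [linePoint, hz]

@[simp]
theorem linePoint_high (i : Bool) (z : {z : ZMod P.p // P.s ≤ z.val}) :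
    linePoint P k i (some z) = .inr (.inl (i, z)) := by
  simp [linePoint, not_lt.2 z.2]

theorem inl_mem_range_linePoint (i : Bool) (z : Option {z : ZMod P.p // z.val < P.s}) :
    (.inl z : Point P k) ∈ Set.range (linePoint P k i) := ⟨_, linePoint_low i z⟩

theorem linePoint_injective (i : Bool) : Function.Injective (linePoint P k i) := by
  have hleft : Function.LeftInverse
      (Sum.elim (Option.map (↑)) (Sum.elim (fun z => some (z.2 : ZMod P.p)) fun _ => none))
      (linePoint P k i) := by
    rintro (_ | z)
    · rfl
    · by_cases hz : z.val < P.s <;> simp [linePoint, hz]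
  exact hleft.injective

/-- The members of the Carmichael family at all the points. -/
def pointFamily {G : Type*} [Group G] (P : PrimeData) (D : Letter k → G) : Point P k → G
  | .inl z => lineFamily P.p (mainLine D false) (D .x) (z.map (↑))
  | .inr (.inl (i, z)) => lineFamily P.p (mainLine D i) (D .x) (some z)
  | .inr (.inr j) => D (.extra j)

theorem map_pointFamily {G H : Type*} [Group G] [Group H] (f : G →* H) (D : Letter k → G)
    (ω : Point P k) : f (pointFamily P D ω) = pointFamily P (f ∘ D) ω := by
  rcases ω with z | ⟨i, z⟩ | j
  exacts [map_lineFamily f _ _ _ _, map_lineFamily f _ _ _ (some z.1), rfl]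

end Points

theorem sq_mul_eq_one_comm {G : Type*} [Group G] {y z : G} (h : (y * z) ^ 2 = 1) :
    (z * y) ^ 2 = 1 := by
  rw [show z * y = z * (y * z) * z⁻¹ by group, conj_pow, h, mul_one, mul_inv_cancel]

theorem mem_normalizer_range_of_commute {G Ω Ω' : Type*} [Group G] {Y : Ω → G} {L : Ω' → Ω} {y : G}
    (hy : y ∈ Subgroup.normalizer (Set.range (Y ∘ L)))
    (h_commute : ∀ ω ∉ Set.range L, Commute y (Y ω)) :
    y ∈ Subgroup.normalizer (Set.range Y) := by
  have range_eq : Set.range Y = Set.range (Y ∘ L) ∪ Y '' (Set.range L)ᶜ := by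
    rw [Set.range_comp, ← Set.image_union, Set.union_compl_self, Set.image_univ]
  rw [Subgroup.mem_normalizer_iff_conj_image_eq] at hy ⊢
  rw [range_eq, Set.image_union, hy, Set.image_image]
  congr 1
  exact Set.image_congr fun ω hω => mul_inv_eq_iff_eq_mul.2 (h_commute ω hω).eq

namespace SideRelations

variable {k : ℕ} {G : Type*} [Group G] {P : PrimeData} {D : Letter k → G} {i : Bool}

theorem mainLine (R : SideRelations P D i) : LineRelations P (mainLine D i) (D .x) :=
  (R.block false).line false

theorem range_aux_eq (R : SideRelations P D i) :
    Set.range (lineFamily P.p (sideBlock D i true false) (D .x)) =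
      Set.range (lineFamily P.p (_root_.mainLine D i) (D .x)) := by
  refine ((R.block true).line false).range_lineFamily_eq (ρ := P.lowShift * Equiv.addRight 1) ?_ ?_
    P.sameCycle_lowShift_mul_addRight
  · simpa [markedElement, sideMarked, MarkedPoint.shift] using R.aux_zero
  · intro z
    rw [R.aux_a]
    exact (R.split.conjActs_c R.mainLine).mul R.mainLine.conjActs_a (some z)

theorem mem_normalizer_range (R : SideRelations P D i) (l : SideLetter) :
    D (.side i l) ∈ Subgroup.normalizer
      (Set.range (lineFamily P.p (_root_.mainLine D i) (D .x))) := by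
  cases l with
  | d => exact (R.split.conjActs_d R.mainLine).mem_normalizer_range
  | line aux linked l =>
    have := (R.block aux).mem_normalizer_range linked l
    cases aux with
    | false => exact this
    | true => exact R.range_aux_eq ▸ this

theorem eq_one (R : SideRelations P D i) (hx : D .x = 1) :
    D .c = 1 ∧ ∀ l, D (.side i l) = 1 := by
  have block_eq_one (aux : Bool) : sideBlock D i aux = 1 := (hx ▸ R.block aux).eq_one
  have main_eq_one : _root_.mainLine D i = 1 := congrFun (block_eq_one false) false
  have hc : D .c = 1 := by simpa [block_eq_one, main_eq_one] using R.aux_a.symm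
  have hd : D (.side i .d) = 1 := by
    simpa [hx, hc, main_eq_one, threeCycleWord] using R.split.a_eq.symm
  refine ⟨hc, fun l => ?_⟩
  cases l with
  | d => exact hd
  | line aux linked l => exact congrFun (congrFun (block_eq_one aux) linked) l

end SideRelations

namespace Relations

variable {k : ℕ} {G : Type*} [Group G] {P : PrimeData} {D : Letter k → G}

theorem eq_one (R : Relations P D) (hx : D .x = 1) (h_extra : ∀ j, D (.extra j) = 1) : D = 1 := by
  funext l
  cases l with
  | side i l => exact ((R.side i).eq_one hx).2 l
  | c => exact ((R.side false).eq_one hx).1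
  | x => exact hx
  | extra j => exact h_extra j

theorem lineFamily_eq_of_lt (R : Relations P D) {z : ZMod P.p} (hz : z.val < P.s) (i : Bool) :
    lineFamily P.p (mainLine D i) (D .x) (some z) =
      lineFamily P.p (mainLine D false) (D .x) (some z) := by
  cases i with
  | false => rfl
  | true =>
    obtain ⟨n, rfl⟩ := (PrimeData.sameCycle_lowShift hz).exists_nat_pow_eq
    have zero_eq := R.zero_eq
    have conj (i : Bool) := ((R.side i).split.conjActs_c (R.side i).mainLine).pow n (some 0)
    simp only [sideMarked, (R.side _).mainLine.markedElement_eq, MarkedPoint.val] at zero_eq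
    simp only [← map_pow, optionCongrHom_some] at conj
    have conj_true := conj true
    rw [zero_eq] at conj_true
    exact mul_right_cancel (conj_true.eq.symm.trans (conj false).eq)

theorem pointFamily_linePoint (R : Relations P D) (i : Bool) (z : Option (ZMod P.p)) :
    pointFamily P D (linePoint P k i z) = lineFamily P.p (mainLine D i) (D .x) z := by
  rcases z with _ | z
  · rfl
  by_cases hz : z.val < P.s
  · simpa [linePoint, hz, pointFamily] using (R.lineFamily_eq_of_lt hz i).symm
  · simp [linePoint, hz, pointFamily]

/-- The points `s, …, p - 2` of a main line are an orbit of its `d`. -/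
theorem exists_semiconjBy (R : Relations P D) (i : Bool) {z : ZMod P.p} (hz : P.s ≤ z.val) :
    ∃ q ∈ [MarkedPoint.s, .negOne], ∃ n : ℕ, SemiconjBy (D (.side i .d) ^ n) (sideMarked D i q)
      (lineFamily P.p (mainLine D i) (D .x) (some z)) := by
  have h_marked (q : MarkedPoint) := (R.side i).mainLine.markedElement_eq q
  by_cases hz' : z = -1
  · refine ⟨.negOne, by simp, 0, ?_⟩
    rw [sideMarked, h_marked, hz', pow_zero]
    exact .one_left _
  · have hd := (R.side i).split.conjActs_d (R.side i).mainLine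
    obtain ⟨n, hn⟩ :=
      hd.exists_pow_semiconjBy (optionCongrHom_sameCycle (PrimeData.sameCycle_highShift hz hz'))
    refine ⟨.s, by simp, n, ?_⟩
    rw [sideMarked, h_marked]
    exact hn

theorem commute_side_marked (R : Relations P D) (i : Bool) (l : SideLetter) {q : MarkedPoint}
    (hq : q ∈ [MarkedPoint.s, .negOne]) : Commute (D (.side i l)) (sideMarked D (!i) q) := by
  simp only [List.mem_cons, List.not_mem_nil, or_false] at hq
  rcases hq with rfl | rfl
  exacts [(R.cross i).commute_s l, (R.cross i).commute_negOne l]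

theorem commute_side_high (R : Relations P D) (i : Bool) (l : SideLetter) {z : ZMod P.p}
    (hz : P.s ≤ z.val) :
    Commute (D (.side i l)) (lineFamily P.p (mainLine D (!i)) (D .x) (some z)) := by
  obtain ⟨q, hq, n, hn⟩ := R.exists_semiconjBy (!i) hz
  have commute_d := ((R.cross i).commute_d l).pow_right n
  rw [← mul_inv_eq_iff_eq_mul.2 hn.eq]
  exact (commute_d.mul_right (R.commute_side_marked i l hq)).mul_right commute_d.inv_right

theorem commute_c_high (R : Relations P D) (i : Bool) {z : ZMod P.p} (hz : P.s ≤ z.val) :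
    Commute (D .c) (lineFamily P.p (mainLine D i) (D .x) (some z)) := by
  have := (R.side i).split.conjActs_c (R.side i).mainLine (some z)
  rwa [optionCongrHom_some, PrimeData.lowShift_of_le hz] at this

theorem mul_sq_linePoint (R : Relations P D) {i : Bool} {ω ω' : Point P k}
    (hω : ω ∈ Set.range (linePoint P k i)) (hω' : ω' ∈ Set.range (linePoint P k i))
    (hne : ω ≠ ω') : (pointFamily P D ω * pointFamily P D ω') ^ 2 = 1 := by
  obtain ⟨⟨z, rfl⟩, z', rfl⟩ := And.intro hω hω'
  simpa only [R.pointFamily_linePoint] using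
    (R.side i).mainLine.isCarmichael_lineFamily.mul_sq z z' (ne_of_apply_ne _ hne)

theorem mul_sq_high (R : Relations P D) (i : Bool) (z z' : {z : ZMod P.p // P.s ≤ z.val}) :
    (pointFamily P D (.inr (.inl (i, z))) * pointFamily P D (.inr (.inl (!i, z')))) ^ 2 = 1 := by
  obtain ⟨q, hq, n, hn⟩ := R.exists_semiconjBy i z.2
  obtain ⟨q', hq', n', hn'⟩ := R.exists_semiconjBy (!i) z'.2
  have marked_sq : (sideMarked D i q * sideMarked D (!i) q') ^ 2 = 1 := by
    cases i with
    | false => exact R.cross_sq q hq q' hq'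
    | true => exact sq_mul_eq_one_comm (R.cross_sq q' hq' q hq)
  have commute_marked : Commute (D (.side (!i) .d) ^ n') (sideMarked D i q) := by
    simpa using (R.commute_side_marked (!i) .d (by simpa using hq)).pow_left n'
  exact sq_mul_eq_one_of_semiconjBy hn ((R.commute_side_high i .d z'.2).pow_left n)
    (sq_mul_eq_one_of_semiconjBy commute_marked hn' marked_sq)

theorem mul_sq_extra_lineFamily (R : Relations P D) (j : Fin k) (i : Bool)
    (z : Option (ZMod P.p)) :
    (D (.extra j) * lineFamily P.p (mainLine D i) (D .x) z) ^ 2 = 1 := by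
  have commute_line (l : LineLetter) : Commute (mainLine D i l) (D (.extra j)) :=
    (R.extra.commute_side j i (.line false false l)).symm
  rcases z with _ | z
  · exact R.extra.mul_x_sq j
  · have conj : SemiconjBy (mainLine D i .a ^ z.val * mainLine D i .t) (D .x)
        (lineFamily P.p (mainLine D i) (D .x) (some z)) := by
      simp [SemiconjBy, lineFamily, mul_assoc]
    exact sq_mul_eq_one_of_semiconjBy (((commute_line .a).pow_left _).mul_left (commute_line .t))
      conj (R.extra.mul_x_sq j)

theorem mul_sq_extra (R : Relations P D) (j : Fin k) {ω : Point P k} (hω : .inr (.inr j) ≠ ω) :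
    (D (.extra j) * pointFamily P D ω) ^ 2 = 1 := by
  rcases ω with z | ⟨i, z⟩ | j'
  exacts [R.mul_sq_extra_lineFamily j false _, R.mul_sq_extra_lineFamily j i (some z),
    R.extra.mul_sq j j' (by simpa using hω)]

theorem isCarmichael_pointFamily (R : Relations P D) : IsCarmichael (pointFamily P D) where
  pow_three
    | .inl _ => (R.side false).mainLine.isCarmichael_lineFamily.pow_three _
    | .inr (.inl (i, z)) => (R.side i).mainLine.isCarmichael_lineFamily.pow_three (some z)
    | .inr (.inr j) => R.extra.pow_three j
  mul_sq
    | .inl _, .inl _, h =>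
      R.mul_sq_linePoint (inl_mem_range_linePoint false _) (inl_mem_range_linePoint false _) h
    | .inl _, .inr (.inl (i, _)), h =>
      R.mul_sq_linePoint (inl_mem_range_linePoint i _) ⟨_, linePoint_high i _⟩ h
    | .inr (.inl (i, _)), .inl _, h =>
      R.mul_sq_linePoint ⟨_, linePoint_high i _⟩ (inl_mem_range_linePoint i _) h
    | .inr (.inl (i, _)), .inr (.inl (i', _)), h => by
      obtain rfl | rfl := Bool.eq_or_eq_not i' i
      exacts [R.mul_sq_linePoint ⟨_, linePoint_high _ _⟩ ⟨_, linePoint_high _ _⟩ h,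
        R.mul_sq_high _ _ _]
    | .inr (.inr j), _, h => R.mul_sq_extra j h
    | _, .inr (.inr j), h => sq_mul_eq_one_comm (R.mul_sq_extra j h.symm)

theorem mem_normalizer_range_of_commute_extra (R : Relations P D) (i : Bool) {y : G}
    (h_line : y ∈ Subgroup.normalizer (Set.range (lineFamily P.p (mainLine D i) (D .x))))
    (h_high : ∀ z : ZMod P.p, P.s ≤ z.val →
      Commute y (lineFamily P.p (mainLine D (!i)) (D .x) (some z)))
    (h_extra : ∀ j, Commute y (D (.extra j))) :
    y ∈ Subgroup.normalizer (Set.range (pointFamily P D)) := by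
  have comp_linePoint : pointFamily P D ∘ linePoint P k i = lineFamily P.p (mainLine D i) (D .x) :=
    funext (R.pointFamily_linePoint i)
  refine mem_normalizer_range_of_commute (L := linePoint P k i) (comp_linePoint ▸ h_line) ?_
  rintro (z | ⟨i', z⟩ | j) hω
  · exact absurd (inl_mem_range_linePoint i z) hω
  · obtain rfl | rfl := Bool.eq_or_eq_not i' i
    exacts [absurd ⟨_, linePoint_high _ z⟩ hω, h_high z z.2]
  · exact h_extra j

theorem closure_pointFamily_normal (R : Relations P D) (hD : Subgroup.closure (Set.range D) = ⊤) :
    (Subgroup.closure (Set.range (pointFamily P D))).Normal := by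
  have le_normalizer := Subgroup.normalizer_le_normalizer_closure (Set.range (pointFamily P D))
  have mem_normalizer_of_point (ω : Point P k) : pointFamily P D ω ∈
      Subgroup.normalizer (Subgroup.closure (Set.range (pointFamily P D)) : Set G) :=
    Subgroup.le_normalizer (Subgroup.subset_closure ⟨ω, rfl⟩)
  rw [← Subgroup.normalizer_eq_top_iff, eq_top_iff, ← hD, Subgroup.closure_le]
  rintro _ ⟨l, rfl⟩
  cases l with
  | side i l =>
    exact le_normalizer <| R.mem_normalizer_range_of_commute_extra i
      ((R.side i).mem_normalizer_range l) (fun _ => R.commute_side_high i l)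
      fun j => (R.extra.commute_side j i l).symm
  | c =>
    exact le_normalizer <| R.mem_normalizer_range_of_commute_extra false
      ((R.side false).split.conjActs_c (R.side false).mainLine).mem_normalizer_range
      (fun _ => R.commute_c_high true) fun j => (R.extra.commute_c j).symm
  | x => exact mem_normalizer_of_point (.inl none)
  | extra j => exact mem_normalizer_of_point (.inr (.inr j))

theorem map {H : Type*} [Group H] (R : Relations P D) (f : G →* H) : Relations P (f ∘ D) := by
  obtain ⟨n, hn⟩ : ∃ n, P.p < 4 ^ n := ⟨P.p, Nat.lt_pow_self (by norm_num)⟩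
  rw [relations_iff hn] at R ⊢
  rw [← map_shortRelators, ← map_powerRelators, List.forall_mem_map, List.forall_mem_map]
  exact ⟨fun y hy => by rw [R.1 y hy, map_one], fun y hy => by rw [R.2 y hy, map_one]⟩

/- The quotient by the normal subgroup generated by the family is trivial, since the relations with
`x = 1` and no extra points have only the trivial solution. -/
theorem closure_pointFamily (R : Relations P D) (hD : Subgroup.closure (Set.range D) = ⊤) :
    Subgroup.closure (Set.range (pointFamily P D)) = ⊤ := by
  set N := Subgroup.closure (Set.range (pointFamily P D))
  have : N.Normal := R.closure_pointFamily_normal hD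
  have mk_eq_one (ω : Point P k) : QuotientGroup.mk' N (pointFamily P D ω) = 1 :=
    (QuotientGroup.eq_one_iff _).2 (Subgroup.subset_closure ⟨ω, rfl⟩)
  have mk_comp_eq_one : QuotientGroup.mk' N ∘ D = 1 :=
    (R.map _).eq_one (mk_eq_one (.inl none)) fun j => mk_eq_one (.inr (.inr j))
  rw [eq_top_iff, ← hD, Subgroup.closure_le]
  rintro _ ⟨l, rfl⟩
  exact (QuotientGroup.eq_one_iff _).1 (congrFun mk_comp_eq_one l)

end Relations

/-! ### The permutation model -/

section ProjectiveLine

variable {F : Type*} [Field F]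

theorem lineTranslation_one_pow (n : ℕ) :
    lineTranslation (1 : F) ^ n = lineTranslation (n : F) := by
  induction n with
  | zero => rw [pow_zero, Nat.cast_zero, lineTranslation_zero]
  | succ n ih => rw [pow_succ, ih, lineTranslation_mul, Nat.cast_succ]

theorem lineDilation_conj_lineTranslation (u : Fˣ) (c : F) :
    lineDilation u * lineTranslation c * (lineDilation u)⁻¹ = lineTranslation (u * c) := by
  rw [mul_inv_eq_iff_eq_mul]
  ext1 (_ | i) <;> simp [mul_add]

variable [DecidableEq F]

theorem lineNegInv_mul_self : lineNegInv F * lineNegInv F = 1 := by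
  ext1 z
  exact negInv_involutive z

theorem lineNegInv_mul_lineTranslation_pow_three :
    (lineNegInv F * lineTranslation (1 : F)) ^ 3 = 1 := by
  ext1 (_ | i)
  · simp [pow_succ, lineNegInv_some]
  by_cases h₁ : i + 1 = 0
  · simp [pow_succ, lineNegInv_some, eq_neg_of_add_eq_zero_left h₁]
  by_cases h₀ : i = 0
  · simp [pow_succ, h₀, lineNegInv_some]
  have first : -(i + 1)⁻¹ + 1 = i * (i + 1)⁻¹ := by field_simp; ring
  have second : -(i * (i + 1)⁻¹)⁻¹ + 1 = -i⁻¹ := by field_simp; ring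
  simp only [pow_succ, pow_zero, one_mul, Perm.mul_apply, Perm.one_apply, lineTranslation_some]
  rw [lineNegInv_some h₁, lineTranslation_some, first,
    lineNegInv_some (mul_ne_zero h₀ (inv_ne_zero h₁)), lineTranslation_some, second,
    lineNegInv_some (neg_ne_zero.mpr (inv_ne_zero h₀)), inv_neg, inv_inv, neg_neg]

theorem lineNegInv_mul_lineDilation_sq (u : Fˣ) :
    lineNegInv F * lineDilation u * lineNegInv F * lineDilation u = 1 := by
  ext1 (_ | i)
  · simp
  by_cases hi : i = 0
  · simp [hi]
  · simp [lineNegInv_some, hi, mul_comm _ i]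

theorem lineDilation_sq_eq (u : Fˣ) :
    lineDilation (u ^ 2) = lineTranslation (u : F) * lineNegInv F *
      lineTranslation ((u⁻¹ : Fˣ) : F) * lineNegInv F * lineTranslation (u : F) *
      lineNegInv F := by
  have hu : (u : F) ≠ 0 := u.ne_zero
  ext1 (_ | i)
  · simp [lineNegInv_some]
  by_cases h₀ : i = 0
  · simp [h₀, lineNegInv_some]
  simp only [Perm.mul_apply, lineDilation_some, lineNegInv_some h₀, lineTranslation_some,
    Units.val_pow_eq_pow_val, Units.val_inv_eq_inv_val]
  by_cases h₁ : u * i - 1 = 0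
  · have first : -i⁻¹ + (u : F) = 0 := by field_simp; linear_combination h₁
    rw [first, lineNegInv_zero, lineTranslation_none, lineNegInv_none, lineTranslation_some]
    congr 1
    linear_combination (u : F) * h₁
  · have first : -i⁻¹ + (u : F) = (u * i - 1) * i⁻¹ := by field_simp; ring
    have second : -((u * i - 1) * i⁻¹)⁻¹ + (u : F)⁻¹ = -(u * (u * i - 1))⁻¹ := by
      field_simp
      ring
    rw [first, lineNegInv_some (mul_ne_zero h₁ (inv_ne_zero h₀)), lineTranslation_some, second,
      lineNegInv_some (neg_ne_zero.mpr (inv_ne_zero (mul_ne_zero hu h₁))), lineTranslation_some,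
      inv_neg, neg_neg, inv_inv]
    congr 1
    ring

end ProjectiveLine

/-- The intended model of the letters of one line. -/
def lineModel (P : PrimeData) : LineGens (Perm (Option (ZMod P.p)))
  | .a => lineTranslation 1
  | .t => lineNegInv _
  | .h => lineDilation P.four
  | .b => lineDilation (P.g ^ 2)
  | .u => lineTranslation P.g
  | .v => lineTranslation (P.g⁻¹ : (ZMod P.p)ˣ)
  | .w => lineTranslation (P.g ^ 2 : (ZMod P.p)ˣ)
  | .r => lineTranslation P.s

theorem LineRelations.map {G H : Type*} [Group G] [Group H] {P : PrimeData} {T : LineGens G} {x : G}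
    (R : LineRelations P T x) (f : G →* H) : LineRelations P (f ∘ T) (f x) := by
  obtain ⟨n, hn⟩ : ∃ n, P.p < 4 ^ n := ⟨P.p, Nat.lt_pow_self (by norm_num)⟩
  rw [lineRelations_iff hn] at R ⊢
  rw [← map_lineShortRelators, ← map_linePowerRelators, List.forall_mem_map, List.forall_mem_map]
  exact ⟨fun y hy => by rw [R.1 y hy, map_one], fun y hy => by rw [R.2 y hy, map_one]⟩

theorem lineRelations_lineModel (P : PrimeData) : LineRelations P (lineModel P) 1 where
  t_mul_t := lineNegInv_mul_self
  t_mul_a := lineNegInv_mul_lineTranslation_pow_three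
  h_conj_a := by
    simp only [lineModel, lineDilation_conj_lineTranslation, lineTranslation_one_pow, P.val_four,
      mul_one, Nat.cast_ofNat]
  b_conj_a := by simp only [lineModel, lineDilation_conj_lineTranslation, mul_one]
  t_mul_h := lineNegInv_mul_lineDilation_sq _
  t_mul_b := lineNegInv_mul_lineDilation_sq _
  h_eq := by
    have conj_inv : (lineDilation P.four)⁻¹ * lineTranslation 2 * lineDilation P.four =
        lineTranslation (((Units.mk0 2 P.two_ne_zero)⁻¹ : (ZMod P.p)ˣ) : ZMod P.p) := by
      rw [mul_assoc, inv_mul_eq_iff_eq_mul, ← eq_mul_inv_iff_mul_eq,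
        lineDilation_conj_lineTranslation, ← Units.val_mul, PrimeData.four, pow_two,
        mul_inv_cancel_right, Units.val_mk0]
    simp only [lineModel, lineTranslation_one_pow, Nat.cast_ofNat, conj_inv]
    exact lineDilation_sq_eq (Units.mk0 2 P.two_ne_zero)
  b_eq := by
    exact lineDilation_sq_eq P.g
  x_pow_three := one_pow _
  mul_conj_sq := by simp
  commute_a := .one_left _
  commute_h := .one_left _
  commute_b := .one_left _
  a_pow := by simp [lineModel, lineTranslation_one_pow, lineTranslation_zero]
  u_eq := by simp [lineModel, lineTranslation_one_pow]
  v_eq := by simp only [lineModel, lineTranslation_one_pow, ZMod.natCast_zmod_val]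
  w_eq := by simp only [lineModel, lineTranslation_one_pow, ZMod.natCast_zmod_val]
  r_eq := by simp [lineModel, lineTranslation_one_pow]

/-- A homomorphism from the permutations of the projective line, together with a Carmichael family
indexed by the line which it permutes and whose three-cycle words it represents correctly. -/
structure LineAction (P : PrimeData) {G : Type*} [Group G] (f : Perm (Option (ZMod P.p)) →* G)
    (Y : Option (ZMod P.p) → G) : Prop where
  isCarmichael : IsCarmichael Y
  conjActs (σ : Perm (Option (ZMod P.p))) : ConjActs (f σ) Y σ
  threeCycleWord_eq {z₁ z₂ z₃ : Option (ZMod P.p)} (h₁ : z₁ ≠ z₂) (h₂ : z₂ ≠ z₃) :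
    threeCycleWord (Y z₁) (Y z₂) (Y z₃) = f (swap z₁ z₂ * swap z₂ z₃)

namespace LineAction

variable {P : PrimeData} {G : Type*} [Group G] {f : Perm (Option (ZMod P.p)) →* G}
  {Y : Option (ZMod P.p) → G}

theorem conj_eq (A : LineAction P f Y) (σ : Perm (Option (ZMod P.p))) (z : Option (ZMod P.p)) :
    f σ * Y z * (f σ)⁻¹ = Y (σ z) := mul_inv_eq_iff_eq_mul.2 (A.conjActs σ z).eq

theorem comp_conj (A : LineAction P f Y) (ρ : Perm (Option (ZMod P.p))) :
    LineAction P (f.comp (MulAut.conj ρ).toMonoidHom) (Y ∘ ρ) where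
  isCarmichael := ⟨fun z => A.isCarmichael.pow_three _,
    fun _ _ h => A.isCarmichael.mul_sq _ _ (ρ.injective.ne h)⟩
  conjActs σ z := by simpa using A.conjActs (ρ * σ * ρ⁻¹) (ρ z)
  threeCycleWord_eq h₁ h₂ := by
    have := A.threeCycleWord_eq (ρ.injective.ne h₁) (ρ.injective.ne h₂)
    simpa [swap_apply_apply] using this

theorem commute_none (A : LineAction P f Y) (σ : Perm (ZMod P.p)) :
    Commute (Y none) (f (optionCongrHom σ)) :=
  (A.conjActs (optionCongrHom σ) none).symm

theorem commute_some (A : LineAction P f Y) {σ : Perm (ZMod P.p)} {i : ZMod P.p} (h : σ i = i) :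
    Commute (f (optionCongrHom σ)) (Y (some i)) := by
  have := A.conjActs (optionCongrHom σ) (some i)
  rwa [optionCongrHom_some, h] at this

theorem lineRelations (A : LineAction P f Y) : LineRelations P (f ∘ lineModel P) (Y none) where
  __ := (lineRelations_lineModel P).map f
  x_pow_three := A.isCarmichael.pow_three none
  mul_conj_sq := by
    rw [Function.comp_apply, A.conj_eq, lineModel, lineNegInv_none]
    exact A.isCarmichael.mul_sq _ _ (Option.some_ne_none _).symm
  commute_a := A.commute_none _
  commute_h := A.commute_none _
  commute_b := A.commute_none _

theorem lineFamily_eq (A : LineAction P f Y) (z : Option (ZMod P.p)) :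
    lineFamily P.p (f ∘ lineModel P) (Y none) z = Y z := by
  rcases z with _ | i
  · rfl
  · rw [lineFamily, Function.comp_apply, Function.comp_apply, A.conj_eq, ← map_pow, A.conj_eq,
      lineModel, lineModel, lineTranslation_one_pow, lineNegInv_none, lineTranslation_some,
      zero_add, ZMod.natCast_zmod_val]

theorem markedElement_eq (A : LineAction P f Y) (q : MarkedPoint) :
    markedElement (f ∘ lineModel P) (Y none) q = Y (some (q.val P)) := by
  rw [A.lineRelations.markedElement_eq, A.lineFamily_eq]

end LineAction

theorem exists_conj_addRight_one {n : ℕ} [NeZero n] {τ : Perm (ZMod n)}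
    (hτ : ∀ i, τ.SameCycle 0 i) :
    ∃ ρ : Perm (ZMod n), ρ 0 = 0 ∧ ρ * Equiv.addRight 1 * ρ⁻¹ = τ := by
  have cycle : τ.IsCycleOn (Finset.univ : Finset (ZMod n)) := by
    rw [Finset.coe_univ]
    exact ⟨τ.bijective.bijOn_univ, fun i _ j _ => (hτ i).symm.trans (hτ j)⟩
  have pow_eq_one : τ ^ n = 1 := by
    ext1 i
    simpa [ZMod.card] using cycle.pow_card_apply (Finset.mem_univ i)
  have surjective : Function.Surjective fun i : ZMod n => (τ ^ i.val) 0 := fun j => by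
    obtain ⟨m, hm, h⟩ := cycle.exists_pow_eq (Finset.mem_univ 0) (Finset.mem_univ j)
    rw [Finset.card_univ, ZMod.card] at hm
    exact ⟨m, by simpa only [ZMod.val_cast_of_lt hm] using h⟩
  refine ⟨Equiv.ofBijective _ surjective.bijective_of_finite, by simp, ?_⟩
  rw [mul_inv_eq_iff_eq_mul]
  ext1 i
  have val_succ : (i + 1).val = (i.val + 1) % n := by rw [← ZMod.val_natCast]; simp
  simp [val_succ, ← pow_eq_pow_mod _ pow_eq_one, pow_succ']

namespace PrimeData

variable (P : PrimeData)

/-- A relabelling of the projective line fixing `∞` and `0` that turns the unit translation into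
`linkPerm`. -/
noncomputable def linkConj : Perm (Option (ZMod P.p)) :=
  optionCongrHom (exists_conj_addRight_one P.sameCycle_linkPerm).choose

/-- A relabelling of the projective line fixing `∞` and `0` that turns the unit translation into
`lowShift * addRight 1`. -/
noncomputable def auxConj : Perm (Option (ZMod P.p)) :=
  optionCongrHom (exists_conj_addRight_one P.sameCycle_lowShift_mul_addRight).choose

theorem linkConj_zero : P.linkConj (some 0) = some 0 := by
  rw [linkConj, optionCongrHom_some,
    (exists_conj_addRight_one P.sameCycle_linkPerm).choose_spec.1]

theorem auxConj_zero : P.auxConj (some 0) = some 0 := by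
  rw [auxConj, optionCongrHom_some,
    (exists_conj_addRight_one P.sameCycle_lowShift_mul_addRight).choose_spec.1]

theorem linkConj_conj :
    P.linkConj * lineTranslation 1 * P.linkConj⁻¹ = optionCongrHom P.linkPerm := by
  rw [linkConj, lineTranslation, ← map_inv, ← map_mul, ← map_mul,
    (exists_conj_addRight_one P.sameCycle_linkPerm).choose_spec.2]

theorem auxConj_conj :
    P.auxConj * lineTranslation 1 * P.auxConj⁻¹ =
      optionCongrHom P.lowShift * lineTranslation 1 := by
  rw [auxConj, lineTranslation, ← map_inv, ← map_mul, ← map_mul,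
    (exists_conj_addRight_one P.sameCycle_lowShift_mul_addRight).choose_spec.2, map_mul]

end PrimeData

/-- The intended model of the letters of one block. -/
noncomputable def blockModel (P : PrimeData) : BlockGens (Perm (Option (ZMod P.p)))
  | false => lineModel P
  | true => MulAut.conj P.linkConj ∘ lineModel P

/-- The intended model of the letters of one side. -/
noncomputable def sideModel (P : PrimeData) : SideLetter → Perm (Option (ZMod P.p))
  | .line false linked l => blockModel P linked l
  | .line true linked l => MulAut.conj P.auxConj (blockModel P linked l)
  | .d => optionCongrHom P.highShift

namespace LineAction

variable {P : PrimeData} {G : Type*} [Group G] {f : Perm (Option (ZMod P.p)) →* G}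
  {Y : Option (ZMod P.p) → G}

theorem blockRelations (A : LineAction P f Y) :
    BlockRelations P (fun linked => f ∘ blockModel P linked) (Y none) where
  line
    | false => A.lineRelations
    | true => (A.comp_conj P.linkConj).lineRelations
  zero_eq := ((A.comp_conj P.linkConj).markedElement_eq .zero).trans <|
    (congrArg Y P.linkConj_zero).trans (A.markedElement_eq .zero).symm
  a_eq := by
    simp only [blockModel, A.markedElement_eq, MarkedPoint.val]
    rw [A.threeCycleWord_eq (by simp) (by simpa using P.g_ne_one.symm)]
    simp only [Function.comp_apply, lineModel, MulAut.conj_apply, P.linkConj_conj, ← map_mul]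
    simp [PrimeData.linkPerm, lineDilation]

theorem splitRelations (A : LineAction P f Y) :
    SplitRelations (f ∘ lineModel P) (Y none) (f (optionCongrHom P.lowShift))
      (f (optionCongrHom P.highShift)) where
  a_eq := by
    simp only [A.markedElement_eq, MarkedPoint.val]
    rw [A.threeCycleWord_eq (by simpa using P.s_sub_one_ne_neg_two)
      (by simpa using P.neg_two_ne_neg_one), ← optionCongrHom_swap, ← optionCongrHom_swap]
    simp only [← map_mul]
    exact congrArg (f ∘ optionCongrHom) P.lowShift_mul_highShift_mul_splitCycle.symm
  commute_c_d := (P.disjoint_lowShift_highShift.commute.map _).map f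
  commute_d_x := (A.commute_none _).symm
  commute_d_zero := by
    rw [A.markedElement_eq]
    exact A.commute_some (PrimeData.highShift_of_lt (by
      simpa only [MarkedPoint.val, ZMod.val_zero] using P.s_odd.pos))
  commute_c_s := by
    rw [A.markedElement_eq]
    exact A.commute_some (PrimeData.lowShift_of_le P.s_le_val_s)
  commute_c_negOne := by
    rw [A.markedElement_eq]
    exact A.commute_some (PrimeData.lowShift_of_le P.s_le_val_neg_one)

theorem sideRelations {k : ℕ} {D : Letter k → G} {i : Bool} (A : LineAction P f Y)
    (h_side : ∀ l, D (.side i l) = f (sideModel P l)) (h_x : D .x = Y none)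
    (h_c : D .c = f (optionCongrHom P.lowShift)) : SideRelations P D i := by
  have main : sideBlock D i false = fun linked => f ∘ blockModel P linked := by
    funext linked l
    exact h_side _
  have aux : sideBlock D i true =
      fun linked => f.comp (MulAut.conj P.auxConj).toMonoidHom ∘ blockModel P linked := by
    funext linked l
    exact h_side _
  have main_line : mainLine D i = f ∘ lineModel P := congrFun main false
  have A_aux := A.comp_conj P.auxConj
  constructor
  · rintro (_ | _)
    · rw [main, h_x]
      exact A.blockRelations
    · rw [aux, h_x]
      exact A_aux.blockRelations
  · rw [main_line, h_x, h_c, h_side]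
    exact A.splitRelations
  · rw [main_line, h_c, aux]
    simp [blockModel, lineModel, P.auxConj_conj]
  · rw [sideMarked, main_line, aux, h_x, A.markedElement_eq]
    exact (A_aux.markedElement_eq .zero).trans (congrArg Y P.auxConj_zero)

end LineAction

section Model

variable {P : PrimeData} {k : ℕ}

theorem inr_inl_notMem_range_linePoint {i i' : Bool} (h : i' ≠ i)
    (z : {z : ZMod P.p // P.s ≤ z.val}) :
    (.inr (.inl (i', z)) : Point P k) ∉ Set.range (linePoint P k i) := by
  rintro ⟨_ | w, hw⟩
  · simp [linePoint] at hw
  · by_cases hlt : w.val < P.s <;> simp [linePoint, hlt, h.symm] at hw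

theorem inr_inr_notMem_range_linePoint (i : Bool) (j : Fin k) :
    (.inr (.inr j) : Point P k) ∉ Set.range (linePoint P k i) := by
  rintro ⟨_ | w, hw⟩
  · simp [linePoint] at hw
  · by_cases hlt : w.val < P.s <;> simp [linePoint, hlt] at hw

variable (P k) in
/-- Permutations of a projective line as permutations of all the points. -/
noncomputable def linePerm (i : Bool) : Perm (Option (ZMod P.p)) →* Perm (Point P k) :=
  Perm.viaEmbeddingHom ⟨linePoint P k i, linePoint_injective i⟩

@[simp]
theorem linePerm_linePoint (i : Bool) (σ : Perm (Option (ZMod P.p))) (z : Option (ZMod P.p)) :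
    linePerm P k i σ (linePoint P k i z) = linePoint P k i (σ z) :=
  Perm.viaEmbedding_apply σ ⟨linePoint P k i, linePoint_injective i⟩ z

theorem linePerm_of_notMem_range {i : Bool} (σ : Perm (Option (ZMod P.p))) {ω : Point P k}
    (hω : ω ∉ Set.range (linePoint P k i)) : linePerm P k i σ ω = ω :=
  Perm.viaEmbedding_apply_of_notMem σ ⟨linePoint P k i, linePoint_injective i⟩ ω hω

theorem linePerm_swap (i : Bool) (z w : Option (ZMod P.p)) :
    linePerm P k i (swap z w) = swap (linePoint P k i z) (linePoint P k i w) := by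
  ext1 ω
  by_cases hω : ω ∈ Set.range (linePoint P k i)
  · obtain ⟨v, rfl⟩ := hω
    rw [linePerm_linePoint, (linePoint_injective i).swap_apply]
  · rw [linePerm_of_notMem_range _ hω, swap_apply_of_ne_of_ne] <;>
      exact fun h => hω ⟨_, h.symm⟩

theorem linePerm_lowShift_inl (i : Bool) (z : {z : ZMod P.p // z.val < P.s}) :
    linePerm P k i (optionCongrHom P.lowShift) (.inl (some z)) =
      .inl (some ⟨P.lowShift z, P.lowShift_val_lt z.2⟩) := by
  rw [← linePoint_low i, linePerm_linePoint, ← linePoint_low i]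
  rfl

theorem linePerm_lowShift_inr (i : Bool) (ω : (Bool × {z : ZMod P.p // P.s ≤ z.val}) ⊕ Fin k) :
    linePerm P k i (optionCongrHom P.lowShift) (.inr ω) = .inr ω := by
  rcases ω with ⟨i', z⟩ | j
  · obtain rfl | h := eq_or_ne i' i
    · rw [← linePoint_high, linePerm_linePoint, optionCongrHom_some, PrimeData.lowShift_of_le z.2]
    · exact linePerm_of_notMem_range _ (inr_inl_notMem_range_linePoint h z)
  · exact linePerm_of_notMem_range _ (inr_inr_notMem_range_linePoint i j)

theorem linePerm_lowShift_eq (i i' : Bool) :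
    linePerm P k i (optionCongrHom P.lowShift) = linePerm P k i' (optionCongrHom P.lowShift) := by
  ext1 ((_ | z) | ω)
  · rw [← linePoint_low i none, linePerm_linePoint, linePoint_low, ← linePoint_low i',
      linePerm_linePoint]
    rfl
  · rw [linePerm_lowShift_inl, linePerm_lowShift_inl]
  · rw [linePerm_lowShift_inr, linePerm_lowShift_inr]

theorem linePerm_highShift_inl (i : Bool) (z : Option {z : ZMod P.p // z.val < P.s}) :
    linePerm P k i (optionCongrHom P.highShift) (.inl z) = .inl z := by
  rw [← linePoint_low i, linePerm_linePoint]
  rcases z with _ | z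
  · rfl
  · rw [Option.map_some, optionCongrHom_some, PrimeData.highShift_of_lt z.2]

theorem disjoint_linePerm_highShift {i i' : Bool} (h : i ≠ i') (σ : Perm (Option (ZMod P.p))) :
    (linePerm P k i (optionCongrHom P.highShift)).Disjoint (linePerm P k i' σ)
  | .inl z => .inl (linePerm_highShift_inl i z)
  | .inr (.inl (i'', z)) => by
    obtain rfl | h' := eq_or_ne i'' i
    · exact .inr (linePerm_of_notMem_range _ (inr_inl_notMem_range_linePoint h z))
    · exact .inl (linePerm_of_notMem_range _ (inr_inl_notMem_range_linePoint h' z))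
  | .inr (.inr j) => .inl (linePerm_of_notMem_range _ (inr_inr_notMem_range_linePoint i j))

theorem lineAction_carmichaelCycle (i : Bool) :
    LineAction P (fixTwoHom.comp (linePerm P k i)) (carmichaelCycle ∘ linePoint P k i) where
  isCarmichael := ⟨fun z => isCarmichael_carmichaelCycle.pow_three _,
    fun _ _ h => isCarmichael_carmichaelCycle.mul_sq _ _ ((linePoint_injective i).ne h)⟩
  conjActs σ z := by
    have := fixTwoHom_conj (linePerm P k i σ) (linePoint P k i z)
    rw [linePerm_linePoint] at this
    exact mul_inv_eq_iff_eq_mul.1 this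
  threeCycleWord_eq h₁ h₂ := by
    have inj := linePoint_injective (P := P) (k := k) i
    rw [MonoidHom.comp_apply, map_mul, linePerm_swap, linePerm_swap]
    exact threeCycleWord_carmichaelCycle (inj.ne h₁) (inj.ne h₂)

/-- The intended model of the letters. -/
noncomputable def model (P : PrimeData) (k : ℕ) : Letter k → Perm (Option (Option (Point P k)))
  | .side i l => fixTwoHom (linePerm P k i (sideModel P l))
  | .c => fixTwoHom (linePerm P k false (optionCongrHom P.lowShift))
  | .x => carmichaelCycle (.inl none)
  | .extra j => carmichaelCycle (.inr (.inr j))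

theorem sideMarked_model (i : Bool) (q : MarkedPoint) :
    sideMarked (model P k) i q = carmichaelCycle (linePoint P k i (some (q.val P))) :=
  (lineAction_carmichaelCycle i).markedElement_eq q

theorem sideRelations_model (i : Bool) : SideRelations P (model P k) i :=
  (lineAction_carmichaelCycle i).sideRelations (fun _ => rfl) rfl
    (congrArg fixTwoHom (linePerm_lowShift_eq false i))

theorem commute_side_model {i : Bool} (l : SideLetter) {ω : Point P k}
    (hω : ω ∉ Set.range (linePoint P k i)) :
    Commute (model P k (.side i l)) (carmichaelCycle ω) := by
  have := fixTwoHom_conj (linePerm P k i (sideModel P l)) ω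
  rw [linePerm_of_notMem_range _ hω] at this
  exact mul_inv_eq_iff_eq_mul.1 this

theorem MarkedPoint.s_le_val_val {q : MarkedPoint} (hq : q ∈ [MarkedPoint.s, .negOne]) :
    P.s ≤ (q.val P).val := by
  simp only [List.mem_cons, List.not_mem_nil, or_false] at hq
  rcases hq with rfl | rfl
  exacts [P.s_le_val_s, P.s_le_val_neg_one]

theorem linePoint_some_of_le (i : Bool) {z : ZMod P.p} (hz : P.s ≤ z.val) :
    linePoint P k i (some z) = .inr (.inl (i, ⟨z, hz⟩)) := linePoint_high i ⟨z, hz⟩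

theorem crossRelations_model (i : Bool) : CrossRelations (model P k) i where
  commute_s l := by
    rw [sideMarked_model, linePoint_some_of_le _ (MarkedPoint.s_le_val_val (by simp))]
    exact commute_side_model l (inr_inl_notMem_range_linePoint (by simp) _)
  commute_negOne l := by
    rw [sideMarked_model, linePoint_some_of_le _ (MarkedPoint.s_le_val_val (by simp))]
    exact commute_side_model l (inr_inl_notMem_range_linePoint (by simp) _)
  commute_d l := ((disjoint_linePerm_highShift (by simp) _).commute.symm).map fixTwoHom

theorem extraRelations_model : ExtraRelations (model P k) where
  pow_three j := isCarmichael_carmichaelCycle.pow_three _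
  mul_x_sq j := isCarmichael_carmichaelCycle.mul_sq _ _ (by simp)
  mul_sq j j' h := isCarmichael_carmichaelCycle.mul_sq _ _ (by simpa using h)
  commute_side j i l := (commute_side_model l (inr_inr_notMem_range_linePoint i j)).symm
  commute_c j := by
    have := fixTwoHom_conj (linePerm P k false (optionCongrHom P.lowShift)) (.inr (.inr j))
    rw [linePerm_lowShift_inr] at this
    exact (mul_inv_eq_iff_eq_mul.1 this).symm

variable (P k) in
theorem relations_model : Relations P (model P k) where
  side := sideRelations_model
  zero_eq := by simp [sideMarked_model, MarkedPoint.val, linePoint, P.s_odd.pos]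
  cross := crossRelations_model
  cross_sq q hq q' hq' := by
    rw [sideMarked_model, sideMarked_model, linePoint_some_of_le _ (MarkedPoint.s_le_val_val hq),
      linePoint_some_of_le _ (MarkedPoint.s_le_val_val hq')]
    exact isCarmichael_carmichaelCycle.mul_sq _ _ (by simp)
  extra := extraRelations_model

theorem pointFamily_model : ∀ ω : Point P k, pointFamily P (model P k) ω = carmichaelCycle ω
  | .inl z => ((lineAction_carmichaelCycle false).lineFamily_eq _).trans
      (congrArg carmichaelCycle (linePoint_low false z))
  | .inr (.inl (i, z)) => ((lineAction_carmichaelCycle i).lineFamily_eq (some z.1)).trans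
      (congrArg carmichaelCycle (linePoint_high i z))
  | .inr (.inr _) => rfl

end Model

/-! ### Presentations of alternating groups -/

section FreeGroup

variable {α β : Type*} [DecidableEq α] [DecidableEq β]

theorem freeGroup_norm_map_le (f : α → β) (w : FreeGroup α) :
    (FreeGroup.map f w).norm ≤ w.norm := by
  conv_lhs => rw [← FreeGroup.mk_toWord (x := w), FreeGroup.map.mk]
  exact FreeGroup.norm_mk_le.trans_eq (List.length_map _)

theorem freeGroup_norm_pow_le (w : FreeGroup α) (n : ℕ) : (w ^ n).norm ≤ n * w.norm := by
  induction n with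
  | zero => simp
  | succ n ih =>
    rw [pow_succ, add_one_mul]
    exact (FreeGroup.norm_mul_le _ _).trans (by gcongr)

theorem norm_hornerWord_le {a h : FreeGroup α} (ha : a.norm ≤ 1) (hh : h.norm ≤ 1) :
    ∀ n e : ℕ, (hornerWord a h n e).norm ≤ 5 * n
  | 0, _ => by simp [hornerWord]
  | n + 1, e => by
    have norm_digit : (a ^ (e % 4)).norm ≤ 3 :=
      (freeGroup_norm_pow_le a _).trans (by nlinarith [Nat.mod_lt e (show 4 > 0 by lia)])
    have norm_conj : (h * hornerWord a h n (e / 4) * h⁻¹).norm ≤ 5 * n + 2 := by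
      have norm_mul_left := FreeGroup.norm_mul_le h (hornerWord a h n (e / 4))
      have norm_mul_inv := FreeGroup.norm_mul_le (h * hornerWord a h n (e / 4)) h⁻¹
      rw [FreeGroup.norm_inv_eq] at norm_mul_inv
      have := norm_hornerWord_le ha hh n (e / 4)
      lia
    exact (FreeGroup.norm_mul_le _ _).trans (by lia)

theorem norm_le_of_mem_linePowerRelators (P : PrimeData) (n : ℕ) {T : LineGens (FreeGroup α)}
    (hT : ∀ l, (T l).norm ≤ 1) : ∀ w ∈ linePowerRelators P n T, w.norm ≤ 5 * n + 1 := by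
  have norm_power (e : ℕ) := norm_hornerWord_le (hT .a) (hT .h) n e
  have norm_mul_power (l : LineLetter) (e : ℕ) :
      (T l * (hornerWord (T .a) (T .h) n e)⁻¹).norm ≤ 5 * n + 1 := by
    refine (FreeGroup.norm_mul_le _ _).trans ?_
    rw [FreeGroup.norm_inv_eq]
    have := hT l
    have := norm_power e
    lia
  simp only [linePowerRelators, List.forall_mem_cons, List.not_mem_nil, false_imp_iff,
    implies_true, and_true, norm_mul_power]
  exact (norm_power _).trans (Nat.le_succ _)

theorem sum_toFinset_le_sum_map {ι : Type*} [DecidableEq ι] (f : ι → ℕ) (l : List ι) :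
    ∑ i ∈ l.toFinset, f i ≤ (l.map f).sum := by
  rw [Finset.sum_list_map_count]
  exact Finset.sum_le_sum fun i hi =>
    Nat.le_mul_of_pos_left _ (List.count_pos_iff.2 (List.mem_toFinset.1 hi))

end FreeGroup

namespace HasBoundedPresentation

variable {G H : Type} [Group G] [Group H] {g g' r r' : ℕ} {L L' : ℝ}

theorem of_list {ι : Type*} [Fintype ι] [DecidableEq ι] {π : FreeGroup ι →* G}
    {R : List (FreeGroup ι)} (hπ : Function.Surjective π)
    (h_ker : π.ker = Subgroup.normalClosure {w | w ∈ R}) (hg : Fintype.card ι ≤ g)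
    (hr : R.length ≤ r) (hL : ((Fintype.card ι + (R.map FreeGroup.norm).sum : ℕ) : ℝ) ≤ L) :
    HasBoundedPresentation G g r L := by
  classical
  let e := FreeGroup.freeGroupCongr (Fintype.equivFin ι)
  refine ⟨Fintype.card ι, π.comp e.symm.toMonoidHom, (R.map e).toFinset, hg,
    hπ.comp e.symm.surjective, (List.toFinset_card_le _).trans (by simpa using hr), ?_, ?_⟩
  · refine (MonoidHom.ker_comp_mulEquiv π e.symm).trans ?_
    rw [h_ker, e.symm_symm]
    refine (Subgroup.map_normalClosure _ e.toMonoidHom e.surjective).trans (congrArg _ ?_)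
    ext w
    simp
  · have sum_norm_map : ((R.map e).map FreeGroup.norm).sum ≤ (R.map FreeGroup.norm).sum := by
      rw [List.map_map]
      exact List.sum_le_sum fun w _ => freeGroup_norm_map_le _ w
    refine le_trans ?_ hL
    exact_mod_cast Nat.add_le_add_left ((sum_toFinset_le_sum_map _ _).trans sum_norm_map) _

theorem mono (h : HasBoundedPresentation G g r L) (hg : g ≤ g') (hr : r ≤ r') (hL : L ≤ L') :
    HasBoundedPresentation G g' r' L' := by
  obtain ⟨m, π, R, hm, hπ, hR, h_ker, h_length⟩ := h
  exact ⟨m, π, R, hm.trans hg, hπ, hR.trans hr, h_ker, h_length.trans hL⟩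

theorem congr (h : HasBoundedPresentation G g r L) (e : G ≃* H) :
    HasBoundedPresentation H g r L := by
  obtain ⟨m, π, R, hm, hπ, hR, h_ker, h_length⟩ := h
  exact ⟨m, (e : G →* H).comp π, R, hm, e.surjective.comp hπ, hR,
    (MonoidHom.ker_mulEquiv_comp π e).trans h_ker, h_length⟩

end HasBoundedPresentation

section AlternatingPresentation

variable {P : PrimeData} {n k : ℕ} {G : Type*} [Group G]

/-- The relators of the presentation of the alternating group, as words in its generators. -/
noncomputable def relators (P : PrimeData) (n k : ℕ) : List (FreeGroup (Letter k)) :=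
  shortRelators FreeGroup.of ++ powerRelators P n FreeGroup.of

theorem relations_comp_of_iff (hn : P.p < 4 ^ n) (f : FreeGroup (Letter k) →* G) :
    Relations P (f ∘ FreeGroup.of) ↔ ∀ w ∈ relators P n k, f w = 1 := by
  rw [relations_iff hn, ← map_shortRelators, ← map_powerRelators, List.forall_mem_map,
    List.forall_mem_map, relators, List.forall_mem_append]

theorem Relations.exists_surjective_hom {D : Letter k → G} (R : Relations P D)
    (hD : Subgroup.closure (Set.range D) = ⊤) :
    ∃ Φ : alternatingGroup (Option (Option (Point P k))) →* G,
      Function.Surjective Φ ∧ ∀ ω, Φ (alternatingCycle ω) = pointFamily P D ω := by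
  obtain ⟨Φ, hΦ⟩ := R.isCarmichael_pointFamily.exists_hom
  refine ⟨Φ, ?_, hΦ⟩
  rw [← MonoidHom.range_eq_top, eq_top_iff, ← R.closure_pointFamily hD, Subgroup.closure_le]
  rintro _ ⟨ω, rfl⟩
  exact ⟨alternatingCycle ω, hΦ ω⟩

theorem exists_ker_eq_normalClosure_relators (k : ℕ) (hn : P.p < 4 ^ n) :
    ∃ π : FreeGroup (Letter k) →* alternatingGroup (Option (Option (Point P k))),
      Function.Surjective π ∧ π.ker = Subgroup.normalClosure {w | w ∈ relators P n k} := by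
  set N := Subgroup.normalClosure {w | w ∈ relators P n k}
  have closure_range : Subgroup.closure (Set.range (QuotientGroup.mk' N ∘ FreeGroup.of)) = ⊤ := by
    rw [Set.range_comp, ← MonoidHom.map_closure, FreeGroup.closure_range_of,
      Subgroup.map_top_of_surjective _ (QuotientGroup.mk'_surjective N)]
  obtain ⟨Φ, hΦ, Φ_cycle⟩ := ((relations_comp_of_iff hn (QuotientGroup.mk' N)).2 fun w hw =>
    (QuotientGroup.eq_one_iff w).2 (Subgroup.subset_normalClosure hw)).exists_surjective_hom
      closure_range
  have lift_comp_of : FreeGroup.lift (model P k) ∘ FreeGroup.of = model P k :=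
    funext fun _ => FreeGroup.lift_apply_of
  let θ := QuotientGroup.lift N (FreeGroup.lift (model P k)) <|
    Subgroup.normalClosure_le_normal <| (relations_comp_of_iff hn _).1 <| by
      rw [lift_comp_of]
      exact relations_model P k
  have θ_comp_Φ : θ.comp Φ = (alternatingGroup (Option (Option (Point P k)))).subtype := by
    refine MonoidHom.eq_of_eqOn_dense closure_alternatingCycle ?_
    rintro _ ⟨ω, rfl⟩
    refine (congrArg θ (Φ_cycle ω)).trans ((map_pointFamily θ _ ω).trans ?_)
    exact (congrArg (pointFamily P · ω) lift_comp_of).trans (pointFamily_model ω)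
  have Φ_injective : Function.Injective Φ :=
    .of_comp (f := θ) <| by
      rw [← MonoidHom.coe_comp, θ_comp_Φ]
      exact Subtype.val_injective
  let e := MulEquiv.ofBijective Φ ⟨Φ_injective, hΦ⟩
  refine ⟨(e.symm : _ →* _).comp (QuotientGroup.mk' N),
    e.symm.surjective.comp (QuotientGroup.mk'_surjective N), ?_⟩
  rw [MonoidHom.ker_mulEquiv_comp, QuotientGroup.ker_mk']

theorem length_powerRelators (D : Letter k → G) : (powerRelators P n D).length = 40 := by
  simp only [powerRelators, linePowerRelators, List.length_flatMap, List.length_cons,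
    List.length_nil, List.map_const', List.sum_replicate, Finset.length_toList]
  rfl

theorem sum_norm_powerRelators_le :
    ((powerRelators P n (FreeGroup.of (α := Letter k))).map FreeGroup.norm).sum ≤
      40 * (5 * n + 1) := by
  have norm_le : ∀ m ∈ (powerRelators P n (FreeGroup.of (α := Letter k))).map FreeGroup.norm,
      m ≤ 5 * n + 1 := by
    simp only [powerRelators, List.forall_mem_map, List.forall_mem_flatMap]
    exact fun q _ => norm_le_of_mem_linePowerRelators P n fun l => (FreeGroup.norm_of _).le
  refine (List.sum_le_card_nsmul _ _ norm_le).trans_eq ?_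
  rw [List.length_map, length_powerRelators, smul_eq_mul]

theorem exists_hasBoundedPresentation_alternatingGroup_point (k : ℕ) :
    ∃ C : ℕ, ∀ P : PrimeData, HasBoundedPresentation
      (alternatingGroup (Option (Option (Point P k)))) C C (C * (1 + Real.logb 2 P.p)) := by
  let short : List (FreeGroup (Letter k)) := shortRelators FreeGroup.of
  refine ⟨Fintype.card (Letter k) + short.length + (short.map FreeGroup.norm).sum + 240,
    fun P => ?_⟩
  set n := Nat.log 4 P.p + 1
  obtain ⟨π, hπ, h_ker⟩ := exists_ker_eq_normalClosure_relators (P := P) (n := n) k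
    (Nat.lt_pow_succ_log_self (by norm_num) _)
  have relators_eq : relators P n k = short ++ powerRelators P n FreeGroup.of := rfl
  refine .of_list hπ h_ker (by lia) ?_ ?_
  · rw [relators_eq, List.length_append, length_powerRelators]
    lia
  · rw [relators_eq, List.map_append, List.sum_append]
    have sum_power := sum_norm_powerRelators_le (P := P) (n := n) (k := k)
    have n_le : (n : ℝ) ≤ 1 + Real.logb 2 P.p := by
      have log_le : (Nat.log 4 P.p : ℝ) ≤ Real.logb 2 P.p :=
        (Nat.cast_le.2 (Nat.log_anti_left (by norm_num) (by norm_num))).trans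
          (Real.natLog_le_logb _ 2)
      push_cast [n]
      linarith
    refine le_trans ?_ (mul_le_mul_of_nonneg_left n_le (Nat.cast_nonneg _))
    have one_le_n : 1 ≤ n := Nat.le_add_left 1 _
    norm_cast
    generalize (short.map FreeGroup.norm).sum = sum_short
    calc Fintype.card (Letter k) + (sum_short + _)
      _ ≤ (Fintype.card (Letter k) + short.length + sum_short) * 1 + 240 * n := by lia
      _ ≤ (Fintype.card (Letter k) + short.length + sum_short) * n + 240 * n := by gcongr
      _ = _ := (add_mul _ _ n).symm

end AlternatingPresentation

section Degree

variable (P : PrimeData) (k : ℕ)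

theorem card_low : Fintype.card {z : ZMod P.p // z.val < P.s} = P.s := by
  rw [Fintype.card_subtype, ← Finset.card_image_of_injective _ (ZMod.val_injective P.p)]
  refine (congrArg Finset.card ?_).trans (Finset.card_range P.s)
  ext m
  simp only [Finset.mem_image, Finset.mem_filter_univ, Finset.mem_range]
  refine ⟨fun ⟨_, hz, h⟩ => h ▸ hz, fun hm => ⟨m, ?_⟩⟩
  rwa [ZMod.val_natCast_of_lt (hm.trans P.s_lt), and_iff_left rfl]

theorem card_point : Fintype.card (Point P k) = 2 * P.p + 1 + k - P.s := by
  have card_high : Fintype.card {z : ZMod P.p // P.s ≤ z.val} = P.p - P.s := by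
    have := Fintype.card_subtype_compl fun z : ZMod P.p => z.val < P.s
    simpa only [not_lt, ZMod.card, card_low] using this
  have := P.s_lt
  simp only [Fintype.card_sum, Fintype.card_option, Fintype.card_prod, Fintype.card_bool,
    Fintype.card_fin, card_low, card_high]
  lia

theorem exists_primeData {m : ℕ} (hm : 4 ≤ m) :
    ∃ P : PrimeData, P.p ≤ 2 * m ∧ P.s + 1 + 2 * m = 2 * P.p := by
  obtain ⟨p, hp, m_lt, p_le⟩ := Nat.exists_prime_lt_and_le_two_mul m (by lia)
  have : Fact p.Prime := ⟨hp⟩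
  obtain ⟨u, hu⟩ := IsCyclic.exists_generator (α := (ZMod p)ˣ)
  have s_odd : Odd (2 * p - 1 - 2 * m) := ⟨p - 1 - m, by lia⟩
  have p_odd := hp.eq_two_or_odd
  exact ⟨⟨p, 2 * p - 1 - 2 * m, u, by lia, hu, s_odd, by lia⟩, p_le, by simp only; lia⟩

theorem exists_card_point {n : ℕ} (hn : 12 ≤ n) :
    ∃ P : PrimeData, ∃ k < 2, P.p ≤ n ∧ Fintype.card (Option (Option (Point P k))) = n := by
  obtain ⟨P, p_le, s_add⟩ := exists_primeData (m := (n - 4) / 2) (by lia)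
  refine ⟨P, n % 2, Nat.mod_lt _ two_pos, by lia, ?_⟩
  rw [Fintype.card_option, Fintype.card_option, card_point]
  lia

end Degree

theorem exists_hasBoundedPresentation_alternatingGroup :
    ∃ C : ℕ, ∀ n, 12 ≤ n →
      HasBoundedPresentation (alternatingGroup (Fin n)) C C (C * (1 + Real.logb 2 n)) := by
  choose C hC using exists_hasBoundedPresentation_alternatingGroup_point
  refine ⟨C 0 + C 1, fun n hn => ?_⟩
  obtain ⟨P, k, k_lt, p_le, h_card⟩ := exists_card_point hn
  have C_le : C k ≤ C 0 + C 1 := by interval_cases k <;> lia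
  have log_le : Real.logb 2 P.p ≤ Real.logb 2 n :=
    Real.logb_le_logb_of_le one_lt_two (by exact_mod_cast P.prime.out.pos) (by exact_mod_cast p_le)
  have log_nonneg : 0 ≤ Real.logb 2 P.p :=
    Real.logb_nonneg one_lt_two (by exact_mod_cast P.prime.out.one_le)
  exact ((hC k P).congr (altCongrHom (Fintype.equivFinOfCardEq h_card))).mono C_le C_le (by gcongr)

/-! ### The exponent of the kernel -/

section CentralExtension

variable {E A : Type*} [Group E] [Group A] {φ : E →* A}

theorem commute_of_mem_ker (hc : φ.ker ≤ Subgroup.center E) {z : E} (hz : φ z = 1) (g : E) :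
    Commute z g :=
  (Subgroup.mem_center_iff.1 (hc hz) g).symm

theorem conj_eq_self_of_mem_ker (hc : φ.ker ≤ Subgroup.center E) {z : E} (hz : φ z = 1) (g : E) :
    g * z * g⁻¹ = z := by
  rw [← (commute_of_mem_ker hc hz g).eq, mul_inv_cancel_right]

theorem commutatorElement_eq_of_map_eq (hc : φ.ker ≤ Subgroup.center E) {a b h k : E}
    (ha : φ h = φ a) (hb : φ k = φ b) : ⁅h, k⁆ = ⁅a, b⁆ := by
  obtain ⟨z, rfl⟩ : ∃ z, a = h * z := ⟨h⁻¹ * a, (mul_inv_cancel_left h a).symm⟩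
  obtain ⟨w, rfl⟩ : ∃ w, b = k * w := ⟨k⁻¹ * b, (mul_inv_cancel_left k b).symm⟩
  have hz := commute_of_mem_ker hc (z := z) (by simpa using ha)
  have hw := commute_of_mem_ker hc (z := w) (by simpa using hb)
  calc ⁅h, k⁆ = (h * k) * h⁻¹ * k⁻¹ := rfl
    _ = h * (z * (k * w)) * z⁻¹ * w⁻¹ * h⁻¹ * k⁻¹ := by rw [(hz _).eq]; group
    _ = h * (z * (k * w)) * z⁻¹ * h⁻¹ * w⁻¹ * k⁻¹ := by
      rw [mul_assoc _ w⁻¹, (hw h⁻¹).inv_left.eq, ← mul_assoc]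
    _ = ⁅h * z, k * w⁆ := by rw [commutatorElement_def]; group

theorem eq_top_of_map_eq_top (hE : commutator E = ⊤) (hc : φ.ker ≤ Subgroup.center E)
    {H : Subgroup E} (hH : H.map φ = φ.range) : H = ⊤ := by
  have exists_mem (e : E) : ∃ h ∈ H, φ h = φ e := Subgroup.mem_map.1 (hH ▸ ⟨e, rfl⟩)
  rw [eq_top_iff, ← hE, commutator_def, Subgroup.commutator_le]
  intro a _ b _
  obtain ⟨h, hh, ha⟩ := exists_mem a
  obtain ⟨k, hk, hb⟩ := exists_mem b
  rw [← commutatorElement_eq_of_map_eq hc ha hb]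
  exact H.mul_mem (H.mul_mem (H.mul_mem hh hk) (H.inv_mem hh)) (H.inv_mem hk)

theorem conj_mul_self_pow_three (hc : φ.ker ≤ Subgroup.center E) {g y : E} (hy : φ y ^ 3 = 1)
    (hg : φ g * φ y * (φ g)⁻¹ = (φ y)⁻¹) :
    φ (g * y * g⁻¹ * y) = 1 ∧ (g * y * g⁻¹ * y) ^ 3 = y ^ 6 := by
  have map_eq_one : φ (g * y * g⁻¹ * y) = 1 := by
    simp only [map_mul, map_inv, hg, inv_mul_cancel]
  have conj_pow_three : (g * y * g⁻¹) ^ 3 = y ^ 3 := by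
    rw [conj_pow, conj_eq_self_of_mem_ker hc (by rw [map_pow, hy])]
  refine ⟨map_eq_one, ?_⟩
  calc (g * y * g⁻¹ * y) ^ 3 = (g * y * g⁻¹ * y * y⁻¹) ^ 3 * y ^ 3 := by
        rw [((commute_of_mem_ker hc map_eq_one) y⁻¹).mul_pow, inv_pow, inv_mul_cancel_right]
    _ = y ^ 6 := by rw [mul_inv_cancel_right, conj_pow_three, ← pow_add]

theorem exists_pow_three_eq_one_of_conj_eq_inv (hφ : Function.Surjective φ)
    (hc : φ.ker ≤ Subgroup.center E) {a b : A} (ha : a ^ 3 = 1) (hb : b * a * b⁻¹ = a⁻¹) :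
    ∃ y, φ y = a ∧ y ^ 3 = 1 := by
  obtain ⟨x, rfl⟩ := hφ a
  obtain ⟨g, rfl⟩ := hφ b
  obtain ⟨hz, hz_pow⟩ := conj_mul_self_pow_three hc ha hb
  refine ⟨(g * x * g⁻¹ * x) * (x ^ 2)⁻¹, ?_, ?_⟩
  · rw [map_mul, hz, one_mul, map_inv, map_pow, inv_eq_iff_mul_eq_one, ← pow_succ, ha]
  · rw [(commute_of_mem_ker hc hz _).mul_pow, hz_pow, inv_pow, ← pow_mul, mul_inv_cancel]

theorem mul_sq_pow_six_eq_one (hc : φ.ker ≤ Subgroup.center E) {g x y : E} (hx : x ^ 3 = 1)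
    (hy : y ^ 3 = 1) (hxy : φ ((x * y) ^ 2) = 1) (hgx : φ g * φ x * (φ g)⁻¹ = (φ x)⁻¹)
    (hgy : φ g * φ y * (φ g)⁻¹ = (φ y)⁻¹) : ((x * y) ^ 2) ^ 6 = 1 := by
  obtain ⟨hz, hz_pow⟩ := conj_mul_self_pow_three hc (by rw [← map_pow, hx, map_one]) hgx
  obtain ⟨hw, hw_pow⟩ := conj_mul_self_pow_three hc (by rw [← map_pow, hy, map_one]) hgy
  set z := g * x * g⁻¹ * x with z_def
  set w := g * y * g⁻¹ * y with w_def
  have hzw : φ (z * w) = 1 := by rw [map_mul, hz, hw, one_mul]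
  have zw_pow_three : (z * w) ^ 3 = 1 := by
    rw [(commute_of_mem_ker hc hz w).mul_pow, hz_pow, hw_pow, pow_mul x 3 2, hx, pow_mul y 3 2, hy,
      one_pow, one_mul]
  have swap_sq : (y * x) ^ 2 = (x * y) ^ 2 := by
    rw [← conj_eq_self_of_mem_ker hc hxy y, ← conj_pow, ← mul_assoc, mul_inv_cancel_right]
  have conj_mul : g * (x * y) * g⁻¹ = z * w * (y * x)⁻¹ := by
    calc g * (x * y) * g⁻¹ = z * (x⁻¹ * w) * y⁻¹ := by rw [z_def, w_def]; group
      _ = z * w * (y * x)⁻¹ := by rw [← (commute_of_mem_ker hc hw x⁻¹).eq]; group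
  have sq_eq : (x * y) ^ 2 = (z * w) ^ 2 * ((x * y) ^ 2)⁻¹ := by
    rw [← swap_sq, ← inv_pow, ← (commute_of_mem_ker hc hzw _).mul_pow, ← conj_mul, conj_pow,
      conj_eq_self_of_mem_ker hc hxy, swap_sq]
  rw [eq_mul_inv_iff_mul_eq, ← pow_two] at sq_eq
  rw [pow_mul _ 2 3, sq_eq, ← pow_mul, mul_comm, pow_mul, zw_pow_three, one_pow]

/-- The elements of the center of `E` whose order divides `n`. -/
def centerTorsion (E : Type*) [Group E] (n : ℕ) : Subgroup E where
  carrier := {z | z ∈ Subgroup.center E ∧ z ^ n = 1}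
  one_mem' := ⟨one_mem _, one_pow n⟩
  mul_mem' := fun {a b} ⟨ha, ha_pow⟩ ⟨hb, hb_pow⟩ =>
    ⟨mul_mem ha hb, by
      rw [Commute.mul_pow (Subgroup.mem_center_iff.1 hb a), ha_pow, hb_pow, one_mul]⟩
  inv_mem' := fun ⟨ha, ha_pow⟩ => ⟨inv_mem ha, by rw [inv_pow, ha_pow, inv_one]⟩

theorem mem_centerTorsion {n : ℕ} {z : E} :
    z ∈ centerTorsion E n ↔ z ∈ Subgroup.center E ∧ z ^ n = 1 :=
  Iff.rfl

instance (n : ℕ) : (centerTorsion E n).Normal where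
  conj_mem z hz g := by
    rwa [Subgroup.mem_center_iff.1 (mem_centerTorsion.1 hz).1, mul_inv_cancel_right]

end CentralExtension

section KernelExponent

variable {E Ω : Type*} [Group E] [DecidableEq Ω] [Fintype Ω]

theorem exists_conj_alternatingCycle_eq_inv (hΩ : 4 ≤ Fintype.card Ω) (i j : Ω) :
    ∃ g : alternatingGroup (Option (Option Ω)),
      g * alternatingCycle i * g⁻¹ = (alternatingCycle i)⁻¹ ∧
        g * alternatingCycle j * g⁻¹ = (alternatingCycle j)⁻¹ := by
  have card_compl : 1 < ({i, j}ᶜ : Finset Ω).card := by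
    have := Finset.card_le_two (a := i) (b := j)
    rw [Finset.card_compl]
    lia
  obtain ⟨a, ha, b, hb, hab⟩ := Finset.one_lt_card.1 card_compl
  simp only [Finset.mem_compl, Finset.mem_insert, Finset.mem_singleton, not_or] at ha hb
  have conj_cycle {k : Ω} (hka : k ≠ a) (hkb : k ≠ b) :
      swap none (some none) * fixTwoHom (swap a b) * carmichaelCycle k *
        (swap none (some none) * fixTwoHom (swap a b))⁻¹ = (carmichaelCycle k)⁻¹ := by
    rw [← swap_conj_carmichaelCycle, mul_inv_rev]
    nth_rw 2 [← swap_apply_of_ne_of_ne hka hkb]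
    rw [← fixTwoHom_conj]
    simp only [mul_assoc]
  refine ⟨⟨swap none (some none) * fixTwoHom (swap a b), ?_⟩,
    Subtype.ext (conj_cycle (Ne.symm ha.1) (Ne.symm hb.1)),
    Subtype.ext (conj_cycle (Ne.symm ha.2) (Ne.symm hb.2))⟩
  rw [fixTwoHom_swap, Perm.mem_alternatingGroup, map_mul, Perm.sign_swap (by simp),
    Perm.sign_swap (by simpa using hab), Int.units_mul_self]

variable {φ : E →* alternatingGroup (Option (Option Ω))}

theorem exists_isCarmichael_mod_centerTorsion (hΩ : 4 ≤ Fintype.card Ω)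
    (hφ : Function.Surjective φ) (hc : φ.ker ≤ Subgroup.center E) :
    ∃ Y : Ω → E, (∀ i, φ (Y i) = alternatingCycle i) ∧
      IsCarmichael fun i => QuotientGroup.mk' (centerTorsion E 6) (Y i) := by
  have exists_lift (i : Ω) : ∃ y, φ y = alternatingCycle i ∧ y ^ 3 = 1 :=
    let ⟨_, hg, _⟩ := exists_conj_alternatingCycle_eq_inv hΩ i i
    exists_pow_three_eq_one_of_conj_eq_inv hφ hc (isCarmichael_alternatingCycle.pow_three i) hg
  choose Y hY hY_pow using exists_lift
  refine ⟨Y, hY, fun i => by rw [← map_pow, hY_pow, map_one], fun i j hij => ?_⟩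
  have map_sq : φ ((Y i * Y j) ^ 2) = 1 := by
    rw [map_pow, map_mul, hY, hY, isCarmichael_alternatingCycle.mul_sq i j hij]
  obtain ⟨g, hi, hj⟩ := exists_conj_alternatingCycle_eq_inv hΩ i j
  obtain ⟨g, rfl⟩ := hφ g
  rw [← hY] at hi hj
  rw [← map_mul, ← map_pow]
  exact (QuotientGroup.eq_one_iff _).2 <| mem_centerTorsion.2
    ⟨hc map_sq, mul_sq_pow_six_eq_one hc (hY_pow i) (hY_pow j) map_sq hi hj⟩

theorem pow_six_eq_one_of_mem_ker (hΩ : 4 ≤ Fintype.card Ω) (hE : commutator E = ⊤)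
    (hφ : Function.Surjective φ) (hc : φ.ker ≤ Subgroup.center E) {z : E} (hz : φ z = 1) :
    z ^ 6 = 1 := by
  obtain ⟨Y, hY, hY_car⟩ := exists_isCarmichael_mod_centerTorsion hΩ hφ hc
  obtain ⟨Φ, hΦ⟩ := hY_car.exists_hom
  have closure_range : Subgroup.closure (Set.range Y) = ⊤ := by
    refine eq_top_of_map_eq_top hE hc ?_
    rw [MonoidHom.map_closure, MonoidHom.range_eq_top.2 hφ, ← closure_alternatingCycle,
      ← Set.range_comp, show φ ∘ Y = alternatingCycle from funext hY]
  have mk_eq : QuotientGroup.mk' (centerTorsion E 6) = Φ.comp φ := by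
    refine MonoidHom.eq_of_eqOn_dense closure_range ?_
    rintro _ ⟨i, rfl⟩
    rw [MonoidHom.comp_apply, hY, hΦ]
  have mk_z : QuotientGroup.mk' (centerTorsion E 6) z = 1 := by
    rw [mk_eq, MonoidHom.comp_apply, hz, map_one]
  exact (mem_centerTorsion.1 ((QuotientGroup.eq_one_iff z).1 mk_z)).2

end KernelExponent

/-! ### Presentations of perfect central extensions -/

section FinitePresentations

theorem ker_eq_normalClosure {F : Type u} {G : Type*} [Group F] [Group G] {π : F →* G} {S : Set F}
    (hS : ∀ w ∈ S, π w = 1)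
    (h_ker : ∀ (H : Type u) [Group H] (Q : F →* H), (∀ w ∈ S, Q w = 1) → π.ker ≤ Q.ker) :
    π.ker = Subgroup.normalClosure S := by
  refine le_antisymm ?_ (Subgroup.normalClosure_le_normal hS)
  have := h_ker _ (QuotientGroup.mk' (Subgroup.normalClosure S)) fun w hw =>
    (QuotientGroup.eq_one_iff w).2 (Subgroup.subset_normalClosure hw)
  rwa [QuotientGroup.ker_mk'] at this

theorem sum_map_norm_le {α ι : Type*} [DecidableEq α] (l : List ι) {f : ι → FreeGroup α} {B : ℕ}
    (hf : ∀ i, (f i).norm ≤ B) : ((l.map f).map FreeGroup.norm).sum ≤ l.length * B := by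
  simpa using List.sum_le_card_nsmul ((l.map f).map FreeGroup.norm) B (by simp [hf])

/-- The relators saying that `u` is multiplicative, one for each entry of the multiplication
table of `Z`. -/
noncomputable def mulTableRelators {α Z : Type*} [Group Z] [Fintype Z] (u : Z → FreeGroup α) :
    List (FreeGroup α) :=
  (Finset.univ : Finset (Z × Z)).toList.map fun q => u q.1 * u q.2 * (u (q.1 * q.2))⁻¹

/-- The relators saying that every `x i` commutes with every `u z`. -/
noncomputable def commuteRelators {α ι Z : Type*} [Fintype ι] [Fintype Z] (x : ι → FreeGroup α)
    (u : Z → FreeGroup α) : List (FreeGroup α) :=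
  (Finset.univ : Finset (ι × Z)).toList.map fun q => ⁅x q.1, u q.2⁆

variable {α ι Z G : Type*} [Group G] [Fintype Z] [Fintype ι]
  {x : ι → FreeGroup α} {u : Z → FreeGroup α}

theorem forall_mem_mulTableRelators [Group Z] {Q : FreeGroup α →* G} :
    (∀ w ∈ mulTableRelators u, Q w = 1) ↔ ∀ y z, Q (u (y * z)) = Q (u y) * Q (u z) := by
  simp only [mulTableRelators, List.forall_mem_map, Finset.mem_toList, Finset.mem_univ,
    true_imp_iff, Prod.forall, map_mul, map_inv, mul_inv_eq_one]
  exact forall₂_congr fun y z => eq_comm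

theorem forall_mem_commuteRelators {Q : FreeGroup α →* G} :
    (∀ w ∈ commuteRelators x u, Q w = 1) ↔ ∀ i z, Commute (Q (x i)) (Q (u z)) := by
  simp only [commuteRelators, List.forall_mem_map, Finset.mem_toList, Finset.mem_univ,
    true_imp_iff, Prod.forall, map_commutatorElement, commutatorElement_eq_one_iff_commute]

theorem length_mulTableRelators [Group Z] :
    (mulTableRelators u).length = Fintype.card Z * Fintype.card Z := by
  simp [mulTableRelators]

theorem length_commuteRelators :
    (commuteRelators x u).length = Fintype.card ι * Fintype.card Z := by
  simp [commuteRelators]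

variable [DecidableEq α]

theorem sum_norm_mulTableRelators_le [Group Z] (hu : ∀ z, (u z).norm ≤ 1) :
    ((mulTableRelators u).map FreeGroup.norm).sum ≤ Fintype.card Z * Fintype.card Z * 3 := by
  refine (sum_map_norm_le (B := 3) _ fun q => ?_).trans_eq (by simp)
  calc (u q.1 * u q.2 * (u (q.1 * q.2))⁻¹).norm
      ≤ (u q.1).norm + (u q.2).norm + (u (q.1 * q.2)).norm :=
        (FreeGroup.norm_mul_le _ _).trans (add_le_add (FreeGroup.norm_mul_le _ _)
          FreeGroup.norm_inv_eq.le)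
    _ ≤ 3 := by linarith [hu q.1, hu q.2, hu (q.1 * q.2)]

theorem sum_norm_commuteRelators_le (hx : ∀ i, (x i).norm ≤ 1) (hu : ∀ z, (u z).norm ≤ 1) :
    ((commuteRelators x u).map FreeGroup.norm).sum ≤ Fintype.card ι * Fintype.card Z * 4 := by
  refine (sum_map_norm_le (B := 4) _ fun q => ?_).trans_eq (by simp)
  calc ⁅x q.1, u q.2⁆.norm ≤ (x q.1).norm + (u q.2).norm + (x q.1)⁻¹.norm + (u q.2)⁻¹.norm :=
        (FreeGroup.norm_mul_le _ _).trans <| add_le_add_left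
          ((FreeGroup.norm_mul_le _ _).trans <| add_le_add_left (FreeGroup.norm_mul_le _ _) _) _
    _ ≤ 4 := by
      simp only [FreeGroup.norm_inv_eq]
      linarith [hx q.1, hu q.2]

theorem HasBoundedPresentation.of_card_le {E : Type} [Group E] [Finite E] {K : ℕ}
    (hK : Nat.card E ≤ K) : HasBoundedPresentation E K (K * K) ((K + K * K * 3 : ℕ) : ℝ) := by
  classical
  have := Fintype.ofFinite E
  rw [Nat.card_eq_fintype_card] at hK
  refine HasBoundedPresentation.of_list (π := FreeGroup.lift id)
    (R := mulTableRelators FreeGroup.of) (fun e => ⟨FreeGroup.of e, FreeGroup.lift_apply_of⟩)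
    (ker_eq_normalClosure ?_ fun H _ Q hQ => ?_) hK ?_ ?_
  · exact forall_mem_mulTableRelators.2 fun y z => by simp
  · let c := MonoidHom.mk' (Q ∘ FreeGroup.of) (forall_mem_mulTableRelators.1 hQ)
    have comp_lift : c.comp (FreeGroup.lift id) = Q := by
      ext e
      simp [c]
    intro w hw
    rw [← comp_lift, MonoidHom.mem_ker, MonoidHom.comp_apply, MonoidHom.mem_ker.1 hw, map_one]
  · exact length_mulTableRelators.trans_le (Nat.mul_le_mul hK hK)
  · have sum_norm := sum_norm_mulTableRelators_le (u := FreeGroup.of (α := E))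
      fun z => (FreeGroup.norm_of z).le
    exact_mod_cast Nat.add_le_add hK (sum_norm.trans (by gcongr))

end FinitePresentations

section ExtensionPresentation

variable {E A : Type*} [Group E] [Group A] {φ : E →* A}

theorem exists_eq_of_map_eq_one {F H : Type*} [Group F] [Group H] (hc : φ.ker ≤ Subgroup.center E)
    {f : F →* E} {R : Set F} (hR : (φ.comp f).ker = Subgroup.normalClosure R) {q : F →* H}
    {c : φ.ker →* H} (hqc : ∀ w z, Commute (q w) (c z))
    (h_rel : ∀ w ∈ R, ∃ z : φ.ker, f w = z ∧ q w = c z) {w : F} (hw : φ (f w) = 1) :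
    ∃ z : φ.ker, f w = z ∧ q w = c z := by
  let K : Subgroup F := (φ.ker.subtype.prod c).range.comap (f.prod q)
  have mem_K {v : F} : v ∈ K ↔ ∃ z : φ.ker, f v = z ∧ q v = c z := by
    simp [K, MonoidHom.mem_range, eq_comm]
  have : K.Normal := ⟨fun v hv b => by
    obtain ⟨z, hz, hz'⟩ := mem_K.1 hv
    refine mem_K.2 ⟨z, ?_, ?_⟩
    · rw [map_mul, map_mul, map_inv, hz, conj_eq_self_of_mem_ker hc z.2]
    · rw [map_mul, map_mul, map_inv, hz', (hqc b z).eq, mul_inv_cancel_right]⟩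
  have normalClosure_le : Subgroup.normalClosure R ≤ K :=
    Subgroup.normalClosure_le_normal fun v hv => mem_K.2 (h_rel v hv)
  exact mem_K.1 (normalClosure_le (hR ▸ hw))

/-- The relators presenting a central extension with kernel `Z` of a group presented by `R`:
every `w ∈ R` takes the value `ζ w ∈ Z`, and `Z` is central with its own multiplication table. -/
noncomputable def extensionRelators {ι Z : Type*} [Fintype ι] [Group Z] [Fintype Z]
    (R : List (FreeGroup ι)) (ζ : FreeGroup ι → Z) : List (FreeGroup (ι ⊕ Z)) :=
  R.map (fun w => FreeGroup.map Sum.inl w * (FreeGroup.of (Sum.inr (ζ w)))⁻¹) ++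
    (commuteRelators (FreeGroup.of ∘ Sum.inl) (FreeGroup.of ∘ Sum.inr) ++
      mulTableRelators (FreeGroup.of ∘ Sum.inr))

section Relators

variable {ι Z G : Type*} [Group Z] [Group G]

theorem commute_map_of {q : FreeGroup ι →* G} {g : G} (h : ∀ i, Commute (q (FreeGroup.of i)) g)
    (w : FreeGroup ι) : Commute (q w) g := by
  have : (MulAut.conj g).toMonoidHom.comp q = q := by
    ext i
    simpa [mul_inv_eq_iff_eq_mul] using (h i).eq.symm
  exact (mul_inv_eq_iff_eq_mul.1 (DFunLike.congr_fun this w)).symm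

/-- The normal form `w * z` of a word in generators of which those in `Z` are central. -/
def centralNormalForm : FreeGroup (ι ⊕ Z) →* FreeGroup ι × Z :=
  FreeGroup.lift (Sum.elim (fun i => (FreeGroup.of i, 1)) fun z => (1, z))

theorem map_eq_mul_centralNormalForm {Q : FreeGroup (ι ⊕ Z) →* G} {c : Z →* G}
    (hQ : ∀ z, Q (FreeGroup.of (Sum.inr z)) = c z)
    (h_commute : ∀ w z, Commute (Q.comp (FreeGroup.map Sum.inl) w) (c z)) (v : FreeGroup (ι ⊕ Z)) :
    Q v = Q (FreeGroup.map Sum.inl (centralNormalForm v).1) * c (centralNormalForm v).2 := by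
  have Q_eq : Q = (MonoidHom.noncommCoprod _ c h_commute).comp centralNormalForm := by
    ext (i | z) <;> simp [centralNormalForm, MonoidHom.noncommCoprod_apply, hQ]
  exact DFunLike.congr_fun Q_eq v

variable [Fintype ι] [Fintype Z] {R : List (FreeGroup ι)} {ζ : FreeGroup ι → Z}

theorem forall_mem_extensionRelators {Q : FreeGroup (ι ⊕ Z) →* G} :
    (∀ w ∈ extensionRelators R ζ, Q w = 1) ↔
      (∀ w ∈ R, Q (FreeGroup.map Sum.inl w) = Q (FreeGroup.of (Sum.inr (ζ w)))) ∧
      (∀ i z, Commute (Q (FreeGroup.of (Sum.inl i))) (Q (FreeGroup.of (Sum.inr z)))) ∧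
      ∀ y z, Q (FreeGroup.of (Sum.inr (y * z))) =
        Q (FreeGroup.of (Sum.inr y)) * Q (FreeGroup.of (Sum.inr z)) := by
  rw [extensionRelators, List.forall_mem_append, List.forall_mem_append, List.forall_mem_map,
    forall_mem_commuteRelators, forall_mem_mulTableRelators]
  simp only [map_mul, map_inv, mul_inv_eq_one, Function.comp_apply]

theorem length_extensionRelators : (extensionRelators R ζ).length =
    R.length + (Fintype.card ι * Fintype.card Z + Fintype.card Z * Fintype.card Z) := by
  simp only [extensionRelators, List.length_append, List.length_map, length_commuteRelators,
    length_mulTableRelators]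

theorem sum_norm_extensionRelators_le [DecidableEq ι] [DecidableEq Z] :
    ((extensionRelators R ζ).map FreeGroup.norm).sum ≤ (R.map FreeGroup.norm).sum + R.length +
      (Fintype.card ι * Fintype.card Z * 4 + Fintype.card Z * Fintype.card Z * 3) := by
  have norm_relator (w : FreeGroup ι) :
      (FreeGroup.map Sum.inl w * (FreeGroup.of (Sum.inr (ζ w)))⁻¹).norm ≤ w.norm + 1 :=
    (FreeGroup.norm_mul_le _ _).trans <| add_le_add (freeGroup_norm_map_le _ w) <|
      (FreeGroup.norm_inv_eq.trans (FreeGroup.norm_of _)).le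
  rw [extensionRelators, List.map_append, List.map_append, List.sum_append, List.sum_append,
    List.map_map]
  refine add_le_add ((List.sum_le_sum fun w _ => norm_relator w).trans_eq ?_) <| add_le_add
    (sum_norm_commuteRelators_le (fun _ => (FreeGroup.norm_of _).le)
      fun _ => (FreeGroup.norm_of _).le)
    (sum_norm_mulTableRelators_le fun _ => (FreeGroup.norm_of _).le)
  rw [List.sum_map_add, List.map_const', List.sum_replicate, smul_eq_mul, mul_one]

end Relators

variable {ι : Type*} {f : FreeGroup ι →* E}

variable (f) in
/-- The evaluation of words in lifted generators, which `f` evaluates, and elements of `Z`. -/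
def extensionHom (Z : Subgroup E) : FreeGroup (ι ⊕ Z) →* E :=
  FreeGroup.lift (Sum.elim (f ∘ FreeGroup.of) Z.subtype)

theorem extensionHom_inl {Z : Subgroup E} (w : FreeGroup ι) :
    extensionHom f Z (FreeGroup.map Sum.inl w) = f w := by
  have : (extensionHom f Z).comp (FreeGroup.map Sum.inl) = f := by
    ext i
    simp [extensionHom]
  exact DFunLike.congr_fun this w

theorem extensionHom_inr {Z : Subgroup E} (z : Z) :
    extensionHom f Z (FreeGroup.of (Sum.inr z)) = Z.subtype z := by
  simp [extensionHom]

theorem extensionHom_surjective (hf : Function.Surjective (φ.comp f)) :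
    Function.Surjective (extensionHom f φ.ker) := by
  intro e
  obtain ⟨w, hw⟩ := hf (φ e)
  have hz : (f w)⁻¹ * e ∈ φ.ker := by
    rw [MonoidHom.mem_ker, map_mul, map_inv, ← MonoidHom.comp_apply, hw, inv_mul_cancel]
  refine ⟨FreeGroup.map Sum.inl w * FreeGroup.of (Sum.inr ⟨_, hz⟩), ?_⟩
  rw [map_mul, extensionHom_inl, extensionHom_inr, Subgroup.subtype_apply, mul_inv_cancel_left]

variable [Fintype ι] [Fintype φ.ker] {R : List (FreeGroup ι)} {ζ : FreeGroup ι → φ.ker}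

theorem ker_extensionHom (hc : φ.ker ≤ Subgroup.center E)
    (hR : (φ.comp f).ker = Subgroup.normalClosure {w | w ∈ R}) (hζ : ∀ w ∈ R, f w = ζ w) :
    (extensionHom f φ.ker).ker = Subgroup.normalClosure {w | w ∈ extensionRelators R ζ} := by
  refine ker_eq_normalClosure (forall_mem_extensionRelators.2 ⟨fun w hw => ?_, fun i z => ?_,
    fun y z => ?_⟩) fun H _ Q hQ v hv => ?_
  · rw [extensionHom_inl, extensionHom_inr, hζ w hw, Subgroup.subtype_apply]
  · rw [extensionHom_inr]
    exact (commute_of_mem_ker hc z.2 _).symm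
  · simp only [extensionHom_inr, map_mul]
  obtain ⟨relators_eq, Q_commute, map_table⟩ := forall_mem_extensionRelators.1 hQ
  let q := Q.comp (FreeGroup.map Sum.inl)
  let c : φ.ker →* H := MonoidHom.mk' (fun z => Q (FreeGroup.of (Sum.inr z))) map_table
  have commute_qc (w : FreeGroup ι) (z : φ.ker) : Commute (q w) (c z) :=
    commute_map_of (fun i => by simpa [q, c] using Q_commute i z) w
  have Q_eq := map_eq_mul_centralNormalForm (c := c) (fun _ => rfl) commute_qc v
  have hv_eq := map_eq_mul_centralNormalForm (extensionHom_inr (f := f))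
    (fun _ z => (commute_of_mem_ker hc z.2 _).symm) v
  rw [MonoidHom.mem_ker.1 hv, extensionHom_inl] at hv_eq
  generalize centralNormalForm v = p at Q_eq hv_eq
  obtain ⟨w, z⟩ := p
  have map_w : φ (f w) = 1 := by
    simpa [MonoidHom.mem_ker.1 z.2] using (congrArg φ hv_eq).symm
  obtain ⟨y, hy, hy'⟩ := exists_eq_of_map_eq_one hc hR commute_qc
    (fun w hw => ⟨ζ w, hζ w hw, relators_eq w hw⟩) map_w
  have mul_eq_one : y * z = 1 := Subtype.ext (by simpa [← hy] using hv_eq.symm)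
  rw [MonoidHom.mem_ker, Q_eq, ← MonoidHom.comp_apply, hy', ← map_mul, mul_eq_one, map_one]

end ExtensionPresentation

section PerfectExtension

variable {E A : Type*} [Group E] [Group A] {φ : E →* A}

theorem exists_lift_freeGroup {ι : Type*} (hφ : Function.Surjective φ) (π : FreeGroup ι →* A) :
    ∃ f : FreeGroup ι →* E, φ.comp f = π := by
  choose s hs using fun i => hφ (π (FreeGroup.of i))
  exact ⟨FreeGroup.lift s, by ext i; simp [hs]⟩

theorem closure_image_eq_ker {F : Type*} [Group F] {f : F →* E} {R : Set F}
    (hc : φ.ker ≤ Subgroup.center E) (hf : Function.Surjective f)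
    (hR : (φ.comp f).ker = Subgroup.normalClosure R) : Subgroup.closure (f '' R) = φ.ker := by
  have : (φ.ker.comap f) = Subgroup.normalClosure R := (MonoidHom.comap_ker φ f).trans hR
  rw [← Subgroup.map_comap_eq_self_of_surjective hf φ.ker, this, Subgroup.map_normalClosure _ _ hf]
  have closure_le : Subgroup.closure (f '' R) ≤ φ.ker := by
    rw [Subgroup.closure_le, Set.image_subset_iff]
    exact fun w hw => this.ge (Subgroup.subset_normalClosure hw)
  have : (Subgroup.closure (f '' R)).Normal := ⟨fun z hz g => by
    rwa [conj_eq_self_of_mem_ker hc (closure_le hz)]⟩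
  exact (Subgroup.closure_le_normalClosure).antisymm
    (Subgroup.normalClosure_le_normal Subgroup.subset_closure)

theorem finite_and_card_closure_le {S : Finset E}
    (hS : Subgroup.closure (S : Set E) ≤ Subgroup.center E) {b : ℕ} (hb : 0 < b)
    (h_pow : ∀ z ∈ Subgroup.closure (S : Set E), z ^ b = 1) :
    Finite (Subgroup.closure (S : Set E)) ∧
      Nat.card (Subgroup.closure (S : Set E)) ≤ b ^ S.card := by
  let : CommGroup (Subgroup.closure (S : Set E)) :=
    { mul_comm := fun y z => Subtype.ext (Subgroup.mem_center_iff.1 (hS z.2) y) }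
  have card_dvd := card_dvd_exponent_pow_rank' (Subgroup.closure (S : Set E)) (n := b)
    fun z => Subtype.ext (h_pow z z.2)
  exact ⟨Nat.finite_of_card_ne_zero (ne_zero_of_dvd_ne_zero (pow_pos hb _).ne' card_dvd),
    (Nat.le_of_dvd (pow_pos hb _) card_dvd).trans
      (Nat.pow_le_pow_right hb (Subgroup.rank_closure_finset_le_card S))⟩

theorem pow_card_eq_one_of_commutator_eq_top [Finite A] (hE : commutator E = ⊤)
    (hc : φ.ker ≤ Subgroup.center E) (z : E) : z ^ Nat.card A = 1 := by
  have : φ.ker.FiniteIndex := Subgroup.finiteIndex_ker φ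
  have : (Subgroup.center E).FiniteIndex := Subgroup.finiteIndex_of_le hc
  have index_dvd : (Subgroup.center E).index ∣ Nat.card A :=
    (Subgroup.index_dvd_of_le hc).trans (Subgroup.index_ker φ ▸ Subgroup.card_subgroup_dvd_card _)
  open scoped IsMulCommutative in
  have transfer_eq_one : MonoidHom.transferCenterPow E z = 1 :=
    Abelianization.commutator_subset_ker (MonoidHom.transferCenterPow E) (hE ▸ Subgroup.mem_top z)
  obtain ⟨m, hm⟩ := index_dvd
  rw [hm, pow_mul, ← MonoidHom.transferCenterPow_apply, transfer_eq_one, OneMemClass.coe_one,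
    one_pow]

end PerfectExtension

namespace HasBoundedPresentation

variable {E A : Type} [Group E] [Group A] {φ : E →* A} {g r : ℕ} {L : ℝ}

theorem finite_and_card_ker_le (h : HasBoundedPresentation A g r L) (hE : commutator E = ⊤)
    (hφ : Function.Surjective φ) (hc : φ.ker ≤ Subgroup.center E) {b : ℕ} (hb : 0 < b)
    (h_pow : ∀ z ∈ φ.ker, z ^ b = 1) : Finite φ.ker ∧ Nat.card φ.ker ≤ b ^ r := by
  classical
  obtain ⟨m, π, R, -, hπ, hR, h_ker, -⟩ := h
  obtain ⟨f, rfl⟩ := exists_lift_freeGroup hφ π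
  have hf : Function.Surjective f := by
    rw [← MonoidHom.range_eq_top]
    refine eq_top_of_map_eq_top hE hc ?_
    rw [← MonoidHom.range_comp, MonoidHom.range_eq_top.2 hπ, MonoidHom.range_eq_top.2 hφ]
  have closure_eq : Subgroup.closure ((R.image f : Finset E) : Set E) = φ.ker := by
    rw [Finset.coe_image, closure_image_eq_ker hc hf h_ker]
  rw [← closure_eq] at hc h_pow ⊢
  obtain ⟨h_finite, h_card⟩ := finite_and_card_closure_le hc hb h_pow
  exact ⟨h_finite, h_card.trans (Nat.pow_le_pow_right hb (Finset.card_image_le.trans hR))⟩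

theorem centralExtension (h : HasBoundedPresentation A g r L) (hφ : Function.Surjective φ)
    (hc : φ.ker ≤ Subgroup.center E) [Finite φ.ker] {N : ℕ} (hN : Nat.card φ.ker ≤ N) :
    HasBoundedPresentation E (g + N) (r + (g * N + N * N))
      (L + (N + r + (g * N * 4 + N * N * 3) : ℕ)) := by
  classical
  have := Fintype.ofFinite φ.ker
  rw [Nat.card_eq_fintype_card] at hN
  obtain ⟨m, π, R, hm, hπ, hR, h_ker, hL⟩ := h
  obtain ⟨f, rfl⟩ := exists_lift_freeGroup hφ π
  rw [show (R : Set (FreeGroup (Fin m))) = {w | w ∈ R.toList} by simp] at h_ker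
  have exists_value : ∀ w ∈ R.toList, ∃ z : φ.ker, f w = z := fun w hw =>
    ⟨⟨f w, h_ker.ge (Subgroup.subset_normalClosure hw)⟩, rfl⟩
  choose! ζ hζ using exists_value
  have card_mul_le : Fintype.card (Fin m) * Fintype.card φ.ker ≤ g * N :=
    Nat.mul_le_mul (by simpa using hm) hN
  have card_sq_le := Nat.mul_le_mul hN hN
  refine of_list (extensionHom_surjective hπ) (ker_extensionHom hc h_ker hζ) ?_ ?_ ?_
  · simpa using add_le_add hm hN
  · rw [length_extensionRelators, Finset.length_toList]
    gcongr
  · have sum_norm := sum_norm_extensionRelators_le (R := R.toList) (ζ := ζ)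
    rw [Finset.sum_map_toList, Finset.length_toList] at sum_norm
    have length_le : Fintype.card (Fin m ⊕ φ.ker) +
        ((extensionRelators R.toList ζ).map FreeGroup.norm).sum ≤
        (m + ∑ w ∈ R, w.norm) + (N + r + (g * N * 4 + N * N * 3)) := by
      rw [Fintype.card_sum, Fintype.card_fin] at *
      lia
    calc _ ≤ (((m + ∑ w ∈ R, w.norm) + (N + r + (g * N * 4 + N * N * 3)) : ℕ) : ℝ) :=
          Nat.cast_le.2 length_le
      _ ≤ _ := by
        rw [Nat.cast_add]
        gcongr

end HasBoundedPresentation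

section Alternating

theorem logb_natCast_nonneg (n : ℕ) : 0 ≤ Real.logb 2 n :=
  div_nonneg (Real.log_natCast_nonneg n) (Real.log_nonneg one_le_two)

theorem card_alternatingGroup_dvd_factorial {n m : ℕ} (h : n ≤ m) :
    Nat.card (alternatingGroup (Fin n)) ∣ m.factorial :=
  (Subgroup.card_subgroup_dvd_card _).trans <| by
    rw [Nat.card_perm, Nat.card_fin]
    exact Nat.factorial_dvd_factorial h

theorem exists_forall_hasBoundedPresentation_alternatingGroup :
    ∃ C : ℕ, ∀ n, HasBoundedPresentation (alternatingGroup (Fin n)) C C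
      (C * (1 + Real.logb 2 n)) := by
  obtain ⟨C, hC⟩ := exists_hasBoundedPresentation_alternatingGroup
  obtain ⟨K, hK⟩ : ∃ K, K = Nat.factorial 12 := ⟨_, rfl⟩
  refine ⟨C + (K + K * K * 3), fun n => ?_⟩
  rcases le_total n 12 with hn | hn
  · have card_le : Nat.card (alternatingGroup (Fin n)) ≤ K :=
      Nat.le_of_dvd (hK ▸ Nat.factorial_pos 12) (hK ▸ card_alternatingGroup_dvd_factorial hn)
    refine (HasBoundedPresentation.of_card_le card_le).mono (by lia) (by lia) ?_
    calc _ ≤ ((C + (K + K * K * 3) : ℕ) : ℝ) := Nat.cast_le.2 (Nat.le_add_left _ _)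
      _ ≤ _ :=
        le_mul_of_one_le_right (Nat.cast_nonneg _) (by linarith [logb_natCast_nonneg n])
  · refine (hC n hn).mono (Nat.le_add_right _ _) (Nat.le_add_right _ _) ?_
    have logb_nonneg := logb_natCast_nonneg n
    gcongr
    exact Nat.le_add_right _ _

theorem pow_factorial_eq_one_of_mem_ker {n : ℕ} {E : Type*} [Group E] (hE : commutator E = ⊤)
    {φ : E →* alternatingGroup (Fin n)} (hφ : Function.Surjective φ)
    (hc : φ.ker ≤ Subgroup.center E) : ∀ z ∈ φ.ker, z ^ Nat.factorial 6 = 1 := by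
  intro z hz
  rcases le_total n 6 with hn | hn
  · obtain ⟨m, hm⟩ := card_alternatingGroup_dvd_factorial hn
    rw [hm, pow_mul, pow_card_eq_one_of_commutator_eq_top hE hc, one_pow]
  · have card_eq : Fintype.card (Fin n) = Fintype.card (Option (Option (Fin (n - 2)))) := by
      simp only [Fintype.card_option, Fintype.card_fin]
      lia
    let e := Equiv.altCongrHom (Fintype.equivOfCardEq card_eq)
    have ker_eq : (e.toMonoidHom.comp φ).ker = φ.ker := MonoidHom.ker_mulEquiv_comp φ e
    have pow_six : z ^ 6 = 1 := pow_six_eq_one_of_mem_ker (by simpa using by lia) hE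
      (e.surjective.comp hφ) (ker_eq.trans_le hc) (ker_eq.ge hz)
    rw [Nat.factorial_succ, pow_mul, pow_six, one_pow]

end Alternating

/-- There is a constant `C` such that every perfect central extension `E` of an
alternating group `A_n` has a presentation with at most `C` generators and at most `C`
relators, of length at most `C·(1 + log₂ n)`. -/
theorem perfect_central_extension_of_alternating_short_bounded_presentation :
    ∃ C : ℕ, ∀ (n : ℕ) (E : Type) [Group E], commutator E = ⊤ →
      ∀ φ : E →* alternatingGroup (Fin n), Function.Surjective φ →
        φ.ker ≤ Subgroup.center E →
        HasBoundedPresentation E C C (C * (1 + Real.logb 2 n)) := by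
  obtain ⟨C, hC⟩ := exists_forall_hasBoundedPresentation_alternatingGroup
  obtain ⟨N, hN⟩ : ∃ N, N = Nat.factorial 6 ^ C := ⟨_, rfl⟩
  refine ⟨C + (N + C + (C * N * 4 + N * N * 3)), fun n E _ hE φ hφ hc => ?_⟩
  obtain ⟨ker_finite, card_ker_le⟩ := (hC n).finite_and_card_ker_le hE hφ hc
    (Nat.factorial_pos 6) (pow_factorial_eq_one_of_mem_ker hE hφ hc)
  refine ((hC n).centralExtension hφ hc (hN ▸ card_ker_le)).mono (by lia) (by lia) ?_
  rw [Nat.cast_add C, add_mul]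
  gcongr
  exact le_mul_of_one_le_right (Nat.cast_nonneg _) (by linarith [logb_natCast_nonneg n])
end

section
/- Let G be a group and let u, a, b ∈ G satisfy: (1) ab = ba; (2) u commutes with u^a and u commutes with u^b; (3) u lies in the subgroup generated by {u^a, u^b}, u^a lies in the subgroup generated by {u, u^b}, and u^b lies in the subgroup generated by {u, u^a}. Then the subgroup of G generated by the set {u^g : g ∈ ⟨a, b⟩} of all conjugates of u by elements of the subgroup generated by a and b is commutative. -/
/-!
View the conjugates of `u` as labels of the points of the lattice `⟨a, b⟩`. In the triangle with
vertices `1`, `a`, `b` the labels commute and any two of them generate the third, and by translation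
the same holds in all its translates. Hence, if `u` commutes with two labels of a translate, it
commutes with the third. In the cone spanned by `a` and `b`, every point other than `1`, `a`, `b` is
reached in this way from two points nearer to `1`, so `u` commutes with all labels in the cone. The
assumptions are invariant under rotating the triangle, and the three rotated cones together with
their inverses cover the lattice.
-/

open Subgroup

open scoped Pointwise

section CommutingPair

variable {A : Type*} [Group A] {s t : A}

theorem exists_zpow_mul_zpow_eq_of_mem_closure_pair {g : A} (hst : Commute s t)
    (hg : g ∈ closure {s, t}) : ∃ i j : ℤ, s ^ i * t ^ j = g := by
  induction hg using closure_induction with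
  | mem x hx =>
    rcases hx with rfl | rfl
    · exact ⟨1, 0, by simp⟩
    · exact ⟨0, 1, by simp⟩
  | one => exact ⟨0, 0, by simp⟩
  | mul x y _ _ hx hy =>
    obtain ⟨i, j, rfl⟩ := hx
    obtain ⟨k, l, rfl⟩ := hy
    exact ⟨i + k, j + l, by rw [zpow_add, zpow_add, (hst.zpow_zpow k j).mul_mul_mul_comm]⟩
  | inv x _ hx =>
    obtain ⟨i, j, rfl⟩ := hx
    exact ⟨-i, -j, by rw [mul_inv_rev, zpow_neg, zpow_neg, (hst.zpow_zpow i j).inv_inv.eq]⟩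

theorem inv_mul_zpow_mul_inv_zpow (hst : Commute s t) (i j : ℤ) :
    (s⁻¹ * t) ^ j * s⁻¹ ^ (-(i + j)) = s ^ i * t ^ j := by
  have hswap : Commute (t ^ j) (s⁻¹ ^ (-(i + j))) := hst.symm.inv_right.zpow_zpow _ _
  rw [hst.inv_left.mul_zpow, mul_assoc, hswap.eq, ← mul_assoc, ← zpow_add]
  simp

end CommutingPair

section ClosurePair

variable {G : Type*} [Group G] {x y z : G}

theorem commute_of_mem_closure_pair {v : G} (hx : x ∈ closure {y, z}) (hy : Commute v y)
    (hz : Commute v z) : Commute v x := by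
  have hle : closure {y, z} ≤ centralizer {v} := by
    simp [closure_le, Set.pair_subset_iff, mem_centralizer_singleton_iff, hy.eq, hz.eq]
  exact (mem_centralizer_singleton_iff.mp (hle hx)).symm

theorem smul_mem_closure_pair {A : Type*} [Monoid A] [MulDistribMulAction A G] (g : A)
    (hx : x ∈ closure {y, z}) : g • x ∈ closure {g • y, g • z} := by
  simpa only [smul_closure, ← Set.image_smul, Set.image_pair] using smul_mem_pointwise_smul x g _ hx

end ClosurePair

section CommuteSMul

variable {A M : Type*} [Group A] [Monoid M] [MulDistribMulAction A M] {x y : M}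

theorem commute_smul_smul_iff (g : A) : Commute (g • x) (g • y) ↔ Commute x y := by
  simp [commute_iff_eq, ← smul_mul']

theorem commute_inv_smul_iff (g : A) : Commute x (g⁻¹ • y) ↔ Commute (g • x) y := by
  rw [← commute_smul_smul_iff g, smul_inv_smul]

end CommuteSMul

/-- The points `1`, `s`, `t` of `A`, labelled by `u`, `s • u`, `t • u`, form a commuting triangle if
`s` and `t` commute, the labels commute, and any two labels generate a subgroup containing the
third. Commutation of the labels is encoded by the single pair `u`, `t • u`; it passes to the other
pairs because the labels generate one another. -/
structure IsCommutingTriangle {A G : Type*} [Group A] [Group G] [MulDistribMulAction A G]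
    (s t : A) (u : G) : Prop where
  commute : Commute s t
  commute_smul : Commute u (t • u)
  mem_closure : u ∈ closure {s • u, t • u}
  smul_left_mem_closure : s • u ∈ closure {u, t • u}
  smul_right_mem_closure : t • u ∈ closure {u, s • u}

namespace IsCommutingTriangle

variable {A G : Type*} [Group A] [Group G] [MulDistribMulAction A G] {s t : A} {u : G}

theorem commute_smul_left (h : IsCommutingTriangle s t u) : Commute u (s • u) :=
  commute_of_mem_closure_pair h.smul_left_mem_closure (.refl u) h.commute_smul

theorem rotate (h : IsCommutingTriangle s t u) : IsCommutingTriangle (s⁻¹ * t) s⁻¹ u where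
  commute := (Commute.refl s⁻¹).mul_left h.commute.symm.inv_right
  commute_smul := (commute_inv_smul_iff s).mpr h.commute_smul_left.symm
  mem_closure := by
    simpa [mul_smul, Set.pair_comm] using smul_mem_closure_pair s⁻¹ h.smul_left_mem_closure
  smul_left_mem_closure := by
    simpa [mul_smul, Set.pair_comm] using smul_mem_closure_pair s⁻¹ h.smul_right_mem_closure
  smul_right_mem_closure := by
    simpa [mul_smul] using smul_mem_closure_pair s⁻¹ h.mem_closure

theorem commute_pow_mul_pow_smul (h : IsCommutingTriangle s t u) :
    ∀ m n : ℕ, Commute u ((s ^ m * t ^ n) • u)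
  | 0, 0 => by simp
  | 1, 0 => by simpa using h.commute_smul_left
  | 0, 1 => by simpa using h.commute_smul
  | m + 1, n + 1 => by
    refine (commute_of_mem_closure_pair h.mem_closure ?_ ?_).symm
    · rw [pow_succ', mul_assoc, mul_smul, commute_smul_smul_iff]
      exact (h.commute_pow_mul_pow_smul m (n + 1)).symm
    · rw [pow_succ' t, (h.commute.pow_left _).left_comm, mul_smul, commute_smul_smul_iff]
      exact (h.commute_pow_mul_pow_smul (m + 1) n).symm
  | m + 2, 0 => by
    have hmem := smul_mem_closure_pair (s ^ (m + 1)) h.smul_left_mem_closure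
    simp only [← mul_smul, ← pow_succ] at hmem
    rw [pow_zero, mul_one]
    exact commute_of_mem_closure_pair hmem
      (by simpa using h.commute_pow_mul_pow_smul (m + 1) 0)
      (by simpa using h.commute_pow_mul_pow_smul (m + 1) 1)
  | 0, n + 2 => by
    have hmem := smul_mem_closure_pair (t ^ (n + 1)) h.smul_right_mem_closure
    simp only [← mul_smul, ← pow_succ, ← (h.commute.pow_right _).eq] at hmem
    rw [pow_zero, one_mul]
    exact commute_of_mem_closure_pair hmem
      (by simpa using h.commute_pow_mul_pow_smul 0 (n + 1))
      (by simpa using h.commute_pow_mul_pow_smul 1 (n + 1))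
termination_by m n => m ^ 2 + n ^ 2
decreasing_by all_goals grind

theorem commute_zpow_mul_zpow_smul_of_nonneg_of_nonneg (h : IsCommutingTriangle s t u) {i j : ℤ}
    (hi : 0 ≤ i) (hj : 0 ≤ j) : Commute u ((s ^ i * t ^ j) • u) := by
  lift i to ℕ using hi
  lift j to ℕ using hj
  simpa using h.commute_pow_mul_pow_smul i j

theorem commute_zpow_mul_zpow_smul_of_nonneg_of_add_nonpos (h : IsCommutingTriangle s t u)
    {i j : ℤ} (hj : 0 ≤ j) (hij : i + j ≤ 0) : Commute u ((s ^ i * t ^ j) • u) := by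
  rw [← inv_mul_zpow_mul_inv_zpow h.commute]
  exact h.rotate.commute_zpow_mul_zpow_smul_of_nonneg_of_nonneg hj (by lia)

theorem commute_zpow_mul_zpow_smul (h : IsCommutingTriangle s t u) (i j : ℤ) :
    Commute u ((s ^ i * t ^ j) • u) := by
  have hcone {i j : ℤ} (hij : 0 ≤ i ∧ 0 ≤ j ∨ 0 ≤ j ∧ i + j ≤ 0 ∨ 0 ≤ i ∧ i + j ≤ 0) :
      Commute u ((s ^ i * t ^ j) • u) := by
    rcases hij with ⟨hi, hj⟩ | ⟨hj, hij⟩ | ⟨hi, hij⟩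
    · exact h.commute_zpow_mul_zpow_smul_of_nonneg_of_nonneg hi hj
    · exact h.commute_zpow_mul_zpow_smul_of_nonneg_of_add_nonpos hj hij
    · rw [← inv_mul_zpow_mul_inv_zpow h.commute]
      exact h.rotate.commute_zpow_mul_zpow_smul_of_nonneg_of_add_nonpos (by lia) (by lia)
  -- Two of the three integers `i`, `j`, `-(i + j)` have the same sign, as their sum is zero.
  obtain hij | hij : (0 ≤ i ∧ 0 ≤ j ∨ 0 ≤ j ∧ i + j ≤ 0 ∨ 0 ≤ i ∧ i + j ≤ 0) ∨
      (0 ≤ -i ∧ 0 ≤ -j ∨ 0 ≤ -j ∧ -i + -j ≤ 0 ∨ 0 ≤ -i ∧ -i + -j ≤ 0) := by lia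
  · exact hcone hij
  · have hinv : s ^ (-i) * t ^ (-j) = (s ^ i * t ^ j)⁻¹ := by
      rw [(h.commute.zpow_zpow _ _).eq, mul_inv_rev, zpow_neg, zpow_neg]
    exact ((commute_inv_smul_iff _).mp (hinv ▸ hcone hij)).symm

theorem commute_smul_of_mem_closure (h : IsCommutingTriangle s t u) {g : A}
    (hg : g ∈ closure {s, t}) : Commute u (g • u) := by
  obtain ⟨i, j, rfl⟩ := exists_zpow_mul_zpow_eq_of_mem_closure_pair h.commute hg
  exact h.commute_zpow_mul_zpow_smul i j

end IsCommutingTriangle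

theorem bcrw_trick_general {A G : Type*} [Group A] [Group G] [MulDistribMulAction A G]
    {s t : A} {u : G} (hst : Commute s t) (hut : Commute u (t • u))
    (hu : u ∈ closure {s • u, t • u}) (hs : s • u ∈ closure {u, t • u})
    (ht : t • u ∈ closure {u, s • u}) :
    IsMulCommutative (closure (MulAction.orbit (closure {s, t}) u)) := by
  refine isMulCommutative_closure ?_
  rintro _ ⟨g, rfl⟩ _ ⟨k, rfl⟩
  have hcomm : Commute u ((g⁻¹ * k) • u) :=
    IsCommutingTriangle.commute_smul_of_mem_closure ⟨hst, hut, hu, hs, ht⟩ (g⁻¹ * k).2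
  rwa [mul_smul, commute_inv_smul_iff] at hcomm

theorem setOf_conj_subset_orbit {G : Type*} [Group G] (u a b : G) :
    {z : G | ∃ g ∈ closure {a, b}, z = g⁻¹ * u * g} ⊆
      MulAction.orbit (closure {(MulAut.conj a)⁻¹, (MulAut.conj b)⁻¹}) u := by
  rintro _ ⟨g, hg, rfl⟩
  have hmap : MulAut.conj g ∈ closure {(MulAut.conj a)⁻¹, (MulAut.conj b)⁻¹} := by
    rw [← closure_inv]
    simpa [MonoidHom.map_closure, Set.image_pair] using mem_map_of_mem MulAut.conj hg
  exact ⟨⟨_, inv_mem hmap⟩, MulAut.conj_inv_apply g u⟩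

/-- **The BCRW trick.** If `a` and `b` commute, `u` commutes with `u^a` and with `u^b`,
and each of `u, u^a, u^b` lies in the subgroup generated by the other two, then the
subgroup generated by all conjugates of `u` by elements of `⟨a, b⟩` is abelian. -/
theorem bcrw_trick {G : Type} [Group G] (u a b : G)
    (hab : a * b = b * a)
    (hua : Commute u (a⁻¹ * u * a))
    (hub : Commute u (b⁻¹ * u * b))
    (h1 : u ∈ Subgroup.closure ({a⁻¹ * u * a, b⁻¹ * u * b} : Set G))
    (h2 : a⁻¹ * u * a ∈ Subgroup.closure ({u, b⁻¹ * u * b} : Set G))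
    (h3 : b⁻¹ * u * b ∈ Subgroup.closure ({u, a⁻¹ * u * a} : Set G)) :
    ∀ x ∈ Subgroup.closure
        {z : G | ∃ g ∈ Subgroup.closure ({a, b} : Set G), z = g⁻¹ * u * g},
      ∀ y ∈ Subgroup.closure
        {z : G | ∃ g ∈ Subgroup.closure ({a, b} : Set G), z = g⁻¹ * u * g},
        Commute x y := by
  have hcomm := bcrw_trick_general (Commute.map hab MulAut.conj).inv_inv hub h1 h2 h3
  have hle := closure_mono (setOf_conj_subset_orbit u a b)
  exact fun x hx y hy ↦ setLike_mul_comm (hle hx) (hle hy)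
end
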